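/- arXiv:1705.08316 — 9 statements merged into one kernel-verified Lean document; each statement's English description precedes it below -/
import Mathlib

section
/- Let G be a 2-edge-connected simple graph (a connected graph on at least 2 vertices with no cut-edge) that is not a complete graph. Then cfc(G) = 2. -/
open SimpleGraph

/-- An edge-coloring `c` makes `G` conflict-free connected: every pair of distinct
vertices is joined by a path on which some color appears on exactly one edge. -/
def IsCFCColoring {V : Type*} (G : SimpleGraph V) (c : Sym2 V → ℕ) : Prop :=
  ∀ u v : V, u ≠ v → ∃ p : G.Path u v, ∃ e ∈ (p.1).edges,
    ∀ e' ∈ (p.1).edges, c e' = c e → e' = e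

/-- The conflict-free connection number of `G`: the least `k` such that some
edge-coloring of `G` with colors from `{0, …, k-1}` makes `G` conflict-free connected. -/
noncomputable def cfcNum {V : Type*} (G : SimpleGraph V) : ℕ :=
  sInf {k | ∃ c : Sym2 V → ℕ, (∀ e ∈ G.edgeSet, c e < k) ∧ IsCFCColoring G c}

namespace SimpleGraph

variable {V : Type*} {G : SimpleGraph V}

theorem Walk.isPath_append_iff {u v w : V} {p : G.Walk u v} {q : G.Walk v w} :
    (p.append q).IsPath ↔
      p.IsPath ∧ q.IsPath ∧ ∀ x ∈ p.support, x ∈ q.support → x = v := by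
  have hq : q.support = v :: q.support.tail := q.cons_tail_support.symm
  have hv : v ∈ p.support := p.end_mem_support
  simp only [Walk.isPath_def, Walk.support_append, List.nodup_append]
  rw [hq]
  simp only [List.tail_cons, List.nodup_cons, List.mem_cons]
  grind

/-- Every walk ending in `A` contains a path from its start to the first vertex of `A` on it. -/
theorem Walk.exists_isPath_first_mem {A : Set V} {y x : V} (p : G.Walk y x) (hx : x ∈ A) :
    ∃ a ∈ A, ∃ q : G.Walk y a, q.IsPath ∧ (∀ w ∈ q.support, w ∈ A → w = a) ∧
      q.edges ⊆ p.edges := by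
  classical
  suffices h : ∃ a ∈ A, ∃ q : G.Walk y a, (∀ w ∈ q.support, w ∈ A → w = a) ∧
      q.edges ⊆ p.edges by
    obtain ⟨a, ha, q, hq, hqp⟩ := h
    exact ⟨a, ha, q.bypass, q.bypass_isPath,
      fun w hw => hq w (q.support_bypass_subset_support hw),
      fun e he => hqp (q.edges_bypass_subset_edges he)⟩
  induction p with
  | nil => exact ⟨_, hx, .nil, by simp⟩
  | @cons u v w h p ih =>
    by_cases hu : u ∈ A
    · exact ⟨u, hu, .nil, by simp⟩
    · obtain ⟨a, ha, q, hq, hqp⟩ := ih hx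
      refine ⟨a, ha, .cons h q, ?_, ?_⟩
      · simp only [Walk.support_cons, List.mem_cons]
        rintro z (rfl | hz) hzA
        · exact absurd hzA hu
        · exact hq z hz hzA
      · exact List.cons_subset_cons _ hqp

open Classical in
/-- `G.JoinedIn S A k u v`: some path from `u` to `v` inside `A` has exactly `k` edges in `S`. -/
def JoinedIn (G : SimpleGraph V) (S : Set (Sym2 V)) (A : Set V) (k : ℕ) (u v : V) : Prop :=
  ∃ p : G.Walk u v, p.IsPath ∧ (∀ w ∈ p.support, w ∈ A) ∧ p.edges.countP (· ∈ S) = k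

namespace JoinedIn

variable {S S' : Set (Sym2 V)} {A B : Set V} {j k : ℕ} {u v w : V}

theorem symm (h : G.JoinedIn S A k u v) : G.JoinedIn S A k v u := by
  obtain ⟨p, hp, hA, hk⟩ := h
  exact ⟨p.reverse, hp.reverse, by simpa using hA, by simpa using hk⟩

theorem mono (hAB : A ⊆ B) (h : G.JoinedIn S A k u v) : G.JoinedIn S B k u v := by
  obtain ⟨p, hp, hA, hk⟩ := h
  exact ⟨p, hp, fun w hw => hAB (hA w hw), hk⟩

theorem refl (hu : u ∈ A) : G.JoinedIn S A 0 u u :=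
  ⟨.nil, by simp, by simpa using hu, by simp⟩

theorem append (h : G.JoinedIn S A j u v) (h' : G.JoinedIn S B k v w)
    (hAB : ∀ x ∈ A, x ∈ B → x = v) : G.JoinedIn S (A ∪ B) (j + k) u w := by
  obtain ⟨p, hp, hA, hj⟩ := h
  obtain ⟨q, hq, hB, hk⟩ := h'
  refine ⟨p.append q, Walk.isPath_append_iff.2
    ⟨hp, hq, fun x hx hx' => hAB x (hA x hx) (hB x hx')⟩, ?_, ?_⟩
  · simp only [Walk.mem_support_append_iff]
    rintro x (hx | hx)
    · exact .inl (hA x hx)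
    · exact .inr (hB x hx)
  · rw [Walk.edges_append, List.countP_append, hj, hk]

theorem congr (hS : ∀ e, (∀ x ∈ e, x ∈ A) → (e ∈ S ↔ e ∈ S')) (h : G.JoinedIn S A k u v) :
    G.JoinedIn S' A k u v := by
  obtain ⟨p, hp, hA, hk⟩ := h
  refine ⟨p, hp, hA, ?_⟩
  rw [← hk]
  refine (List.countP_congr fun e he => ?_).symm
  simpa using hS e fun x hx => hA x (p.mem_support_of_mem_edges he hx)

theorem of_isPath (p : G.Walk u v) (hp : p.IsPath) (hS : ∀ e ∈ p.edges, e ∉ S) :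
    G.JoinedIn S {w | w ∈ p.support} 0 u v :=
  ⟨p, hp, fun _ h => h, by simpa using hS⟩

theorem of_adj_mem (h : G.Adj u v) (hS : s(u, v) ∈ S) : G.JoinedIn S {u, v} 1 u v :=
  ⟨h.toWalk, by simpa using h.ne, by simp, by simp [hS]⟩

theorem of_adj_notMem (h : G.Adj u v) (hS : s(u, v) ∉ S) : G.JoinedIn S {u, v} 0 u v :=
  ⟨h.toWalk, by simpa using h.ne, by simp, by simp [hS]⟩

end JoinedIn

/-- Any two vertices of `A` are joined inside `A` by a path with no edge in `S`, and, if they are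
distinct, by a path with exactly one edge in `S`. -/
def IsLinkedIn (G : SimpleGraph V) (S : Set (Sym2 V)) (A : Set V) : Prop :=
  ∀ u ∈ A, ∀ v ∈ A, G.JoinedIn S A 0 u v ∧ (u ≠ v → G.JoinedIn S A 1 u v)

/-- Linkedness survives adding an ear `x, y, …, a`: an open ear with no edge in `S`, or a closed
ear whose only edge in `S` is the first one. -/
theorem IsLinkedIn.union_ear {S : Set (Sym2 V)} {A : Set V} (hA : G.IsLinkedIn S A)
    {x y a : V} (hx : x ∈ A) (ha : a ∈ A) (hxy : G.Adj x y) (q : G.Walk y a)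
    (hq : q.IsPath) (hqA : ∀ w ∈ q.support, w ∈ A → w = a) (hqS : ∀ e ∈ q.edges, e ∉ S)
    (he : s(x, y) ∈ S ↔ x = a) : G.IsLinkedIn S (A ∪ {w | w ∈ q.support}) := by
  classical
  set A' : Set V := A ∪ {w | w ∈ q.support} with hA'
  have hAA' : A ⊆ A' := Set.subset_union_left
  obtain ⟨ε, ε', hεε, hfirst, hreturn, hε⟩ : ∃ ε ε' : ℕ, ε + ε' = 1 ∧
      G.JoinedIn S {x, y} ε x y ∧ G.JoinedIn S A ε' x a ∧
      ((ε = 1 ∧ x = a) ∨ (ε = 0 ∧ x ≠ a)) := by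
    by_cases h : x = a
    · exact ⟨1, 0, rfl, .of_adj_mem hxy (he.2 h), (hA x hx a ha).1, .inl ⟨rfl, h⟩⟩
    · exact ⟨0, 1, rfl, .of_adj_notMem hxy (mt he.1 h), (hA x hx a ha).2 h, .inr ⟨rfl, h⟩⟩
  -- A pair of vertices inside the ear splits it into three consecutive pieces.
  have split : ∀ {u v : V} (t : G.Walk y u) (m : G.Walk u v) (d : G.Walk v a),
      q = t.append (m.append d) → u ∉ A → v ∉ A → ∃ X M D : Set V,
      X ⊆ A' ∧ M ⊆ A' ∧ D ⊆ A' ∧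
      (∀ w ∈ X, w ∈ A → w = x) ∧ (∀ w ∈ D, w ∈ A → w = a) ∧ (∀ w ∈ X, w ∈ D → u = v ∨ w = a) ∧
      G.JoinedIn S X ε u x ∧ G.JoinedIn S M 0 u v ∧ G.JoinedIn S D 0 v a := by
    rintro u v t m d rfl huA hvA
    simp only [Walk.isPath_append_iff, Walk.mem_support_append_iff] at hq
    obtain ⟨ht, ⟨hm, hd, hmd⟩, htmd⟩ := hq
    simp only [Walk.mem_support_append_iff] at hqA hA'
    simp only [Walk.edges_append, List.mem_append] at hqS
    have hat : a ∉ t.support := fun h => huA (htmd a h (.inr d.end_mem_support) ▸ ha)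
    have hXA : ∀ w ∈ t.support, w ∉ A := fun w hw hwA => hat (hqA w (.inl hw) hwA ▸ hw)
    have hJt : G.JoinedIn S {w | w ∈ t.support} 0 y u :=
      .of_isPath t ht fun e h => hqS e (.inl h)
    refine ⟨_, _, _, ?_, ?_, ?_, ?_, ?_, ?_, (hfirst.append hJt ?_).symm,
      .of_isPath m hm fun e h => hqS e (.inr (.inl h)),
      .of_isPath d hd fun e h => hqS e (.inr (.inr h))⟩
    all_goals have := t.start_mem_support
    all_goals have := m.start_mem_support
    all_goals have := d.end_mem_support
    all_goals intro w
    all_goals simp only [hA', Set.mem_union, Set.mem_ofPred_eq, Set.mem_insert_iff,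
      Set.mem_singleton_iff]
    all_goals grind
  have mixed : ∀ u ∈ q.support, u ∉ A → ∀ v ∈ A,
      G.JoinedIn S A' 0 u v ∧ G.JoinedIn S A' 1 u v := by
    intro u hu huA v hv
    obtain ⟨X, M, D, hX, -, hD, hXA, hDA, -, jX, -, jD⟩ :=
      split (q.takeUntil u hu) .nil (q.dropUntil u hu) (q.take_spec hu).symm huA huA
    refine ⟨(jD.append (hA a ha v hv).1 hDA).mono (Set.union_subset hD hAA'), ?_⟩
    obtain ⟨rfl, -⟩ | ⟨rfl, hxa⟩ := hε
    · exact (jX.append (hA x hx v hv).1 hXA).mono (Set.union_subset hX hAA')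
    · by_cases hva : a = v
      · subst hva
        exact (jX.append ((hA x hx a ha).2 hxa) hXA).mono (Set.union_subset hX hAA')
      · exact (jD.append ((hA a ha v hv).2 hva) hDA).mono (Set.union_subset hD hAA')
  have inner : ∀ {u v : V} (t : G.Walk y u) (m : G.Walk u v) (d : G.Walk v a),
      q = t.append (m.append d) → u ∉ A → v ∉ A →
      G.JoinedIn S A' 0 u v ∧ (u ≠ v → G.JoinedIn S A' 1 u v) := by
    intro u v t m d hqt huA hvA
    obtain ⟨X, M, D, hX, hM, hD, hXA, hDA, hXD, jX, jM, jD⟩ := split t m d hqt huA hvA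
    refine ⟨jM.mono hM, fun huv => ?_⟩
    have h := (jX.append hreturn hXA).append jD.symm ?_
    · rw [hεε] at h
      exact h.mono (Set.union_subset (Set.union_subset hX hAA') hD)
    · rintro w (hw | hw) hwD
      · exact (hXD w hw hwD).resolve_left huv
      · exact hDA w hwD hw
  intro u hu v hv
  by_cases huA : u ∈ A <;> by_cases hvA : v ∈ A
  · exact ⟨(hA u huA v hvA).1.mono hAA', fun h => ((hA u huA v hvA).2 h).mono hAA'⟩
  · have := mixed v (hv.resolve_left hvA) hvA u huA
    exact ⟨this.1.symm, fun _ => this.2.symm⟩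
  · have := mixed u (hu.resolve_left huA) huA v hvA
    exact ⟨this.1, fun _ => this.2⟩
  · have hu' : u ∈ q.support := hu.resolve_left huA
    have hv' : v ∈ q.support := hv.resolve_left hvA
    have hqu := q.take_spec hu'
    rw [← hqu, Walk.mem_support_append_iff] at hv'
    rcases hv' with h | h
    · have := inner ((q.takeUntil u hu').takeUntil v h) ((q.takeUntil u hu').dropUntil v h)
        (q.dropUntil u hu') (by rw [Walk.append_assoc, Walk.take_spec, hqu]) hvA huA
      exact ⟨this.1.symm, fun huv => (this.2 huv.symm).symm⟩
    · exact inner (q.takeUntil u hu') ((q.dropUntil u hu').takeUntil v h)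
        ((q.dropUntil u hu').dropUntil v h) (by rw [Walk.take_spec, hqu]) huA hvA

theorem exists_isLinkedIn_univ [Finite V] (hconn : G.Connected)
    (hbridge : ∀ e : Sym2 V, ¬ G.IsBridge e) :
    ∃ S : Set (Sym2 V), G.IsLinkedIn S Set.univ := by
  obtain ⟨v₀⟩ := hconn.nonempty
  let 𝒜 : Set (Set V) := {A | A.Nonempty ∧
    ∃ S : Set (Sym2 V), (∀ e ∈ S, ∀ w ∈ e, w ∈ A) ∧ G.IsLinkedIn S A}
  have h𝒜 : 𝒜.Nonempty := by
    refine ⟨{v₀}, Set.singleton_nonempty _, ∅, by simp, ?_⟩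
    rintro u rfl v rfl
    exact ⟨.refl rfl, fun h => absurd rfl h⟩
  obtain ⟨A, ⟨⟨u₀, hu₀⟩, S, hSA, hA⟩, hmax⟩ := (Set.toFinite 𝒜).exists_maximal h𝒜
  suffices h : A = Set.univ from ⟨S, h ▸ hA⟩
  by_contra hne
  obtain ⟨z, hz⟩ := (Set.ne_univ_iff_exists_notMem A).1 hne
  obtain ⟨p⟩ := hconn.preconnected u₀ z
  obtain ⟨⟨⟨x, y⟩, hxy⟩, -, hx, hy⟩ := p.exists_boundary_dart A hu₀ hz
  simp only at hx hy
  change G.Adj x y at hxy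
  obtain ⟨r, hr⟩ : ∃ r : G.Walk y x, s(x, y) ∉ r.edges := by
    have h := hbridge s(x, y)
    rw [isBridge_iff, reachable_deleteEdges_iff_exists_walk, not_not] at h
    obtain ⟨r, hr⟩ := h
    exact ⟨r.reverse, by simpa using hr⟩
  obtain ⟨a, ha, q, hq, hqA, hqr⟩ := r.exists_isPath_first_mem hx
  have hqedge : ∀ e ∈ q.edges, ∃ w ∈ e, w ∉ A := by
    intro e he
    induction e with
    | _ b c =>
      have hbc : G.Adj b c := q.adj_of_mem_edges he
      by_contra! h
      have hb := hqA b (q.fst_mem_support_of_mem_edges he) (h b (by simp))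
      have hc := hqA c (q.snd_mem_support_of_mem_edges he) (h c (by simp))
      exact hbc.ne (hb.trans hc.symm)
  let S' : Set (Sym2 V) := S ∪ {e | e = s(x, y) ∧ x = a}
  have hxyS : s(x, y) ∉ S := fun h => hy (hSA _ h y (by simp))
  have hS' : ∀ e, (∀ w ∈ e, w ∈ A) → (e ∈ S ↔ e ∈ S') := by
    refine fun e he => ⟨.inl, ?_⟩
    rintro (h | ⟨rfl, -⟩)
    · exact h
    · exact absurd (he y (by simp)) hy
  have hlink : G.IsLinkedIn S' A := fun u hu v hv =>
    ⟨(hA u hu v hv).1.congr hS', fun h => ((hA u hu v hv).2 h).congr hS'⟩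
  have hlink' : G.IsLinkedIn S' (A ∪ {w | w ∈ q.support}) := by
    refine hlink.union_ear hx ha hxy q hq hqA ?_ ?_
    · rintro e he (h | ⟨rfl, -⟩)
      · obtain ⟨w, hw, hwA⟩ := hqedge e he
        exact hwA (hSA e h w hw)
      · exact hr (hqr he)
    · exact ⟨fun h => (h.resolve_left hxyS).2, fun h => .inr ⟨rfl, h⟩⟩
  have hmem : A ∪ {w | w ∈ q.support} ∈ 𝒜 := by
    refine ⟨⟨x, .inl hx⟩, S', ?_, hlink'⟩
    rintro e (he | ⟨rfl, -⟩) w hw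
    · exact .inl (hSA e he w hw)
    · rcases Sym2.mem_iff.1 hw with rfl | rfl
      · exact .inl hx
      · exact .inr q.start_mem_support
  exact hy (hmax hmem Set.subset_union_left (.inr q.start_mem_support))

theorem JoinedIn.exists_path_unique {S : Set (Sym2 V)} {A : Set V} {u v : V}
    (h : G.JoinedIn S A 1 u v) :
    ∃ p : G.Path u v, ∃ e ∈ p.1.edges, e ∈ S ∧ ∀ e' ∈ p.1.edges, e' ∈ S → e' = e := by
  classical
  obtain ⟨p, hp, -, hk⟩ := h
  rw [List.countP_eq_length_filter, List.length_eq_one_iff] at hk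
  obtain ⟨e, he⟩ := hk
  have hmem : ∀ f, (f ∈ p.edges ∧ f ∈ S) ↔ f = e := by
    intro f
    rw [← List.mem_singleton (b := e), ← he]
    simp
  exact ⟨⟨p, hp⟩, e, ((hmem e).2 rfl).1, ((hmem e).2 rfl).2, fun f hf hfS => (hmem f).1 ⟨hf, hfS⟩⟩

end SimpleGraph

theorem exists_isCFCColoring_two {V : Type*} [Finite V] {G : SimpleGraph V}
    (hconn : G.Connected) (hbridge : ∀ e : Sym2 V, ¬ G.IsBridge e) :
    ∃ c : Sym2 V → ℕ, (∀ e ∈ G.edgeSet, c e < 2) ∧ IsCFCColoring G c := by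
  classical
  obtain ⟨S, hS⟩ := exists_isLinkedIn_univ hconn hbridge
  refine ⟨fun e => if e ∈ S then 1 else 0, fun e _ => by dsimp only; split_ifs <;> simp, ?_⟩
  intro u v huv
  obtain ⟨p, e, he, heS, h⟩ :=
    ((hS u (Set.mem_univ u) v (Set.mem_univ v)).2 huv).exists_path_unique
  refine ⟨p, e, he, fun f hf hc => h f hf ?_⟩
  by_contra hfS
  simp [heS, hfS] at hc

theorem IsCFCColoring.eq_top_of_lt_two {V : Type*} {G : SimpleGraph V} {c : Sym2 V → ℕ} {k : ℕ}
    (hk : k < 2) (hc : ∀ e ∈ G.edgeSet, c e < k) (h : IsCFCColoring G c) : G = ⊤ := by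
  ext u v
  rw [top_adj]
  refine ⟨fun h => h.ne, fun huv => ?_⟩
  obtain ⟨⟨p, hp⟩, e, he, huniq⟩ := h u v huv
  have hzero : ∀ f ∈ p.edges, c f = 0 := fun f hf => by
    have := hc f (p.edges_subset_edgeSet hf)
    omega
  have hall : ∀ f ∈ p.edges, f = e := fun f hf =>
    huniq f hf ((hzero f hf).trans (hzero e he).symm)
  have hnodup : p.edges.Nodup := hp.isTrail.edges_nodup
  cases p with
  | nil => exact absurd rfl huv
  | cons h₁ p =>
    cases p with
    | nil => exact h₁
    | cons h₂ p =>
      simp only [Walk.edges_cons, List.mem_cons, List.nodup_cons] at hall hnodup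
      exact absurd (.inl ((hall _ (.inl rfl)).trans (hall _ (.inr (.inl rfl))).symm)) hnodup.1

/-- If G is 2-edge-connected (connected, at least 2 vertices, no cut-edge) and not
complete, then cfc(G) = 2. -/
theorem cfcNum_eq_two_of_twoEdgeConnected {V : Type*} [Fintype V] (G : SimpleGraph V)
    (hconn : G.Connected) (hcard : 2 ≤ Fintype.card V)
    (hbridge : ∀ e : Sym2 V, ¬ G.IsBridge e) (hne : G ≠ ⊤) :
    cfcNum G = 2 := by
  refine le_antisymm (Nat.sInf_le (exists_isCFCColoring_two hconn hbridge)) ?_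
  by_contra! hlt
  obtain ⟨c, hc, h⟩ := Nat.sInf_mem (s := {k | ∃ c : Sym2 V → ℕ,
    (∀ e ∈ G.edgeSet, c e < k) ∧ IsCFCColoring G c}) ⟨2, exists_isCFCColoring_two hconn hbridge⟩
  exact hne (h.eq_top_of_lt_two hlt hc)
end

section
/- Let G be a connected simple graph on n vertices with edge-connectivity λ(G) = 1 (i.e., G has a cut-edge), and let r be the number of nontrivial blocks of G. Then cfc(G) ≤ n − 2r. -/
open SimpleGraph

/-- H has no cut-vertex: deleting any single vertex leaves it connected
(whenever some vertex remains). -/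
def NoCutVertex {V : Type*} {G : SimpleGraph V} (H : G.Subgraph) : Prop :=
  ∀ v : V, (H.deleteVerts {v}).verts.Nonempty → (H.deleteVerts {v}).coe.Connected

/-- A block of G: a maximal connected subgraph of G having no cut-vertex. -/
def IsBlock {V : Type*} {G : SimpleGraph V} (H : G.Subgraph) : Prop :=
  H.coe.Connected ∧ NoCutVertex H ∧
    ∀ H2 : G.Subgraph, H ≤ H2 → H2.coe.Connected → NoCutVertex H2 → H2 = H

/-- A nontrivial block is a block with at least 3 vertices. -/
def IsNontrivialBlock {V : Type*} {G : SimpleGraph V} (H : G.Subgraph) : Prop :=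
  IsBlock H ∧ 3 ≤ H.verts.ncard


section Blocks

variable {V : Type*} {G : SimpleGraph V}

/-- The union of two subgraphs without cut-vertices that share two vertices has no cut-vertex. -/
lemma NoCutVertex.sup {H K : G.Subgraph} (hH : NoCutVertex H) (hK : NoCutVertex K) {a b : V}
    (hab : a ≠ b) (haH : a ∈ H.verts) (hbH : b ∈ H.verts) (haK : a ∈ K.verts)
    (hbK : b ∈ K.verts) : NoCutVertex (H ⊔ K) := by
  intro v _
  obtain ⟨z, hzH, hzK, hzv⟩ : ∃ z, z ∈ H.verts ∧ z ∈ K.verts ∧ z ≠ v := by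
    by_cases h : a = v
    · exact ⟨b, hbH, hbK, fun hb => hab (h.trans hb.symm)⟩
    · exact ⟨a, haH, haK, h⟩
  have hz1 : z ∈ (H.deleteVerts {v}).verts := by simp [hzH, hzv]
  have hz2 : z ∈ (K.deleteVerts {v}).verts := by simp [hzK, hzv]
  have key : (H ⊔ K).deleteVerts {v} = H.deleteVerts {v} ⊔ K.deleteVerts {v} := by
    ext x y
    · simp; tauto
    · simp only [Subgraph.deleteVerts_adj, Subgraph.sup_adj, Subgraph.verts_sup, Set.mem_union]
      have h1 : H.Adj x y → x ∈ H.verts ∧ y ∈ H.verts := fun h => ⟨h.fst_mem, h.snd_mem⟩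
      have h2 : K.Adj x y → x ∈ K.verts ∧ y ∈ K.verts := fun h => ⟨h.fst_mem, h.snd_mem⟩
      tauto
  rw [key]
  exact (Subgraph.connected_sup (Subgraph.Connected.mk (hH v ⟨z, hz1⟩)).preconnected
    (Subgraph.Connected.mk (hK v ⟨z, hz2⟩)).preconnected ⟨z, hz1, hz2⟩).coe

/-- Blocks sharing two vertices coincide. -/
lemma IsBlock.eq_of_mem {H K : G.Subgraph} (hH : IsBlock H) (hK : IsBlock K) {a b : V}
    (hab : a ≠ b) (haH : a ∈ H.verts) (hbH : b ∈ H.verts) (haK : a ∈ K.verts)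
    (hbK : b ∈ K.verts) : H = K := by
  have hconn : (H ⊔ K).coe.Connected :=
    (Subgraph.connected_sup (Subgraph.Connected.mk hH.1).preconnected
      (Subgraph.Connected.mk hK.1).preconnected ⟨a, haH, haK⟩).coe
  have hcut := hH.2.1.sup hK.2.1 hab haH hbH haK hbK
  exact (hH.2.2 _ le_sup_left hconn hcut).symm.trans (hK.2.2 _ le_sup_right hconn hcut)

/-- Adding a path between two distinct vertices of a subgraph creates no cut-vertex. -/
lemma NoCutVertex.sup_path {H : G.Subgraph} (hH : NoCutVertex H) {a b : V} (hab : a ≠ b)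
    (ha : a ∈ H.verts) (hb : b ∈ H.verts) {p : G.Walk a b} (hp : p.IsPath) :
    NoCutVertex (H ⊔ p.toSubgraph) := by
  classical
  intro v _
  set K := (H ⊔ p.toSubgraph).deleteVerts {v} with hK
  obtain ⟨z, hzH, hzv⟩ : ∃ z, z ∈ H.verts ∧ z ≠ v := by
    by_cases h : a = v
    · exact ⟨b, hb, fun hb => hab (h.trans hb.symm)⟩
    · exact ⟨a, ha, h⟩
  have hle : H.deleteVerts {v} ≤ K := Subgraph.deleteVerts_mono le_sup_left
  have hHv := (Subgraph.connected_iff_forall_exists_walk_subgraph _).1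
    (Subgraph.Connected.mk (hH v ⟨z, by simp [hzH, hzv]⟩))
  have sub : ∀ {x y : V} (q : G.Walk x y), q.toSubgraph ≤ p.toSubgraph → v ∉ q.support →
      q.toSubgraph ≤ K := by
    intro x y q hq hv
    have hv' : ∀ w ∈ q.toSubgraph.verts, w ≠ v := by
      rintro w hw rfl
      exact hv ((q.mem_verts_toSubgraph).1 hw)
    refine ⟨fun w hw => ?_, fun w t hwt => ?_⟩
    · simpa [hK, hv' w hw] using Or.inr ((p.mem_verts_toSubgraph).1 (hq.1 hw))
    · have h1 := hv' w hwt.fst_mem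
      have h2 := hv' t hwt.snd_mem
      have h3 := hq.2 hwt
      simp [hK, h1, h2, h3, (p.mem_verts_toSubgraph).1 h3.fst_mem,
        (p.mem_verts_toSubgraph).1 h3.snd_mem]
  have hbase : ∀ x ∈ K.verts, ∃ q : G.Walk x z, q.toSubgraph ≤ K := by
    intro x hx
    have hfromH : ∀ y ∈ H.verts, y ≠ v → ∃ q : G.Walk y z, q.toSubgraph ≤ K := by
      intro y hy hyv
      obtain ⟨q, hq⟩ := hHv.2 (u := y) (v := z) (by simp [hy, hyv]) (by simp [hzH, hzv])
      exact ⟨q, hq.trans hle⟩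
    have hx' : (x ∈ H.verts ∨ x ∈ p.support) ∧ x ≠ v := by simpa [hK] using hx
    obtain ⟨hx1 | hx1, hxv⟩ := hx'
    · exact hfromH x hx1 hxv
    · have hspec := congrArg Walk.toSubgraph (p.take_spec hx1)
      rw [Walk.toSubgraph_append] at hspec
      by_cases hv : v ∈ (p.takeUntil x hx1).support
      · have hv2 : v ∉ (p.dropUntil x hx1).support := by
          intro hv2
          have hp' : ((p.takeUntil x hx1).append (p.dropUntil x hx1)).IsPath := by
            rwa [p.take_spec]
          exact hp'.ne_of_mem_support_of_append hxv.symm hv hv2 rfl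
        have hbv : b ≠ v := by
          rintro rfl
          exact hv2 (Walk.end_mem_support _)
        obtain ⟨q, hq⟩ := hfromH b hb hbv
        refine ⟨(p.dropUntil x hx1).append q, ?_⟩
        rw [Walk.toSubgraph_append]
        exact sup_le (sub _ (hspec ▸ le_sup_right) hv2) hq
      · have hav : a ≠ v := by
          rintro rfl
          exact hv (Walk.start_mem_support _)
        obtain ⟨q, hq⟩ := hfromH a ha hav
        refine ⟨(p.takeUntil x hx1).reverse.append q, ?_⟩
        rw [Walk.toSubgraph_append, Walk.toSubgraph_reverse]
        exact sup_le (sub _ (hspec ▸ le_sup_left) hv) hq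
  refine ((Subgraph.connected_iff_forall_exists_walk_subgraph K).2
    ⟨⟨z, hle.1 (by simp [hzH, hzv])⟩, fun {x y} hx hy => ?_⟩).coe
  obtain ⟨q, hq⟩ := hbase x hx
  obtain ⟨r, hr⟩ := hbase y hy
  refine ⟨q.append r.reverse, ?_⟩
  rw [Walk.toSubgraph_append, Walk.toSubgraph_reverse]
  exact sup_le hq hr

/-- A path between two distinct vertices of a block stays in the block. -/
lemma IsBlock.mem_edgeSet_of_isPath {H : G.Subgraph} (hH : IsBlock H) {a b : V} (hab : a ≠ b)
    (ha : a ∈ H.verts) (hb : b ∈ H.verts) {p : G.Walk a b} (hp : p.IsPath) {e : Sym2 V}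
    (he : e ∈ p.edges) : e ∈ H.edgeSet := by
  have hconn : (H ⊔ p.toSubgraph).coe.Connected :=
    (Subgraph.connected_sup (Subgraph.Connected.mk hH.1).preconnected
      p.toSubgraph_connected.preconnected ⟨a, ha, p.start_mem_verts_toSubgraph⟩).coe
  rw [← hH.2.2 _ le_sup_left hconn (hH.2.1.sup_path hab ha hb hp)]
  simp [he]

/-- Distinct blocks are edge-disjoint. -/
lemma IsBlock.eq_of_mem_edgeSet {H K : G.Subgraph} (hH : IsBlock H) (hK : IsBlock K)
    {e : Sym2 V} (heH : e ∈ H.edgeSet) (heK : e ∈ K.edgeSet) : H = K := by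
  induction e with
  | h a b =>
    rw [Subgraph.mem_edgeSet] at heH heK
    exact hH.eq_of_mem hK heH.ne heH.fst_mem heH.snd_mem heK.fst_mem heK.snd_mem

lemma NoCutVertex.exists_walk {H : G.Subgraph} (hH : NoCutVertex H) {v x y : V}
    (hx : x ∈ H.verts) (hy : y ∈ H.verts) (hxv : x ≠ v) (hyv : y ≠ v) :
    ∃ p : G.Walk x y, v ∉ p.support := by
  obtain ⟨p, hp⟩ := ((Subgraph.connected_iff_forall_exists_walk_subgraph _).1
    (Subgraph.Connected.mk (hH v ⟨x, by simp [hx, hxv]⟩))).2 (u := x) (v := y)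
    (by simp [hx, hxv]) (by simp [hy, hyv])
  refine ⟨p, fun hv => ?_⟩
  have := hp.1 ((p.mem_verts_toSubgraph).2 hv)
  simp at this

/-- A nontrivial block contains no bridge. -/
lemma IsNontrivialBlock.not_isBridge {H : G.Subgraph} (hH : IsNontrivialBlock H) {e : Sym2 V}
    (he : e ∈ H.edgeSet) : ¬ G.IsBridge e := by
  induction e with
  | h a b =>
    rw [Subgraph.mem_edgeSet] at he
    obtain ⟨c, hc, hcab⟩ : ∃ c ∈ H.verts, c ∉ ({a, b} : Set V) :=
      Set.exists_mem_notMem_of_ncard_lt_ncard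
        (lt_of_le_of_lt (Set.ncard_insert_le _ _) (by
          rw [Set.ncard_singleton]; exact hH.2))
    simp only [Set.mem_insert_iff, Set.mem_singleton_iff, not_or] at hcab
    obtain ⟨p, hp⟩ := hH.1.2.1.exists_walk he.fst_mem hc he.ne hcab.2
    obtain ⟨q, hq⟩ := hH.1.2.1.exists_walk hc he.snd_mem hcab.1 he.ne.symm
    rw [isBridge_iff_forall_walk_mem_edges]
    intro h
    have hmem := h (p.append q)
    rw [Walk.edges_append, List.mem_append] at hmem
    rcases hmem with hmem | hmem
    · exact hp (p.snd_mem_support_of_mem_edges hmem)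
    · exact hq (q.fst_mem_support_of_mem_edges hmem)

/-- A spanning connected subgraph has at least two edges in every nontrivial block. -/
lemma IsNontrivialBlock.exists_two_edges {H : G.Subgraph} (hH : IsNontrivialBlock H)
    {T : SimpleGraph V} (hle : T ≤ G) (hT : T.Connected) :
    ∃ e ∈ T.edgeSet ∩ H.edgeSet, ∃ f ∈ T.edgeSet ∩ H.edgeSet, e ≠ f := by
  classical
  have hpath : ∀ {a b : V}, a ∈ H.verts → b ∈ H.verts → a ≠ b →
      (∃ e ∈ T.edgeSet ∩ H.edgeSet, ∃ f ∈ T.edgeSet ∩ H.edgeSet, e ≠ f) ∨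
        s(a, b) ∈ T.edgeSet ∩ H.edgeSet := by
    intro a b ha hb hab
    obtain ⟨p, hp⟩ := (hT a b).exists_isPath
    have hsub : ∀ e ∈ p.edges, e ∈ T.edgeSet ∩ H.edgeSet := fun e he =>
      ⟨p.edges_subset_edgeSet he,
        hH.1.mem_edgeSet_of_isPath hab ha hb (hp.mapLe hle) (by simpa using he)⟩
    have hnd := hp.isTrail.edges_nodup
    cases p with
    | nil => exact absurd rfl hab
    | cons h q =>
      cases q with
      | nil => exact Or.inr (hsub _ (by simp))
      | @cons _ z _ h' q =>
        refine Or.inl ⟨_, hsub _ (List.mem_cons_self), s(_, z), hsub _ (by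
          rw [Walk.edges_cons, Walk.edges_cons]
          exact List.mem_cons_of_mem _ List.mem_cons_self), ?_⟩
        rw [Walk.edges_cons, Walk.edges_cons, List.nodup_cons] at hnd
        exact fun heq => hnd.1 (heq ▸ List.mem_cons_self)
  obtain ⟨a, ha, b, hb, c, hc, hab, hac, hbc⟩ : ∃ a ∈ H.verts, ∃ b ∈ H.verts, ∃ c ∈ H.verts,
      a ≠ b ∧ a ≠ c ∧ b ≠ c := by
    have hfin : H.verts.Finite := Set.finite_of_ncard_pos (lt_of_lt_of_le (by norm_num) hH.2)
    obtain ⟨a, b, c, ha, hb, hc, h⟩ := (Set.two_lt_ncard_iff hfin).1 hH.2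
    exact ⟨a, ha, b, hb, c, hc, h⟩
  rcases hpath ha hb hab with h | h1
  · exact h
  rcases hpath ha hc hac with h | h2
  · exact h
  refine ⟨_, h1, _, h2, fun h => hbc ?_⟩
  simpa [hab, hac] using h

end Blocks

section SpanningTree

variable {V : Type*} {G T : SimpleGraph V}

lemma SimpleGraph.IsBridge.mem_edgeSet (hG : G.Connected) {e : Sym2 V} (he : G.IsBridge e) :
    e ∈ G.edgeSet := by
  induction e with
  | h u v => exact he.reachable_iff_adj.1 (hG u v)

/-- A bridge on a trail separates its ends. -/
lemma SimpleGraph.IsBridge.not_reachable_of_isTrail {e : Sym2 V} (he : G.IsBridge e) {u v : V}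
    {p : G.Walk u v} (hp : p.IsTrail) (hmem : e ∈ p.edges) :
    ¬ (G.deleteEdges {e}).Reachable u v := by
  induction p with
  | nil => simp at hmem
  | @cons u x v h q ih =>
    rw [Walk.isTrail_cons] at hp
    by_cases heq : e = s(u, x)
    · subst heq
      intro huv
      refine isBridge_iff.1 he (huv.trans ?_)
      exact (reachable_deleteEdges_iff_exists_walk.2 ⟨q, hp.2⟩).symm
    · have hq : e ∈ q.edges := by simpa [heq] using hmem
      have hux : (G.deleteEdges {e}).Adj u x := by
        simpa [deleteEdges_adj, h] using Ne.symm heq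
      exact fun huv => ih hp.1 hq (hux.symm.reachable.trans huv)

/-- In a connected graph minus an edge, every vertex reaches an end of that edge. -/
lemma SimpleGraph.Walk.reachable_deleteEdges_or {u x z : V} (p : G.Walk z u) :
    (G.deleteEdges {s(u, x)}).Reachable z u ∨ (G.deleteEdges {s(u, x)}).Reachable z x := by
  induction p with
  | nil => exact Or.inl (Reachable.refl _)
  | @cons z y u h q ih =>
    by_cases heq : s(z, y) = s(u, x)
    · rcases Sym2.eq_iff.1 heq with ⟨rfl, -⟩ | ⟨rfl, -⟩
      · exact Or.inl (Reachable.refl _)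
      · exact Or.inr (Reachable.refl _)
    · have hzy : (G.deleteEdges {s(u, x)}).Adj z y := by
        simpa [deleteEdges_adj, h] using heq
      exact ih.imp hzy.reachable.trans hzy.reachable.trans

/-- If the first edge of a tree path is not a bridge of the ambient graph, it can be exchanged:
some path with the same ends uses exactly one edge outside of the tree. -/
lemma SimpleGraph.IsTree.exists_isPath_exchange (hT : T.IsTree) (hle : T ≤ G) {u x v : V}
    (h : T.Adj u x) (p : T.Walk x v) (hu : u ∉ p.support) (hb : ¬ G.IsBridge s(u, x)) :
    ∃ q : G.Walk u v, q.IsPath ∧ ∃ f ∈ q.edges, f ∉ T.edgeSet ∧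
      ∀ e ∈ q.edges, e ∈ T.edgeSet ∨ e = f := by
  set D := T.deleteEdges {s(u, x)} with hD
  have hDT : D ≤ T := deleteEdges_le _
  have hnot : ¬ D.Reachable u x :=
    isBridge_iff.1 (isAcyclic_iff_forall_adj_isBridge.1 hT.isAcyclic h)
  have hxv : D.Reachable x v := reachable_deleteEdges_iff_exists_walk.2
    ⟨p, fun he => hu (p.fst_mem_support_of_mem_edges he)⟩
  rw [isBridge_iff, not_not] at hb
  obtain ⟨w⟩ := hb
  obtain ⟨d, -, ha, hb⟩ := w.exists_boundary_dart {z | D.Reachable u z} (Reachable.refl _) hnot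
  obtain ⟨⟨a, b⟩, hab⟩ := d
  simp only [Set.mem_ofPred_eq] at ha hb
  rw [deleteEdges_adj] at hab
  have hTab : ¬ T.Adj a b := fun hTab =>
    hb (ha.trans (Adj.reachable (by rw [hD, deleteEdges_adj]; exact ⟨hTab, hab.2⟩)))
  have hbx : D.Reachable b x := by
    obtain ⟨r⟩ := hT.connected b u
    exact (r.reachable_deleteEdges_or (x := x)).resolve_left fun hbu => hb hbu.symm
  obtain ⟨q₁, hq₁⟩ := ha.exists_isPath
  obtain ⟨q₂, hq₂⟩ := (hbx.trans hxv).exists_isPath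
  have hDG := hDT.trans hle
  have hdisj : ∀ z ∈ q₁.support, z ∉ q₂.support := by
    classical
    intro z hz₁ hz₂
    exact hb ((q₁.takeUntil z hz₁).reachable.trans (q₂.takeUntil z hz₂).reachable.symm)
  refine ⟨(q₁.mapLe hDG).append (Walk.cons hab.1 (q₂.mapLe hDG)), ?_, s(a, b), by simp, hTab, ?_⟩
  · rw [Walk.isPath_def, Walk.support_append, Walk.support_cons, List.tail_cons,
      Walk.support_mapLe_eq_support, Walk.support_mapLe_eq_support, List.nodup_append]
    exact ⟨hq₁.support_nodup, hq₂.support_nodup,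
      fun z hz₁ y hy heq => hdisj z hz₁ (heq ▸ hy)⟩
  · intro e he
    rw [Walk.edges_append, Walk.edges_cons, Walk.edges_mapLe_eq_edges,
      Walk.edges_mapLe_eq_edges, List.mem_append, List.mem_cons] at he
    rcases he with he | he | he
    · exact Or.inl (edgeSet_mono hDT (q₁.edges_subset_edgeSet he))
    · exact Or.inr he
    · exact Or.inl (edgeSet_mono hDT (q₂.edges_subset_edgeSet he))

end SpanningTree

section Bounds

variable {V : Type*} [Fintype V] {G : SimpleGraph V}

/-- A connected graph with a bridge has conflict-free connection number at most one more than
its number of bridges. -/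
lemma exists_isCFCColoring_lt (hG : G.Connected) (hbr : ∃ e : Sym2 V, G.IsBridge e) :
    ∃ c : Sym2 V → ℕ, (∀ e, c e < {e | G.IsBridge e}.ncard + 1) ∧ IsCFCColoring G c := by
  classical
  obtain ⟨T, hle, hT⟩ := hG.exists_isTree_le
  have hfin : {e | G.IsBridge e}.Finite := Set.toFinite _
  obtain ⟨e₀, he₀⟩ := hbr
  have hpos : 0 < {e | G.IsBridge e}.ncard := (Set.ncard_pos hfin).2 ⟨e₀, he₀⟩
  have hbT : ∀ {e}, G.IsBridge e → e ∈ T.edgeSet := fun he =>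
    (he.anti hle).mem_edgeSet hT.connected
  obtain ⟨φ⟩ : Nonempty ({e | G.IsBridge e} ≃ Fin {e | G.IsBridge e}.ncard) :=
    ⟨Finite.equivFin _⟩
  let c : Sym2 V → ℕ := fun e =>
    if h : G.IsBridge e then φ ⟨e, h⟩ + 1 else if e ∈ T.edgeSet then 0 else 1
  have hc1 : ∀ {e} (h : G.IsBridge e), c e = φ ⟨e, h⟩ + 1 := fun h => dif_pos h
  have hc0 : ∀ {e}, ¬ G.IsBridge e → e ∈ T.edgeSet → c e = 0 := fun h h' => by
    simp only [c, dif_neg h, if_pos h']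
  have hc2 : ∀ {e}, e ∉ T.edgeSet → c e = 1 := fun h => by
    simp only [c, dif_neg (fun hb => h (hbT hb)), if_neg h]
  refine ⟨c, fun e => ?_, fun u v huv => ?_⟩
  · by_cases h : G.IsBridge e
    · rw [hc1 h]
      exact Nat.succ_lt_succ (φ ⟨e, h⟩).2
    · by_cases h' : e ∈ T.edgeSet
      · rw [hc0 h h']; omega
      · rw [hc2 h']; omega
  obtain ⟨p, hp⟩ := (hT.connected u v).exists_isPath
  by_cases hex : ∃ e ∈ p.edges, G.IsBridge e
  · obtain ⟨e, he, heb⟩ := hex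
    refine ⟨⟨p.mapLe hle, hp.mapLe hle⟩, e, by simpa using he, fun e' he' hcc => ?_⟩
    rw [Walk.edges_mapLe_eq_edges] at he'
    rw [hc1 heb] at hcc
    by_cases h : G.IsBridge e'
    · rw [hc1 h] at hcc
      have := φ.injective (Fin.ext (Nat.succ_injective hcc))
      exact congrArg Subtype.val this
    · rw [hc0 h (p.edges_subset_edgeSet he')] at hcc
      omega
  · push Not at hex
    obtain ⟨q, hq, f, hf, hfT, hqf⟩ : ∃ q : G.Walk u v, q.IsPath ∧ ∃ f ∈ q.edges,
        f ∉ T.edgeSet ∧ ∀ e ∈ q.edges, e ∈ T.edgeSet ∨ e = f := by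
      cases p with
      | nil => exact absurd rfl huv
      | cons h p =>
        rw [Walk.cons_isPath_iff] at hp
        exact hT.exists_isPath_exchange hle h p hp.2 (hex _ (by simp))
    refine ⟨⟨q, hq⟩, f, hf, fun e he hcc => (hqf e he).resolve_left fun heT => ?_⟩
    have hnb : ¬ G.IsBridge e := by
      intro hb
      apply hb.not_reachable_of_isTrail hq.isTrail he
      induction e with
      | h a b =>
        exact reachable_deleteEdges_iff_exists_walk.2
          ⟨p.mapLe hle, fun h => hex _ (by simpa using h) hb⟩
    rw [hc0 hnb heT, hc2 hfT] at hcc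
    omega

/-- Bridges and nontrivial blocks of a connected graph bound its order from below. -/
lemma ncard_isBridge_add_two_mul_ncard_isNontrivialBlock_lt (hG : G.Connected) :
    {e | G.IsBridge e}.ncard + 2 * {H : G.Subgraph | IsNontrivialBlock H}.ncard <
      Fintype.card V := by
  classical
  obtain ⟨T, hle, hT⟩ := hG.exists_isTree_le
  let B : Finset (Sym2 V) := Finset.univ.filter G.IsBridge
  let R : Finset G.Subgraph := Finset.univ.filter IsNontrivialBlock
  let F : G.Subgraph → Finset (Sym2 V) := fun H => T.edgeFinset.filter (· ∈ H.edgeSet)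
  have hB : {e | G.IsBridge e}.ncard = B.card := by
    rw [← Set.ncard_coe_finset]; simp [B]
  have hR : {H : G.Subgraph | IsNontrivialBlock H}.ncard = R.card := by
    rw [← Set.ncard_coe_finset]; simp [R]
  have hF : ∀ H ∈ R, 2 ≤ (F H).card := by
    intro H hH
    obtain ⟨e, he, f, hf, hef⟩ :=
      (Finset.mem_filter.1 hH).2.exists_two_edges hle hT.connected
    exact Finset.one_lt_card.2 ⟨e, by simpa [F] using he, f, by simpa [F] using hf, hef⟩
  have hdisj : (R : Set G.Subgraph).PairwiseDisjoint F := by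
    intro H hH K hK hne
    refine Finset.disjoint_left.2 fun e heH heK => hne ?_
    exact (Finset.mem_filter.1 hH).2.1.eq_of_mem_edgeSet (Finset.mem_filter.1 hK).2.1
      (Finset.mem_filter.1 heH).2 (Finset.mem_filter.1 heK).2
  have hBF : Disjoint B (R.biUnion F) := by
    refine Finset.disjoint_left.2 fun e heB he => ?_
    obtain ⟨H, hH, heH⟩ := Finset.mem_biUnion.1 he
    exact (Finset.mem_filter.1 hH).2.not_isBridge (Finset.mem_filter.1 heH).2
      (Finset.mem_filter.1 heB).2
  have hsub : B ∪ R.biUnion F ⊆ T.edgeFinset := by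
    refine Finset.union_subset (fun e he => ?_) (Finset.biUnion_subset.2 fun H _ =>
      Finset.filter_subset _ _)
    rw [mem_edgeFinset]
    exact ((Finset.mem_filter.1 he).2.anti hle).mem_edgeSet hT.connected
  have hcard := Finset.card_le_card hsub
  rw [Finset.card_union_of_disjoint hBF, Finset.card_biUnion hdisj] at hcard
  have hsum := Finset.card_nsmul_le_sum R (fun H => (F H).card) 2 hF
  have htree := hT.card_edgeFinset
  rw [smul_eq_mul] at hsum
  rw [hB, hR]
  omega

end Bounds

/-- If G is connected of order n with a cut-edge, and r is the number of nontrivial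
blocks of G, then cfc(G) ≤ n − 2r. -/
theorem cfcNum_le_of_blocks {V : Type*} [Fintype V] (G : SimpleGraph V)
    (hconn : G.Connected) (hbr : ∃ e : Sym2 V, G.IsBridge e)
    (n r : ℕ) (hn : Fintype.card V = n)
    (hr : {H : G.Subgraph | IsNontrivialBlock H}.ncard = r) :
    cfcNum G ≤ n - 2 * r := by
  subst hn hr
  obtain ⟨c, hc, hcfc⟩ := exists_isCFCColoring_lt hconn hbr
  have hlt := ncard_isBridge_add_two_mul_ncard_isNontrivialBlock_lt hconn
  refine Nat.sInf_le ⟨c, fun e _ => (hc e).trans_le ?_, hcfc⟩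
  omega
end

section
/- Let G be a connected simple graph on n vertices with edge-connectivity λ(G) = 1 (i.e., G has a cut-edge). If G has a unique nontrivial block B, then cfc(G) ≤ n + 1 − |V(B)|. -/
open SimpleGraph

namespace SimpleGraph

/-- A walk ending in `T` can be cut down to a path meeting `T` only at its last vertex. -/
lemma Walk.exists_isPath_inter_eq_end {W : Type*} {H : SimpleGraph W} (T : Set W) {u v : W}
    (q : H.Walk u v) (hv : v ∈ T) :
    ∃ z ∈ T, ∃ q' : H.Walk u z, q'.IsPath ∧ q'.support ⊆ q.support ∧
      ∀ x ∈ q'.support, x ∈ T → x = z := by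
  classical
  suffices h : ∃ z ∈ T, ∃ q' : H.Walk u z, q'.support ⊆ q.support ∧
      ∀ x ∈ q'.support, x ∈ T → x = z by
    obtain ⟨z, hz, q', hs, hT⟩ := h
    exact ⟨z, hz, q'.bypass, q'.bypass_isPath,
      fun x hx => hs (q'.support_bypass_subset_support hx),
      fun x hx => hT x (q'.support_bypass_subset_support hx)⟩
  induction q with
  | nil => exact ⟨_, hv, .nil, by simp, by simp⟩
  | @cons a b c h q ih =>
    by_cases ha : a ∈ T
    · exact ⟨a, ha, .nil, by simp, by simp⟩
    · obtain ⟨z, hz, q', hs, hT⟩ := ih hv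
      refine ⟨z, hz, .cons h q', ?_, ?_⟩
      · simp only [Walk.support_cons]
        exact List.cons_subset_cons _ hs
      · intro x hx hxT
        rw [Walk.support_cons, List.mem_cons] at hx
        obtain rfl | hx := hx
        · exact absurd hxT ha
        · exact hT x hx hxT

lemma Walk.IsPath.append_of_inter {W : Type*} {H : SimpleGraph W} {u v w : W}
    {p : H.Walk u v} {q : H.Walk v w} (hp : p.IsPath) (hq : q.IsPath)
    (h : ∀ x ∈ p.support, x ∈ q.support → x = v) : (p.append q).IsPath := by
  rw [Walk.isPath_def, Walk.support_append, List.nodup_append']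
  refine ⟨hp.support_nodup, hq.support_nodup.tail, fun x hx hx' => ?_⟩
  obtain rfl := h x hx (List.mem_of_mem_tail hx')
  have hn := hq.support_nodup
  rw [← Walk.cons_tail_support] at hn
  exact (List.nodup_cons.mp hn).1 hx'

/-- In a graph without cut-vertices, any two distinct vertices are joined by a path through any
prescribed edge. -/
lemma exists_isPath_mem_edges {W : Type*} {H : SimpleGraph W}
    (h : ∀ x u v : W, u ≠ x → v ≠ x → ∃ p : H.Walk u v, x ∉ p.support)
    {x y : W} (hxy : H.Adj x y) {u v : W} (huv : u ≠ v) :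
    ∃ p : H.Walk u v, p.IsPath ∧ s(x, y) ∈ p.edges := by
  classical
  have step : ∀ v w : W, w ≠ u → v ≠ u → H.Adj v w →
      (∃ p : H.Walk u v, p.IsPath ∧ s(x, y) ∈ p.edges) →
      ∃ p : H.Walk u w, p.IsPath ∧ s(x, y) ∈ p.edges := by
    rintro v w hwu hvu hvw ⟨p, hp, he⟩
    by_cases hw : w ∈ p.support
    swap
    · exact ⟨p.concat hvw, hp.concat hw hvw, by simp [Walk.edges_concat, he]⟩
    obtain ⟨p₁, p₂, hp₁, hp₂, rfl⟩ := hp.mem_support_iff_exists_append.mp hw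
    rw [Walk.edges_append, List.mem_append] at he
    obtain he | he := he
    · exact ⟨p₁, hp₁, he⟩
    obtain ⟨q, hq⟩ := h w u v hwu.symm hvw.ne
    obtain ⟨z, hz, q', hq', hs, hT⟩ :=
      q.exists_isPath_inter_eq_end {a | a ∈ p₂.support} p₂.end_mem_support
    have hwq' : w ∉ q'.support := fun hh => hq (hs hh)
    have hzw : z ≠ w := by rintro rfl; exact hwq' q'.end_mem_support
    obtain ⟨r₁, r₂, hr₁, hr₂, rfl⟩ := hp₂.mem_support_iff_exists_append.mp hz
    rw [Walk.edges_append, List.mem_append] at he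
    obtain he | he := he
    · refine ⟨q'.append r₁.reverse, hq'.append_of_inter hr₁.reverse ?_, ?_⟩
      · intro a ha ha'
        refine hT a ha ?_
        simp only [Walk.support_reverse, List.mem_reverse] at ha'
        simp [Walk.mem_support_append_iff, ha']
      · simp [Walk.edges_append, he]
    · have hwr : w ∉ r₂.support := fun hh =>
        hp₂.ne_of_mem_support_of_append hzw.symm r₁.start_mem_support hh rfl
      refine ⟨(q'.append r₂).concat hvw, (hq'.append_of_inter hr₂ ?_).concat ?_ hvw, ?_⟩
      · intro a ha ha'
        refine hT a ha ?_
        simp [Walk.mem_support_append_iff, ha']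
      · simp [Walk.mem_support_append_iff, hwq', hwr]
      · simp [Walk.edges_concat, Walk.edges_append, he]
  have base : ∃ v₀, v₀ ≠ u ∧ ∃ p : H.Walk u v₀, p.IsPath ∧ s(x, y) ∈ p.edges := by
    by_cases hyu : y = u
    · subst hyu
      exact ⟨x, hxy.ne, hxy.symm.toWalk, by simp [hxy.ne'], by simp [Sym2.eq_swap]⟩
    · obtain ⟨p, hp⟩ := h y u x (Ne.symm hyu) hxy.ne
      refine ⟨y, hyu, p.bypass.concat hxy, p.bypass_isPath.concat ?_ hxy, ?_⟩
      · exact fun hh => hp (p.support_bypass_subset_support hh)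
      · simp [Walk.edges_concat]
  obtain ⟨v₀, hv₀, hP⟩ := base
  obtain ⟨q, hq⟩ := h u v₀ v hv₀ huv.symm
  clear huv
  induction q with
  | nil => exact hP
  | @cons a b c hab q ih =>
    rw [Walk.support_cons, List.mem_cons, not_or] at hq
    have hb : b ≠ u := by rintro rfl; exact hq.2 q.start_mem_support
    exact ih hb (step a b hb hv₀ hab hP) hq.2

end SimpleGraph

namespace NoCutVertex

variable {V : Type*} {G : SimpleGraph V} {H : G.Subgraph}

lemma exists_walk_notMem_support (hH : NoCutVertex H) (x u v : H.verts) (hu : u ≠ x)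
    (hv : v ≠ x) : ∃ p : H.coe.Walk u v, x ∉ p.support := by
  have hu' : (u : V) ∈ (H.deleteVerts {(x : V)}).verts :=
    ⟨u.2, fun h => hu (Subtype.ext h)⟩
  have hv' : (v : V) ∈ (H.deleteVerts {(x : V)}).verts :=
    ⟨v.2, fun h => hv (Subtype.ext h)⟩
  obtain ⟨p⟩ := (hH x ⟨u, hu'⟩).preconnected ⟨u, hu'⟩ ⟨v, hv'⟩
  refine ⟨p.map (Subgraph.inclusion Subgraph.deleteVerts_le), ?_⟩
  intro hx
  obtain ⟨a, -, hax⟩ := List.mem_map.mp ((Walk.support_map _ p) ▸ hx)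
  exact a.2.2 (congrArg Subtype.val hax)

lemma not_isBridge_of_adj (hH : NoCutVertex H) (h3 : 3 ≤ H.verts.ncard) {x y : V}
    (hxy : H.Adj x y) : ¬ G.IsBridge s(x, y) := by
  obtain ⟨z, hz, hzxy⟩ : ∃ z ∈ H.verts, z ∉ ({x, y} : Set V) := by
    by_contra! hcon
    have h1 := Set.ncard_le_ncard (s := H.verts) (t := {x, y}) hcon
    have h2 := Set.ncard_insert_le x {y}
    rw [Set.ncard_singleton] at h2
    omega
  simp only [Set.mem_insert_iff, Set.mem_singleton_iff, not_or] at hzxy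
  let x' : H.verts := ⟨x, hxy.fst_mem⟩
  let y' : H.verts := ⟨y, hxy.snd_mem⟩
  let z' : H.verts := ⟨z, hz⟩
  have hne : x' ≠ y' := fun h => hxy.ne (congrArg Subtype.val h)
  have hzx : z' ≠ x' := fun h => hzxy.1 (congrArg Subtype.val h)
  have hzy : z' ≠ y' := fun h => hzxy.2 (congrArg Subtype.val h)
  obtain ⟨p, hp⟩ := hH.exists_walk_notMem_support y' x' z' hne hzy
  obtain ⟨q, hq⟩ := hH.exists_walk_notMem_support x' z' y' hzx hne.symm
  have hp' : y ∉ (p.map H.hom).support := by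
    rw [Walk.support_map, List.mem_map]
    rintro ⟨a, ha, hay⟩
    exact hp ((Subtype.ext hay : a = y') ▸ ha)
  have hq' : x ∉ (q.map H.hom).support := by
    rw [Walk.support_map, List.mem_map]
    rintro ⟨a, ha, hax⟩
    exact hq ((Subtype.ext hax : a = x') ▸ ha)
  rw [isBridge_iff, not_not]
  exact (reachable_deleteEdges_iff_exists_walk.mpr
      ⟨p.map H.hom, fun h => hp' (Walk.snd_mem_support_of_mem_edges _ h)⟩).trans
    (reachable_deleteEdges_iff_exists_walk.mpr
      ⟨q.map H.hom, fun h => hq' (Walk.fst_mem_support_of_mem_edges _ h)⟩)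

end NoCutVertex

namespace SimpleGraph

variable {V : Type*} {G : SimpleGraph V}

lemma Walk.IsCycle.noCutVertex_toSubgraph {u : V} {C : G.Walk u u} (hC : C.IsCycle) :
    NoCutVertex C.toSubgraph := by
  classical
  intro v _
  rw [← Subgraph.connected_iff']
  by_cases hv : v ∈ C.support
  · have hR := hC.rotate hv
    rw [← C.toSubgraph_rotate hv]
    generalize C.rotate v hv = R at hR
    cases R with
    | nil => exact absurd hR Walk.not_isCycle_nil
    | @cons _ w _ h p =>
      have hp := ((Walk.cons_isCycle_iff p h).mp hR).1
      have hnil : ¬ p.Nil := Walk.not_nil_of_ne h.ne'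
      obtain ⟨x, d, h', rfl⟩ : ∃ x, ∃ d : G.Walk w x, ∃ h' : G.Adj x v, p = d.concat h' :=
        ⟨_, p.dropLast, Walk.adj_penultimate hnil, (p.concat_dropLast _).symm⟩
      have hvd : v ∉ d.support := ((Walk.concat_isPath_iff h').mp hp).2
      refine d.toSubgraph_connected.mono' ?_ ?_
      · intro a b hab
        have ha : a ∈ d.support := Walk.mem_support_of_adj_toSubgraph hab
        have hb : b ∈ d.support := Walk.mem_support_of_adj_toSubgraph hab.symm
        have hab' : (Walk.cons h (d.concat h')).toSubgraph.Adj a b := by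
          rw [Walk.adj_toSubgraph_iff_mem_edges] at hab ⊢
          simp [Walk.edges_cons, Walk.edges_concat, hab]
        rw [Subgraph.deleteVerts_adj]
        refine ⟨hab'.fst_mem, ?_, hab'.snd_mem, ?_, hab'⟩
        · rintro rfl; exact hvd ha
        · rintro rfl; exact hvd hb
      · ext a
        simp only [Subgraph.deleteVerts_verts, Walk.verts_toSubgraph, Set.mem_ofPred_eq,
          Set.mem_sdiff, Set.mem_singleton_iff, Walk.support_cons, Walk.support_concat,
          List.mem_cons, List.mem_append, List.not_mem_nil, or_false]
        constructor
        · intro ha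
          exact ⟨.inr (.inl ha), by rintro rfl; exact hvd ha⟩
        · rintro ⟨h1 | h1 | h1, h2⟩
          · exact absurd h1 h2
          · exact h1
          · exact absurd h1 h2
  · rw [← Subgraph.deleteVerts_inter_verts_set_right_eq]
    have : ({v} : Set V) ∩ C.toSubgraph.verts = ∅ := by simpa using hv
    rw [this, Subgraph.deleteVerts_empty]
    exact C.toSubgraph_connected

lemma exists_isBlock_ge [Finite V] {H : G.Subgraph} (hc : H.coe.Connected)
    (hH : NoCutVertex H) : ∃ B : G.Subgraph, H ≤ B ∧ IsBlock B := by
  obtain ⟨B, hle, hmax⟩ := (Set.toFinite {K : G.Subgraph | K.coe.Connected ∧ NoCutVertex K})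
    |>.exists_le_maximal (a := H) ⟨hc, hH⟩
  exact ⟨B, hle, hmax.prop.1, hmax.prop.2,
    fun K hBK hK hK' => le_antisymm (hmax.le_of_ge ⟨hK, hK'⟩ hBK) hBK⟩

/-- Every edge which is not a bridge lies in a nontrivial block. -/
lemma exists_isNontrivialBlock_mem_edgeSet [Finite V] {e : Sym2 V} (he : e ∈ G.edgeSet)
    (hb : ¬ G.IsBridge e) : ∃ B : G.Subgraph, IsNontrivialBlock B ∧ e ∈ B.edgeSet := by
  rw [isBridge_iff_forall_cycle_notMem he] at hb
  push Not at hb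
  obtain ⟨u, C, hC, heC⟩ := hb
  obtain ⟨B, hle, hB⟩ := exists_isBlock_ge C.toSubgraph_connected.coe hC.noCutVertex_toSubgraph
  refine ⟨B, ⟨hB, ?_⟩, Subgraph.edgeSet_mono hle (C.mem_edges_toSubgraph.mpr heC)⟩
  classical
  calc 3 ≤ C.length := hC.three_le_length
    _ = C.support.tail.length := by simp
    _ = C.support.tail.toFinset.card := (List.toFinset_card_of_nodup hC.support_nodup).symm
    _ = (C.support.tail.toFinset : Set V).ncard := (Set.ncard_coe_finset _).symm
    _ ≤ B.verts.ncard := Set.ncard_le_ncard fun a ha => hle.1 <| by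
      rw [Walk.mem_verts_toSubgraph]
      exact List.mem_of_mem_tail (by simpa using ha)

/-- If all edges outside a connected subgraph `B` are bridges, there are at most as many of them
as there are vertices outside `B`. -/
lemma Connected.ncard_edgeSet_diff_le [Finite V] (hG : G.Connected) {B : G.Subgraph}
    (hB : B.coe.Connected) (hb : ∀ e ∈ G.edgeSet \ B.edgeSet, G.IsBridge e) :
    (G.edgeSet \ B.edgeSet).ncard ≤ B.vertsᶜ.ncard := by
  obtain ⟨r⟩ := hB.nonempty
  choose P hP using fun v => hG.exists_isPath (r : V) v
  have hreach : ∀ e ∈ G.edgeSet \ B.edgeSet, ∀ v ∈ B.verts,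
      (G.deleteEdges {e}).Reachable r v := by
    intro e he v hv
    let f : B.coe →g G.deleteEdges {e} := ⟨Subtype.val, fun {a b} hab => by
      rw [deleteEdges_adj]
      refine ⟨B.adj_sub hab, fun h => he.2 ?_⟩
      rw [← Set.mem_singleton_iff.mp h]
      exact hab⟩
    exact (hB.preconnected r ⟨v, hv⟩).map f
  have key : ∀ a b, s(a, b) ∈ G.edgeSet \ B.edgeSet →
      ¬ (G.deleteEdges {s(a, b)}).Reachable r b →
      s(a, b) ∈ (fun v => s(v, (P v).penultimate)) '' B.vertsᶜ := by
    intro a b he hr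
    refine ⟨b, fun hbB => hr (hreach _ he b hbB), ?_⟩
    rw [reachable_deleteEdges_iff_exists_walk] at hr
    push Not at hr
    have := (hP b).eq_penultimate_of_mem_edges (w := a) (by rw [Sym2.eq_swap]; exact hr (P b))
    simp only [← this, Sym2.eq_swap]
  refine (Set.ncard_le_ncard ?_).trans (Set.ncard_image_le (f := fun v => s(v, (P v).penultimate)))
  rintro ⟨a, b⟩ he
  by_cases hr : (G.deleteEdges {s(a, b)}).Reachable r b
  · have hr' : ¬ (G.deleteEdges {s(a, b)}).Reachable r a :=
      fun hra => isBridge_iff.mp (hb _ he) (hra.symm.trans hr)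
    have := key b a (by rw [Sym2.eq_swap]; exact he) (by rw [Sym2.eq_swap]; exact hr')
    rw [Sym2.eq_swap] at this
    exact this
  · exact key a b he hr

end SimpleGraph

/-- If G is connected of order n with a cut-edge and has a unique nontrivial block B,
then cfc(G) ≤ n + 1 − |V(B)|. -/
theorem cfcNum_le_of_unique_nontrivial_block {V : Type*} [Fintype V] (G : SimpleGraph V)
    (hconn : G.Connected) (hbr : ∃ e : Sym2 V, G.IsBridge e)
    (n : ℕ) (hn : Fintype.card V = n)
    (B : G.Subgraph) (hB : IsNontrivialBlock B)
    (huniq : ∀ H : G.Subgraph, IsNontrivialBlock H → H = B) :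
    cfcNum G ≤ n + 1 - B.verts.ncard := by
  classical
  obtain ⟨⟨hBc, hBn, -⟩, hB3⟩ := hB
  have hbridge : ∀ e ∈ G.edgeSet \ B.edgeSet, G.IsBridge e := by
    intro e he
    by_contra hne
    obtain ⟨B', hB', heB'⟩ := exists_isNontrivialBlock_mem_edgeSet he.1 hne
    exact he.2 (huniq B' hB' ▸ heB')
  have hcard := hconn.ncard_edgeSet_diff_le hBc hbridge
  have hcompl := Set.ncard_add_ncard_compl B.verts
  rw [Nat.card_eq_fintype_card, hn] at hcompl
  have hpos : 0 < (G.edgeSet \ B.edgeSet).ncard := by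
    rw [Set.ncard_pos]
    obtain ⟨⟨a, b⟩, he⟩ := hbr
    exact ⟨s(a, b), he.reachable_iff_adj.mp (hconn.preconnected a b),
      fun h => hBn.not_isBridge_of_adj hB3 h he⟩
  obtain ⟨x, y, hxy⟩ : ∃ x y, B.coe.Adj x y := by
    obtain ⟨a, ha, b, hb, hab⟩ := (Set.one_lt_ncard (s := B.verts)).mp (by omega)
    have hnt : Nontrivial B.verts := ⟨⟨⟨a, ha⟩, ⟨b, hb⟩, fun h => hab (congrArg Subtype.val h)⟩⟩
    exact ⟨_, hBc.preconnected.exists_adj_of_nontrivial ⟨a, ha⟩⟩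
  obtain ⟨ι, hι⟩ : ∃ ι : Sym2 V → ℕ, Set.MapsTo ι (G.edgeSet \ B.edgeSet)
      (Set.Iio (G.edgeSet \ B.edgeSet).ncard) ∧ Set.InjOn ι (G.edgeSet \ B.edgeSet) := by
    let φ := Finite.equivFin ↥(G.edgeSet \ B.edgeSet)
    refine ⟨fun e => if h : e ∈ G.edgeSet \ B.edgeSet then φ ⟨e, h⟩ else 0, ?_, ?_⟩
    · intro e he
      simp only [he, dif_pos, Set.mem_Iio]
      exact (φ ⟨e, he⟩).isLt
    · intro e he e' he' h
      simp only [he, he', dif_pos] at h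
      exact congrArg Subtype.val (φ.injective (Fin.ext h))
  let c : Sym2 V → ℕ := fun e =>
    if e = s((x : V), (y : V)) then 1 else if e ∈ B.edgeSet then 0 else ι e + 1
  refine Nat.sInf_le ⟨c, ?_, ?_⟩
  · intro e he
    simp only [c]
    split_ifs with h1 h2
    · omega
    · omega
    · have := hι.1 ⟨he, h2⟩
      simp only [Set.mem_Iio] at this
      omega
  intro u v huv
  obtain ⟨w⟩ := (hconn.connected_delete_edge_of_not_isBridge
    (hBn.not_isBridge_of_adj hB3 hxy)).preconnected u v
  obtain ⟨p, hp⟩ := reachable_deleteEdges_iff_exists_walk.mp ⟨w⟩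
  by_cases hout : ∃ g ∈ p.toPath.1.edges, g ∉ B.edgeSet
  · obtain ⟨g, hg, hgB⟩ := hout
    refine ⟨p.toPath, g, hg, fun e' he' hc => ?_⟩
    have hne : ∀ e ∈ p.toPath.1.edges, e ≠ s((x : V), (y : V)) := by
      rintro e he rfl
      exact hp (p.edges_toPath_subset_edges he)
    simp only [c, hne g hg, hne e' he', if_false, hgB] at hc
    split_ifs at hc with h
    exact hι.2 ⟨Walk.edges_subset_edgeSet _ he', h⟩ ⟨Walk.edges_subset_edgeSet _ hg, hgB⟩
      (Nat.succ_injective hc)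
  · push Not at hout
    have hmem : ∀ a ∈ p.toPath.1.support, a ∈ B.verts := by
      intro a ha
      rw [Walk.mem_support_iff_exists_mem_edges_of_not_nil (Walk.not_nil_of_ne huv)] at ha
      obtain ⟨e, he, hae⟩ := ha
      exact B.mem_verts_of_mem_edge (hout e he) hae
    obtain ⟨q, hq, heq⟩ := exists_isPath_mem_edges hBn.exists_walk_notMem_support hxy
      (u := ⟨u, hmem u (Walk.start_mem_support _)⟩) (v := ⟨v, hmem v (Walk.end_mem_support _)⟩)
      (fun h => huv (congrArg Subtype.val h))
    refine ⟨⟨q.map B.hom, hq.map B.hom_injective⟩, s((x : V), (y : V)), ?_, fun e' he' hc => ?_⟩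
    · exact (Walk.edges_map B.hom q) ▸ List.mem_map_of_mem heq
    · by_contra hne
      have heB : e' ∈ B.edgeSet := by
        obtain ⟨⟨a, b⟩, hab, rfl⟩ := List.mem_map.mp ((Walk.edges_map B.hom q) ▸ he')
        exact q.edges_subset_edgeSet hab
      simp [c, hne, heB] at hc
end

section
/- Let G be a connected simple graph with m_G edges and let H be a connected subgraph of G with m_H edges, where H has at least one edge. Then cfc(G) ≤ cfc(H) + m_G − m_H. -/
open SimpleGraph

/-- In a connected graph, an injective edge-coloring is conflict-free connected. -/
theorem IsCFCColoring.of_injective {V : Type*} {G : SimpleGraph V} (hG : G.Connected)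
    {c : Sym2 V → ℕ} (hc : Function.Injective c) : IsCFCColoring G c := by
  classical
  intro u v huv
  obtain ⟨p⟩ := hG.preconnected u v
  have hne : p.toPath.1.edges ≠ [] := fun h =>
    huv (Walk.eq_of_length_eq_zero (p := p.toPath.1) (by rw [← Walk.length_edges, h]; rfl))
  obtain ⟨e, he⟩ := List.exists_mem_of_ne_nil _ hne
  exact ⟨p.toPath, e, he, fun e' _ h => hc h⟩

/-- A finite connected graph has a conflict-free connection coloring with `cfcNum` colors. -/
theorem exists_isCFCColoring_cfcNum {V : Type*} [Finite V] {G : SimpleGraph V}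
    (hG : G.Connected) :
    ∃ c : Sym2 V → ℕ, (∀ e ∈ G.edgeSet, c e < cfcNum G) ∧ IsCFCColoring G c := by
  refine Nat.sInf_mem
    (s := {k | ∃ c : Sym2 V → ℕ, (∀ e ∈ G.edgeSet, c e < k) ∧ IsCFCColoring G c}) ?_
  obtain ⟨n, ⟨f⟩⟩ := Finite.exists_equiv_fin (Sym2 V)
  exact ⟨n, fun e => f e, fun e _ => (f e).2,
    .of_injective hG (Fin.val_injective.comp f.injective)⟩

/-- A walk between distinct vertices all of whose edges lie in a subgraph has its endpoints in
that subgraph. -/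
theorem SimpleGraph.Walk.endpoints_mem_verts {V : Type*} {G : SimpleGraph V} {H : G.Subgraph}
    {u v : V} (p : G.Walk u v) (huv : u ≠ v) (hp : ∀ e ∈ p.edges, e ∈ H.edgeSet) :
    u ∈ H.verts ∧ v ∈ H.verts := by
  induction p with
  | nil => exact absurd rfl huv
  | @cons u w v h p ih =>
    have huw : H.Adj u w := hp s(u, w) (by simp)
    refine ⟨huw.fst_mem, ?_⟩
    by_cases hwv : w = v
    · exact hwv ▸ huw.snd_mem
    · exact (ih hwv fun e he => hp e (by simp [he])).2

/-- If G is connected with m_G edges and H is a connected subgraph of G with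
m_H ≥ 1 edges, then cfc(G) ≤ cfc(H) + m_G − m_H. -/
theorem cfcNum_le_subgraph_add_edges {V : Type*} [Fintype V] (G : SimpleGraph V)
    (hG : G.Connected) (H : G.Subgraph) (hH : H.coe.Connected)
    (hHe : H.edgeSet.Nonempty) (mG mH : ℕ)
    (hmG : G.edgeSet.ncard = mG) (hmH : H.edgeSet.ncard = mH) :
    cfcNum G ≤ cfcNum H.coe + mG - mH := by
  classical
  obtain ⟨c, hck, hc⟩ := exists_isCFCColoring_cfcNum hH
  set k := cfcNum H.coe
  have hcard : (G.edgeSet \ H.edgeSet).ncard = mG - mH := by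
    rw [Set.ncard_sdiff H.edgeSet_subset (Set.toFinite _), hmG, hmH]
  have hle : mH ≤ mG := by
    rw [← hmG, ← hmH]
    exact Set.ncard_le_ncard H.edgeSet_subset (Set.toFinite _)
  let f : ↥(G.edgeSet \ H.edgeSet) ≃ Fin (mG - mH) :=
    Finite.equivFinOfCardEq (by rw [Nat.card_coe_set_eq, hcard])
  have hι : Function.Injective (Sym2.map (Subtype.val : H.verts → V)) :=
    Sym2.map.injective Subtype.val_injective
  let d : Sym2 V → ℕ := fun e =>
    if h : e ∈ G.edgeSet \ H.edgeSet then k + f ⟨e, h⟩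
    else Function.extend (Sym2.map (Subtype.val : H.verts → V)) c 0 e
  have hd_new : ∀ e (h : e ∈ G.edgeSet \ H.edgeSet), d e = k + f ⟨e, h⟩ :=
    fun e h => dif_pos h
  have hmap : ∀ e ∈ H.coe.edgeSet, Sym2.map Subtype.val e ∈ H.edgeSet := by
    intro e
    induction e with | _ a b => exact id
  have hd_old : ∀ e ∈ H.coe.edgeSet, d (Sym2.map Subtype.val e) = c e := fun e he =>
    (dif_neg fun h => h.2 (hmap e he)).trans (hι.extend_apply c 0 e)
  have hd_lt : ∀ e ∈ H.edgeSet, d e < k := by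
    intro e
    induction e with | _ a b =>
    intro he
    have hab : H.Adj a b := he
    have hmem : s((⟨a, hab.fst_mem⟩ : H.verts), ⟨b, hab.snd_mem⟩) ∈ H.coe.edgeSet := hab
    exact (hd_old _ hmem).trans_lt (hck _ hmem)
  refine Nat.sInf_le ⟨d, fun e he => ?_, fun u v huv => ?_⟩
  · by_cases heH : e ∈ H.edgeSet
    · have := hd_lt e heH
      omega
    · have := hd_new e ⟨he, heH⟩
      have := (f ⟨e, he, heH⟩).2
      omega
  · obtain ⟨q⟩ := hG.preconnected u v
    by_cases hq : ∀ e ∈ q.toPath.1.edges, e ∈ H.edgeSet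
    · obtain ⟨hu, hv⟩ := q.toPath.1.endpoints_mem_verts huv hq
      obtain ⟨p, e, he, hue⟩ := hc ⟨u, hu⟩ ⟨v, hv⟩ fun h => huv (congrArg Subtype.val h)
      obtain ⟨p', hedges⟩ : ∃ p' : G.Path u v,
          p'.1.edges = p.1.edges.map (Sym2.map Subtype.val) :=
        ⟨p.map H.hom Subtype.val_injective, Walk.edges_map _ _⟩
      refine ⟨p', Sym2.map Subtype.val e, ?_, ?_⟩
      · rw [hedges]
        exact List.mem_map_of_mem he
      · rw [hedges]
        intro e' he' heq
        obtain ⟨e₁, he₁, rfl⟩ := List.mem_map.1 he'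
        rw [hd_old _ (p.1.edges_subset_edgeSet he₁),
          hd_old _ (p.1.edges_subset_edgeSet he)] at heq
        rw [hue e₁ he₁ heq]
    · push Not at hq
      obtain ⟨e, he, heH⟩ := hq
      have heG := q.toPath.1.edges_subset_edgeSet he
      refine ⟨q.toPath, e, he, fun e' he' heq => ?_⟩
      rw [hd_new e ⟨heG, heH⟩] at heq
      by_cases heH' : e' ∈ H.edgeSet
      · have := hd_lt e' heH'
        omega
      · have heG' := q.toPath.1.edges_subset_edgeSet he'
        rw [hd_new e' ⟨heG', heH'⟩] at heq
        exact congrArg Subtype.val (f.injective (Fin.ext (Nat.add_left_cancel heq)))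
end

section
/- Let T be a tree on n vertices, and let t be a natural number with t ≥ 1 and n ≥ 2t + 2. Then cfc(T) = n − t if and only if the maximum degree Δ(T) = n − t. -/
open SimpleGraph

namespace SimpleGraph

variable {V : Type*} {G : SimpleGraph V}

/-- In a path, a vertex with at most one neighbor is an endpoint. -/
lemma Walk.IsPath.eq_or_eq_of_forall_adj_eq {a b x v : V} {p : G.Walk a b} (hp : p.IsPath)
    (hx : x ∈ p.support) (hv : ∀ z, G.Adj x z → z = v) : a = x ∨ b = x := by
  induction p with
  | nil => simp_all
  | @cons a a' b h q ih =>
    rw [Walk.cons_isPath_iff] at hp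
    rw [Walk.support_cons, List.mem_cons] at hx
    rcases hx with rfl | hx
    · exact .inl rfl
    rcases ih hp.1 hx with rfl | rfl
    · cases q with
      | nil => exact .inr rfl
      | cons h' q' =>
        obtain rfl := (hv _ h.symm).trans (hv _ h').symm
        exact absurd (by simp) hp.2
    · exact .inr rfl

/-- A forest with an edge avoiding a vertex `w` has a leaf other than `w` whose neighbor is also
different from `w`. -/
lemma IsAcyclic.exists_leaf_avoiding [Finite V] (hG : G.IsAcyclic) {w a b : V} (hab : G.Adj a b)
    (ha : a ≠ w) (hb : b ≠ w) :
    ∃ x v, x ≠ w ∧ v ≠ w ∧ G.Adj x v ∧ ∀ z, G.Adj x z → z = v := by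
  classical
  set H := G.deleteIncidenceSet w with hHdef
  have hH : ∀ x y, H.Adj x y ↔ G.Adj x y ∧ x ≠ w ∧ y ≠ w := fun x y ↦ by
    rw [hHdef, deleteIncidenceSet_adj]
  have hle : H ≤ G := fun x y h ↦ ((hH x y).1 h).1
  have hHa : H.IsAcyclic := hG.anti hle
  have : Nonempty V := ⟨w⟩
  obtain ⟨u, v, p, hp, hmax⟩ := Walk.exists_isPath_forall_isPath_length_le_length H
  have hnil : ¬p.Nil := by
    have := hmax a b (Path.singleton ((hH a b).2 ⟨hab, ha, hb⟩)).1 (Path.singleton _).2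
    intro h
    rw [Walk.length_eq_zero_iff.2 h] at this
    simp [Path.singleton] at this
  have huv : u ≠ v := hp.nil_iff_eq.not.mp hnil
  have hu : ∀ z, H.Adj u z → z = p.snd := fun z hadj ↦ by
    apply hHa.eq_snd_of_adj_start hp hadj
    have : ¬(p.cons hadj.symm).IsPath := by grind [Walk.length_cons]
    grind [hp.cons]
  have hv : ∀ z, H.Adj v z → z = p.penultimate := fun z hadj ↦ by
    apply hHa.eq_penultimate_of_adj_end hp hadj
    have : ¬(p.concat hadj).IsPath := by grind [Walk.length_concat]
    grind [hp.concat]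
  have hus := (hH _ _).1 (p.adj_snd hnil)
  have hvs := (hH _ _).1 (p.adj_penultimate hnil).symm
  by_cases huw : G.Adj u w
  · by_cases hvw : G.Adj v w
    · have key : ∀ {s t : V} (q : H.Walk s t), s ≠ w → w ∉ q.support := by
        intro s t q
        induction q with
        | nil => simp [eq_comm]
        | cons h q ih =>
          intro hs
          simp only [Walk.support_cons, List.mem_cons, not_or]
          exact ⟨hs.symm, ih ((hH _ _).1 h).2.2⟩
      have hq : ((p.mapLe hle).cons huw.symm).IsPath := by
        rw [Walk.cons_isPath_iff]
        exact ⟨(Walk.isPath_mapLe hle).2 hp, by simpa using key p hus.2.1⟩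
      have := hG.eq_snd_of_adj_start hq hvw.symm (Walk.end_mem_support _)
      exact absurd (by simpa using this.symm) huv
    · exact ⟨v, p.penultimate, hvs.2.1, hvs.2.2, hvs.1, fun z hz ↦
        hv z ((hH _ _).2 ⟨hz, hvs.2.1, by rintro rfl; exact hvw hz⟩)⟩
  · exact ⟨u, p.snd, hus.2.1, hus.2.2, hus.1, fun z hz ↦
      hu z ((hH _ _).2 ⟨hz, hus.2.1, by rintro rfl; exact huw hz⟩)⟩

lemma ncard_incidenceSet_eq_ncard_neighborSet (w : V) :
    (G.incidenceSet w).ncard = (G.neighborSet w).ncard := by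
  classical
  rw [← Nat.card_coe_set_eq, ← Nat.card_coe_set_eq]
  exact Nat.card_congr (G.incidenceSetEquivNeighborSet w)

lemma ncard_incidenceSet_eq_degree (w : V) [Fintype (G.neighborSet w)] :
    (G.incidenceSet w).ncard = G.degree w := by
  rw [ncard_incidenceSet_eq_ncard_neighborSet, Set.ncard_eq_toFinset_card',
    ← card_neighborFinset_eq_degree]
  rfl

/-- In a forest, a vertex `w` whose degree is more than half of the number of edges has a leaf
neighbor. -/
lemma IsAcyclic.exists_leaf_neighbor [Finite V] (hG : G.IsAcyclic) {w : V}
    (hw : G.edgeSet.ncard < 2 * (G.incidenceSet w).ncard) :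
    ∃ u, G.Adj u w ∧ ∀ z, G.Adj u z → z = w := by
  by_contra! h
  have h' : ∀ u, ∃ z, G.Adj w u → G.Adj u z ∧ z ≠ w := fun u ↦ by
    by_cases hu : G.Adj w u
    · obtain ⟨z, hz⟩ := h u hu.symm
      exact ⟨z, fun _ ↦ hz⟩
    · exact ⟨w, fun h ↦ absurd h hu⟩
  choose f hf using h'
  have hle : (G.neighborSet w).ncard ≤ (G.edgeSet \ G.incidenceSet w).ncard := by
    refine Set.ncard_le_ncard_of_injOn (fun u ↦ s(u, f u)) (fun u hu ↦ ?_) ?_ (Set.toFinite _)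
    · have hu : G.Adj w u := hu
      refine ⟨(hf u hu).1, fun hc ↦ ?_⟩
      rw [mk'_mem_incidenceSet_iff] at hc
      rcases hc.2 with hc | hc
      · exact hu.ne hc
      · exact (hf u hu).2 hc.symm
    · intro y (hy : G.Adj w y) y' (hy' : G.Adj w y') heq
      by_contra hne
      have hyy : G.Adj y y' := by
        have := (hf y hy).1
        simp only [Sym2.eq_iff] at heq
        rcases heq with ⟨h1, -⟩ | ⟨-, h2⟩
        · exact absurd h1 hne
        · rwa [h2] at this
      have hp : ((Walk.nil.cons hyy).cons hy).IsPath := by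
        simp [Walk.cons_isPath_iff, hy.ne, hy'.ne, hne]
      have := hG.eq_snd_of_adj_start hp hy' (by simp)
      exact hne (by simpa using this.symm)
  rw [Set.ncard_sdiff (G.incidenceSet_subset w),
    ← ncard_incidenceSet_eq_ncard_neighborSet] at hle
  have := Set.ncard_le_ncard (G.incidenceSet_subset w) (Set.toFinite _)
  omega

lemma ncard_incidenceSet_add_le [Finite V] {w w' : V} (h : w ≠ w') :
    (G.incidenceSet w).ncard + (G.incidenceSet w').ncard ≤
      (G.incidenceSet w ∪ G.incidenceSet w').ncard + 1 := by
  rw [← Set.ncard_union_add_ncard_inter _ _ (Set.toFinite _) (Set.toFinite _)]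
  have := Set.ncard_le_ncard (G.incidenceSet_inter_incidenceSet_subset h) (Set.toFinite _)
  simp only [Set.ncard_singleton] at this
  omega

lemma incidenceSet_deleteEdges (s : Set (Sym2 V)) (z : V) :
    (G.deleteEdges s).incidenceSet z = G.incidenceSet z \ s := by
  ext e
  simp only [incidenceSet, edgeSet_deleteEdges, Set.mem_sdiff, Set.mem_ofPred_eq]
  tauto

/-- A forest with maximum degree at most `m` and with fewer than `2 * m` edges, more than `m` of
them, has two disjoint pendant edges whose removal decreases the maximum degree below `m`. -/
lemma IsAcyclic.exists_two_leaves [Finite V] (hG : G.IsAcyclic) {m : ℕ}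
    (hlt : G.edgeSet.ncard < 2 * m) (hgt : m < G.edgeSet.ncard)
    (hdeg : ∀ v, (G.incidenceSet v).ncard ≤ m) :
    ∃ u w x v, G.Adj u w ∧ (∀ z, G.Adj u z → z = w) ∧ G.Adj x v ∧ (∀ z, G.Adj x z → z = v) ∧
      v ≠ w ∧ x ≠ w ∧
      ∀ z, ((G.deleteEdges {s(u, w), s(x, v)}).incidenceSet z).ncard < m := by
  have avoid : ∀ w, ∃ x v, x ≠ w ∧ v ≠ w ∧ G.Adj x v ∧ ∀ z, G.Adj x z → z = v := fun w ↦ by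
    obtain ⟨e, he, hew⟩ := Set.exists_mem_notMem_of_ncard_lt_ncard ((hdeg w).trans_lt hgt)
      (Set.toFinite _)
    induction e with | h a b =>
    rw [mk'_mem_incidenceSet_iff] at hew
    simp only [mem_edgeSet] at he
    simp only [he, true_and, not_or] at hew
    exact hG.exists_leaf_avoiding he (Ne.symm hew.1) (Ne.symm hew.2)
  have sub : ∀ s z, ((G.deleteEdges s).incidenceSet z).ncard ≤ (G.incidenceSet z).ncard :=
    fun s z ↦ by
      rw [incidenceSet_deleteEdges]
      exact Set.ncard_le_ncard Set.sdiff_subset (Set.toFinite _)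
  have sub' : ∀ s z e, e ∈ s → e ∈ G.incidenceSet z →
      ((G.deleteEdges s).incidenceSet z).ncard < m := fun s z e he hez ↦ by
    refine lt_of_lt_of_le ?_ (hdeg z)
    rw [incidenceSet_deleteEdges]
    exact Set.ncard_lt_ncard ⟨Set.sdiff_subset, fun h ↦ (h hez).2 he⟩ (Set.toFinite _)
  by_cases hw : ∃ w, (G.incidenceSet w).ncard = m
  · obtain ⟨w, hw⟩ := hw
    obtain ⟨u, huw, hu⟩ := hG.exists_leaf_neighbor (w := w) (by omega)
    obtain ⟨x, v, hxw, hvw, hxv, hx⟩ := avoid w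
    refine ⟨u, w, x, v, huw, hu, hxv, hx, hvw, hxw, fun z ↦ ?_⟩
    by_cases hz : (G.incidenceSet z).ncard < m
    · exact (sub _ _).trans_lt hz
    by_cases hzw : w = z
    · subst hzw
      exact sub' _ _ s(u, w) (by simp) (by simp [mk'_mem_incidenceSet_iff, huw])
    by_cases hzx : s(x, v) ∈ G.incidenceSet z
    · exact sub' _ _ s(x, v) (by simp) hzx
    have h1 := ncard_incidenceSet_add_le (G := G) hzw
    have h2 : (G.incidenceSet w ∪ G.incidenceSet z).ncard < G.edgeSet.ncard := by
      refine Set.ncard_lt_ncard ⟨Set.union_subset (G.incidenceSet_subset _)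
        (G.incidenceSet_subset _), fun h ↦ ?_⟩ (Set.toFinite _)
      rcases h (show s(x, v) ∈ G.edgeSet from hxv) with h | h
      · rw [mk'_mem_incidenceSet_iff] at h
        rcases h.2 with h | h
        · exact hxw h.symm
        · exact hvw h.symm
      · exact hzx h
    omega
  · push Not at hw
    have : Nonempty V := by
      obtain ⟨e, -⟩ := Set.nonempty_of_ncard_ne_zero (s := G.edgeSet) (by omega)
      induction e with | h a b => exact ⟨a⟩
    obtain ⟨u, w, -, -, huw, hu⟩ := avoid (Classical.arbitrary V)
    obtain ⟨x, v, hxw, hvw, hxv, hx⟩ := avoid w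
    exact ⟨u, w, x, v, huw, hu, hxv, hx, hvw, hxw, fun z ↦
      (sub _ _).trans_lt (lt_of_le_of_ne (hdeg z) (hw z))⟩

/-- A forest with maximum degree at most `m` and with fewer than `2 * m` edges has an edge-coloring
with `m` colors for which every nontrivial path is conflict-free. -/
theorem IsAcyclic.exists_coloring_forall_isPath [Finite V] (m : ℕ) (G : SimpleGraph V)
    (hG : G.IsAcyclic) (hlt : G.edgeSet.ncard < 2 * m)
    (hdeg : ∀ v, (G.incidenceSet v).ncard ≤ m) :
    ∃ c : Sym2 V → ℕ, (∀ e ∈ G.edgeSet, c e < m) ∧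
      ∀ (a b : V) (p : G.Walk a b), p.IsPath → a ≠ b →
        ∃ e ∈ p.edges, ∀ e' ∈ p.edges, c e' = c e → e' = e := by
  classical
  induction m generalizing G with
  | zero => omega
  | succ m ih =>
    rcases le_or_gt G.edgeSet.ncard (m + 1) with hle | hgt
    · obtain ⟨c, hc, hinj⟩ := (Set.toFinite G.edgeSet).exists_injOn_of_encard_le
        (t := Set.Iio (m + 1)) (by
          rw [← (Set.toFinite G.edgeSet).cast_ncard_eq, ← (Set.finite_Iio (m + 1)).cast_ncard_eq]
          have : (Set.Iio (m + 1)).ncard = m + 1 := by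
            rw [Set.ncard_eq_toFinset_card']; simp
          rw [this]
          exact_mod_cast hle)
      refine ⟨c, fun e he ↦ hc he, fun a b p _ hab ↦ ?_⟩
      cases p with
      | nil => exact absurd rfl hab
      | cons h q =>
        exact ⟨s(_, _), List.mem_cons_self, fun e' he' heq ↦ hinj (Walk.edges_subset_edgeSet _ he') h heq⟩
    obtain ⟨u, w, x, v, huw, hu, hxv, hx, hvw, hxw, hdeg'⟩ := hG.exists_two_leaves hlt hgt hdeg
    have hne : s(u, w) ≠ s(x, v) := by
      simp only [ne_eq, Sym2.eq_iff, not_or]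
      exact ⟨fun h ↦ hvw h.2.symm, fun h ↦ hxw h.2.symm⟩
    have hux : u ≠ x := by
      rintro rfl
      exact hvw (hu _ hxv)
    set s : Set (Sym2 V) := {s(u, w), s(x, v)} with hs
    have hle : G.deleteEdges s ≤ G := deleteEdges_le _
    have hcard : (G.deleteEdges s).edgeSet.ncard < 2 * m := by
      have hsub : s ⊆ G.edgeSet := by
        rintro e (rfl | rfl)
        · exact huw
        · exact hxv
      rw [edgeSet_deleteEdges, Set.ncard_sdiff hsub, hs, Set.ncard_pair hne]
      omega
    obtain ⟨c, hc, hcp⟩ := ih _ (hG.anti hle) hcard fun z ↦ Nat.lt_succ_iff.1 (hdeg' z)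
    let d : Sym2 V → ℕ := fun e ↦ if e ∈ s then m else c e
    have hd : ∀ e ∈ G.edgeSet, e ∉ s → d e = c e ∧ c e < m := fun e he hes ↦
      ⟨if_neg hes, hc e (by rw [edgeSet_deleteEdges]; exact ⟨he, hes⟩)⟩
    have hds : ∀ e ∈ s, d e = m := fun e he ↦ if_pos he
    -- a path avoiding both pendant edges
    have hfree : ∀ (a b : V) (p : G.Walk a b), p.IsPath → a ≠ b → (∀ e ∈ p.edges, e ∉ s) →
        ∃ e ∈ p.edges, ∀ e' ∈ p.edges, d e' = d e → e' = e := by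
      intro a b p hp hab hps
      have hp' : ∀ e ∈ p.edges, e ∈ (G.deleteEdges s).edgeSet := fun e he ↦ by
        rw [edgeSet_deleteEdges]
        exact ⟨p.edges_subset_edgeSet he, hps e he⟩
      obtain ⟨e, he, hu⟩ := hcp a b (p.transfer _ hp') (hp.transfer hp') hab
      rw [Walk.edges_transfer] at he hu
      refine ⟨e, he, fun e' he' h ↦ hu e' he' ?_⟩
      rwa [(hd e (p.edges_subset_edgeSet he) (hps e he)).1,
        (hd e' (p.edges_subset_edgeSet he') (hps e' he')).1] at h
    -- a path joining the two leaves
    have hends : ∀ p : G.Walk u x, p.IsPath →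
        ∃ e ∈ p.edges, ∀ e' ∈ p.edges, d e' = d e → e' = e := by
      intro p hp
      cases p with
      | nil => exact absurd rfl hux
      | @cons _ w' _ h q =>
        obtain rfl := hu _ h
        rw [Walk.cons_isPath_iff] at hp
        obtain ⟨r, rfl⟩ : ∃ r, q = Walk.reverse r := ⟨q.reverse, by simp⟩
        cases r with
        | nil => exact absurd rfl hxw
        | @cons _ v' _ h' r =>
          obtain rfl := hx _ h'
          rw [Walk.isPath_reverse_iff, Walk.cons_isPath_iff] at hp
          obtain ⟨⟨hr, hxr⟩, hur⟩ := hp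
          rw [Walk.support_reverse, List.mem_reverse, Walk.support_cons, List.mem_cons,
            not_or] at hur
          have hrs : ∀ e ∈ r.edges, e ∉ s := by
            rintro e he (rfl | rfl)
            · exact hur.2 (r.fst_mem_support_of_mem_edges he)
            · exact hxr (r.fst_mem_support_of_mem_edges he)
          obtain ⟨e, he, huniq⟩ := hfree _ _ r hr hvw hrs
          refine ⟨e, by simp [he], fun e' he' heq ↦ ?_⟩
          by_cases hes : e' ∈ s
          · have := hd e (r.edges_subset_edgeSet he) (hrs e he)
            have := hds e' hes
            omega
          · refine huniq e' ?_ heq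
            simp only [Walk.edges_cons, Walk.edges_reverse, List.mem_cons, List.mem_reverse] at he'
            rcases he' with rfl | rfl | h
            · exact absurd (by simp [hs]) hes
            · exact absurd (by simp [hs]) hes
            · exact h
    -- a path containing exactly one of the pendant edges
    have hone : ∀ (a b : V) (p : G.Walk a b) (e₁ e₂ : Sym2 V), s = {e₁, e₂} → e₁ ∈ p.edges →
        e₂ ∉ p.edges → ∃ e ∈ p.edges, ∀ e' ∈ p.edges, d e' = d e → e' = e := by
      intro a b p e₁ e₂ hs' h₁ h₂
      refine ⟨e₁, h₁, fun e' he' heq ↦ ?_⟩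
      rw [hds e₁ (by simp [hs'])] at heq
      by_cases hes : e' ∈ s
      · rw [hs'] at hes
        rcases hes with rfl | rfl
        · rfl
        · exact absurd he' h₂
      · have := hd e' (p.edges_subset_edgeSet he') hes
        omega
    refine ⟨d, fun e he ↦ ?_, fun a b p hp hab ↦ ?_⟩
    · by_cases hes : e ∈ s
      · rw [hds e hes]
        omega
      · have := hd e he hes
        omega
    by_cases h₁ : s(u, w) ∈ p.edges
    · by_cases h₂ : s(x, v) ∈ p.edges
      · rcases hp.eq_or_eq_of_forall_adj_eq (p.fst_mem_support_of_mem_edges h₁) hu with rfl | rfl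
        · rcases hp.eq_or_eq_of_forall_adj_eq (p.fst_mem_support_of_mem_edges h₂) hx with h | rfl
          · exact absurd h hux
          · exact hends p hp
        · rcases hp.eq_or_eq_of_forall_adj_eq (p.fst_mem_support_of_mem_edges h₂) hx with rfl | h
          · simpa using hends p.reverse hp.reverse
          · exact absurd h hux
      · exact hone a b p _ _ rfl h₁ h₂
    · by_cases h₂ : s(x, v) ∈ p.edges
      · exact hone a b p _ _ (Set.pair_comm _ _) h₂ h₁
      · refine hfree a b p hp hab ?_
        rintro e he (rfl | rfl)
        · exact h₁ he
        · exact h₂ he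

/-- In a conflict-free connected edge-colored forest, two edges at a common vertex have different
colors. -/
lemma IsAcyclic.ne_of_isCFCColoring (hG : G.IsAcyclic) {c : Sym2 V → ℕ} (hc : IsCFCColoring G c)
    {w a b : V} (ha : G.Adj w a) (hb : G.Adj w b) (hab : a ≠ b) : c s(w, a) ≠ c s(w, b) := by
  intro heq
  obtain ⟨p, e, he, huniq⟩ := hc a b hab
  have hq : ((Walk.nil.cons hb).cons ha.symm).IsPath := by
    simp [Walk.cons_isPath_iff, ha.ne', hb.ne, hab]
  have := (hG.subsingleton_path a b).elim p ⟨_, hq⟩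
  subst this
  simp only [Walk.edges_cons, Walk.edges_nil, List.mem_cons, List.not_mem_nil, or_false,
    forall_eq_or_imp, forall_eq] at he huniq
  rw [Sym2.eq_swap (a := a)] at he huniq
  have h : s(w, a) = s(w, b) := by
    rcases he with rfl | rfl
    · exact (huniq.2 heq.symm).symm
    · exact huniq.1 heq
  exact hab (Sym2.congr_right.1 h)

lemma IsTree.setOf_isCFCColoring_mem [Fintype V] [DecidableRel G.Adj] (hG : G.IsTree) {m : ℕ}
    (hm : G.maxDegree ≤ m) (hcard : Fintype.card V ≤ 2 * m) :
    m ∈ {k | ∃ c : Sym2 V → ℕ, (∀ e ∈ G.edgeSet, c e < k) ∧ IsCFCColoring G c} := by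
  classical
  have hE : G.edgeSet.ncard < 2 * m := by
    have := hG.card_edgeFinset
    rw [Set.ncard_eq_toFinset_card']
    change G.edgeFinset.card < 2 * m
    omega
  obtain ⟨c, hc, hp⟩ := IsAcyclic.exists_coloring_forall_isPath m G hG.isAcyclic hE fun v ↦ by
    rw [ncard_incidenceSet_eq_degree]
    exact (G.degree_le_maxDegree v).trans hm
  refine ⟨c, hc, fun u v huv ↦ ?_⟩
  obtain ⟨p, hpp, -⟩ := hG.existsUnique_path u v
  exact ⟨⟨p, hpp⟩, hp u v p hpp huv⟩

lemma IsTree.cfcNum_le [Fintype V] [DecidableRel G.Adj] (hG : G.IsTree) {m : ℕ}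
    (hm : G.maxDegree ≤ m) (hcard : Fintype.card V ≤ 2 * m) : cfcNum G ≤ m :=
  Nat.sInf_le (hG.setOf_isCFCColoring_mem hm hcard)

lemma IsTree.maxDegree_le_cfcNum [Fintype V] [DecidableRel G.Adj] (hG : G.IsTree) :
    G.maxDegree ≤ cfcNum G := by
  obtain ⟨c, hc, hcf⟩ := Nat.sInf_mem ⟨_, hG.setOf_isCFCColoring_mem
    (le_max_left G.maxDegree (Fintype.card V)) (by omega)⟩
  change ∀ e ∈ G.edgeSet, c e < cfcNum G at hc
  refine G.maxDegree_le_of_forall_degree_le _ fun w ↦ ?_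
  rw [← card_neighborFinset_eq_degree, ← Finset.card_range (cfcNum G)]
  refine Finset.card_le_card_of_injOn (fun a ↦ c s(w, a)) (fun a ha ↦ ?_) fun a ha b hb h ↦ ?_
  · simp only [Finset.mem_coe, mem_neighborFinset] at ha
    simpa using hc _ ha
  · simp only [Finset.mem_coe, mem_neighborFinset] at ha hb
    by_contra hab
    exact hG.isAcyclic.ne_of_isCFCColoring hcf ha hb hab h

end SimpleGraph

/-- For a tree T on n vertices with t ≥ 1 and n ≥ 2t + 2:
cfc(T) = n − t if and only if Δ(T) = n − t. -/
theorem cfcNum_tree_iff_maxDegree {V : Type*} [Fintype V] (T : SimpleGraph V)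
    [DecidableRel T.Adj] (hT : T.IsTree) (n t : ℕ) (hn : Fintype.card V = n)
    (ht : 1 ≤ t) (hnt : 2 * t + 2 ≤ n) :
    cfcNum T = n - t ↔ T.maxDegree = n - t := by
  have hle := hT.maxDegree_le_cfcNum
  constructor
  · intro h
    by_contra hne
    have := hT.cfcNum_le (m := n - t - 1) (by omega) (by omega)
    omega
  · intro h
    have := hT.cfcNum_le (m := n - t) h.le (by omega)
    omega
end

section
/- Let T be a tree on n vertices, and let t be a natural number with t ≥ 1 and n ≥ 2t + 2. If cfc(T) = n − t, then the maximum degree Δ(T) = n − t. -/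
open SimpleGraph

/-- `c` admits a conflict-free path of `G` from `u` to `v`. -/
def HasCFPath {V : Type*} (G : SimpleGraph V) (c : Sym2 V → ℕ) (u v : V) : Prop :=
  ∃ p : G.Path u v, ∃ e ∈ (p.1).edges, ∀ e' ∈ (p.1).edges, c e' = c e → e' = e

theorem HasCFPath.symm {V : Type*} {G : SimpleGraph V} {c : Sym2 V → ℕ} {u v : V}
    (h : HasCFPath G c u v) : HasCFPath G c v u := by
  obtain ⟨p, e, he, hu⟩ := h
  refine ⟨p.reverse, e, ?_, ?_⟩ <;> simpa using ‹_›

/-- A conflict-free coloring of `G` with two vertices `a`, `b` removed extends to `G` with one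
extra color, provided `a` and `b` have distinct neighbors outside `{a, b}`. -/
theorem IsCFCColoring.extend_two {V : Type*} {G : SimpleGraph V} {a b a' b' : V} {k : ℕ}
    (hab : a ≠ b) (ha : G.Adj a a') (hb : G.Adj b b') (hne : a' ≠ b') (ha' : a' ≠ b)
    (hb' : b' ≠ a) {c : Sym2 ({a, b}ᶜ : Set V) → ℕ}
    (hc : ∀ e ∈ (G.induce ({a, b}ᶜ : Set V)).edgeSet, c e < k)
    (h : IsCFCColoring (G.induce ({a, b}ᶜ : Set V)) c) :
    ∃ d : Sym2 V → ℕ, (∀ e ∈ G.edgeSet, d e < k + 1) ∧ IsCFCColoring G d := by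
  classical
  have haS : a' ∈ ({a, b}ᶜ : Set V) := by simp [ha', ha.ne']
  have hbS : b' ∈ ({a, b}ᶜ : Set V) := by simp [hb', hb.ne']
  let r : V → ({a, b}ᶜ : Set V) := fun v => if hv : v ∈ ({a, b}ᶜ : Set V) then ⟨v, hv⟩ else ⟨a', haS⟩
  have hr : ∀ v : ({a, b}ᶜ : Set V), r v = v := fun v => by
    simp only [r]; rw [dif_pos v.2]
  let d : Sym2 V → ℕ := fun e => if a ∈ e ∨ b ∈ e then k else c (e.map r)
  have hdk : ∀ e, (a ∈ e ∨ b ∈ e) → d e = k := fun e he => if_pos he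
  have hdS : ∀ e : Sym2 ({a, b}ᶜ : Set V), d (e.map Subtype.val) = c e := by
    intro e
    have h1 : ¬ (a ∈ e.map Subtype.val ∨ b ∈ e.map Subtype.val) := by
      rintro (h | h)
      all_goals
        obtain ⟨⟨x, hx⟩, -, hxe⟩ := Sym2.mem_map.1 h
        simp_all
    have h2 : (e.map Subtype.val).map r = e := by
      rw [Sym2.map_map]
      have : r ∘ Subtype.val = id := funext hr
      rw [this, Sym2.map_id, id]
    simp only [d]
    rw [if_neg h1, h2]
  -- conflict-free paths avoiding `a` and `b`
  have hlift : ∀ u v : ({a, b}ᶜ : Set V), u ≠ v → ∃ p : G.Walk u.1 v.1, p.IsPath ∧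
      (∀ x ∈ p.support, x ≠ a ∧ x ≠ b) ∧ (∀ e ∈ p.edges, d e < k) ∧
      ∃ e ∈ p.edges, ∀ e' ∈ p.edges, d e' = d e → e' = e := by
    intro u v huv
    obtain ⟨p, e, he, hu⟩ := h u v huv
    obtain ⟨q, hq, hqs, hqe⟩ : ∃ q : G.Walk u.1 v.1, q.IsPath ∧
        q.support = p.1.support.map Subtype.val ∧ q.edges = p.1.edges.map (Sym2.map Subtype.val) :=
      ⟨p.1.map (Embedding.induce _).toHom, p.2.map Subtype.val_injective,
        Walk.support_map _ _, Walk.edges_map _ _⟩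
    refine ⟨q, hq, ?_, ?_, ?_⟩
    · intro x hx
      rw [hqs, List.mem_map] at hx
      obtain ⟨⟨y, hy⟩, -, rfl⟩ := hx
      simpa using hy
    · intro e he
      rw [hqe, List.mem_map] at he
      obtain ⟨e, he, rfl⟩ := he
      exact (hdS e).trans_lt (hc e (p.1.edges_subset_edgeSet he))
    · refine ⟨e.map Subtype.val, ?_, ?_⟩
      · rw [hqe, List.mem_map]
        exact ⟨e, he, rfl⟩
      · intro e' he'
        rw [hqe, List.mem_map] at he'
        obtain ⟨e', he', rfl⟩ := he'
        intro hd
        rw [hdS, hdS] at hd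
        rw [hu e' he' hd]
  have hend : ∀ x x' : V, (x = a ∨ x = b) → G.Adj x x' → x' ∈ ({a, b}ᶜ : Set V) →
      ∀ v ∈ ({a, b}ᶜ : Set V), HasCFPath G d x v := by
    intro x x' hx hadj hx' v hv
    obtain ⟨p, hp, hps, hpk⟩ : ∃ p : G.Walk x' v, p.IsPath ∧
        (∀ x ∈ p.support, x ≠ a ∧ x ≠ b) ∧ (∀ e ∈ p.edges, d e < k) := by
      by_cases hxv : x' = v
      · subst hxv
        exact ⟨.nil, .nil, by simpa using hx', by simp⟩
      · obtain ⟨p, h1, h2, h3, -⟩ := hlift ⟨x', hx'⟩ ⟨v, hv⟩ (by simpa using hxv)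
        exact ⟨p, h1, h2, h3⟩
    have hxp : x ∉ p.support := fun h => by
      have := hps x h
      tauto
    have hdx : d s(x, x') = k := hdk _ (by rcases hx with rfl | rfl <;> simp)
    refine ⟨⟨.cons hadj p, hp.cons hxp⟩, s(x, x'), by simp, ?_⟩
    intro e' he' hd
    rw [Walk.edges_cons, List.mem_cons] at he'
    rcases he' with he' | he'
    · exact he'
    · have := hpk e' he'
      omega
  have hends : HasCFPath G d a b := by
    obtain ⟨p, hp, hps, hpk, e, he, hu⟩ := hlift ⟨a', haS⟩ ⟨b', hbS⟩ (by simpa using hne)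
    have hq : (p.concat hb.symm).IsPath := hp.concat (fun h => (hps b h).2 rfl) _
    have haq : a ∉ (p.concat hb.symm).support := by
      rw [Walk.support_concat]
      simp only [List.mem_append, List.mem_singleton, not_or]
      exact ⟨fun h => (hps a h).1 rfl, hab⟩
    refine ⟨⟨.cons ha (p.concat hb.symm), hq.cons haq⟩, e, ?_, ?_⟩
    · simp [Walk.edges_concat, he]
    · intro e' he' hd
      have hlt := hpk e he
      simp only [Walk.edges_cons, Walk.edges_concat, List.concat_eq_append, List.mem_cons,
        List.mem_append, List.not_mem_nil, or_false] at he'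
      rcases he' with rfl | he' | rfl
      · have := hdk s(a, a') (by simp)
        omega
      · exact hu e' he' hd
      · have := hdk s(b', b) (by simp)
        omega
  refine ⟨d, ?_, ?_⟩
  · intro e he
    by_cases hm : a ∈ e ∨ b ∈ e
    · rw [hdk e hm]; omega
    · induction e with
      | _ x y =>
        have hx : x ∈ ({a, b}ᶜ : Set V) := by
          simp only [Sym2.mem_iff] at hm
          simp only [Set.mem_compl_iff, Set.mem_insert_iff, Set.mem_singleton_iff]
          grind
        have hy : y ∈ ({a, b}ᶜ : Set V) := by
          simp only [Sym2.mem_iff] at hm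
          simp only [Set.mem_compl_iff, Set.mem_insert_iff, Set.mem_singleton_iff]
          grind
        have h1 := hdS s(⟨x, hx⟩, ⟨y, hy⟩)
        have h2 := hc s(⟨x, hx⟩, ⟨y, hy⟩) he
        rw [Sym2.map_mk] at h1
        exact (h1.trans_lt h2).trans (Nat.lt_succ_self k)
  · intro u v huv
    change HasCFPath G d u v
    by_cases hu : u ∈ ({a, b}ᶜ : Set V) <;> by_cases hv : v ∈ ({a, b}ᶜ : Set V)
    · obtain ⟨p, hp, -, -, he⟩ := hlift ⟨u, hu⟩ ⟨v, hv⟩ (by simpa using huv)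
      exact ⟨⟨p, hp⟩, he⟩
    · rw [Set.notMem_compl_iff] at hv
      rcases hv with rfl | rfl
      · exact (hend _ _ (.inl rfl) ha haS u hu).symm
      · exact (hend _ _ (.inr rfl) hb hbS u hu).symm
    · rw [Set.notMem_compl_iff] at hu
      rcases hu with rfl | rfl
      · exact hend _ _ (.inl rfl) ha haS v hv
      · exact hend _ _ (.inr rfl) hb hbS v hv
    · rw [Set.notMem_compl_iff] at hu hv
      rcases hu with rfl | rfl <;> rcases hv with rfl | rfl
      · exact absurd rfl huv
      · exact hends
      · exact hends.symm
      · exact absurd rfl huv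

/-- Coloring all edges differently is conflict-free. -/
theorem exists_isCFCColoring_of_card_edgeFinset_le {V : Type*} {G : SimpleGraph V}
    [Fintype G.edgeSet] (hG : G.Connected) {k : ℕ} (hk : G.edgeFinset.card ≤ k) :
    ∃ c : Sym2 V → ℕ, (∀ e ∈ G.edgeSet, c e < k) ∧ IsCFCColoring G c := by
  classical
  let f := G.edgeFinset.equivFin
  let c : Sym2 V → ℕ := fun e => if he : e ∈ G.edgeFinset then f ⟨e, he⟩ else 0
  have hcf : ∀ e (he : e ∈ G.edgeFinset), c e = f ⟨e, he⟩ := fun e he => dif_pos he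
  refine ⟨c, ?_, ?_⟩
  · intro e he
    rw [hcf e (mem_edgeFinset.2 he)]
    exact (Fin.is_lt _).trans_le hk
  · intro u v huv
    obtain ⟨p, hp⟩ := hG.exists_isPath u v
    have hne : p.edges ≠ [] := by
      intro h
      exact huv (Walk.edges_eq_nil.1 h).eq
    obtain ⟨e, he⟩ := List.exists_mem_of_ne_nil _ hne
    refine ⟨⟨p, hp⟩, e, he, fun e' he' hc => ?_⟩
    rw [hcf e (mem_edgeFinset.2 (p.edges_subset_edgeSet he)),
      hcf e' (mem_edgeFinset.2 (p.edges_subset_edgeSet he'))] at hc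
    simpa using f.injective (Fin.ext hc)

theorem SimpleGraph.IsTree.exists_degree_eq_one_not_adj {V : Type*} [Fintype V]
    {G : SimpleGraph V} [DecidableRel G.Adj] (hG : G.IsTree) {x y : V} (hyx : y ≠ x)
    (hxy : ¬ G.Adj x y) : ∃ b, b ≠ x ∧ ¬ G.Adj x b ∧ G.degree b = 1 := by
  have : Nonempty V := ⟨x⟩
  obtain ⟨b, hb⟩ := Finite.exists_max (G.dist x)
  have hy : 2 ≤ G.dist x y := by
    have h0 := (hG.connected.dist_eq_zero_iff (u := x) (v := y)).not.2 hyx.symm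
    have h1 := (dist_eq_one_iff_adj (G := G) (u := x) (v := y)).not.2 hxy
    omega
  have hb2 : 2 ≤ G.dist x b := hy.trans (hb y)
  obtain ⟨p, hp, hlen⟩ := (hG.connected x b).exists_path_of_dist
  have hbx : b ≠ x := by
    rintro rfl
    simp at hb2
  refine ⟨b, hbx, fun h => ?_, ?_⟩
  · have := dist_eq_one_iff_adj.2 h
    omega
  · have hnil : ¬ p.Nil := fun h => hbx h.eq.symm
    rw [degree_eq_one_iff_existsUnique_adj]
    refine ⟨_, (p.adj_penultimate hnil).symm, fun w hadj => ?_⟩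
    apply hG.isAcyclic.eq_penultimate_of_adj_end hp hadj
    by_contra hw
    have hq := hp.concat hw hadj
    obtain ⟨q, hq', hql⟩ := (hG.connected x w).exists_path_of_dist
    have := (hG.existsUnique_path x w).unique hq hq'
    have h2 := congrArg Walk.length this
    rw [Walk.length_concat] at h2
    have := hb w
    omega

theorem SimpleGraph.degree_induce_lt {V : Type*} {G : SimpleGraph V} {s : Set V} {v : s} {w : V}
    [Fintype (G.neighborSet v)] [Fintype ((G.induce s).neighborSet v)]
    (hw : w ∉ s) (hvw : G.Adj v w) : (G.induce s).degree v < G.degree v := by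
  classical
  rw [← card_neighborFinset_eq_degree, ← card_neighborFinset_eq_degree,
    ← Finset.card_map (Function.Embedding.subtype s)]
  apply Finset.card_lt_card
  rw [Finset.ssubset_iff_of_subset]
  · refine ⟨w, by simpa using hvw, fun h => ?_⟩
    obtain ⟨z, -, rfl⟩ := Finset.mem_map.1 h
    exact hw z.2
  · intro y hy
    simp only [Finset.mem_map, mem_neighborFinset] at hy
    obtain ⟨z, hz, rfl⟩ := hy
    rwa [mem_neighborFinset]

theorem SimpleGraph.degree_induce_le_degree {V : Type*} {G : SimpleGraph V} {s : Set V} {v : s}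
    [Fintype (G.neighborSet v)] [Fintype ((G.induce s).neighborSet v)] :
    (G.induce s).degree v ≤ G.degree v := by
  classical
  rw [← card_neighborFinset_eq_degree, ← card_neighborFinset_eq_degree,
    ← Finset.card_map (Function.Embedding.subtype s)]
  apply Finset.card_le_card
  intro y hy
  simp only [Finset.mem_map, mem_neighborFinset] at hy
  obtain ⟨z, hz, rfl⟩ := hy
  rwa [mem_neighborFinset]

theorem SimpleGraph.IsTree.sum_degree_sub_one {V : Type*} [Fintype V] [Nontrivial V]
    {G : SimpleGraph V} [DecidableRel G.Adj] (hG : G.IsTree) :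
    ∑ v, (G.degree v - 1) + 2 = Fintype.card V := by
  classical
  have h1 := G.sum_degrees_eq_twice_card_edges
  have h2 := hG.card_edgeFinset
  have h3 : ∑ v, (G.degree v - 1) + ∑ v : V, 1 = ∑ v, G.degree v := by
    rw [← Finset.sum_add_distrib]
    refine Finset.sum_congr rfl fun v _ => ?_
    have := hG.connected.preconnected.degree_pos_of_nontrivial v
    omega
  simp only [Finset.sum_const, Finset.card_univ, smul_eq_mul, mul_one] at h3
  omega

theorem SimpleGraph.IsTree.exists_leaf_adj {V : Type*} [Fintype V] [Nontrivial V]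
    {G : SimpleGraph V} [DecidableRel G.Adj] (hG : G.IsTree) {x : V}
    (hx : Fintype.card V ≤ 2 * G.degree x) : ∃ a, G.Adj x a ∧ G.degree a = 1 := by
  classical
  by_contra! hcon
  have hs := hG.sum_degree_sub_one
  have h1 : ∑ v ∈ insert x (G.neighborFinset x), (G.degree v - 1) ≤ ∑ v, (G.degree v - 1) :=
    Finset.sum_le_sum_of_subset (Finset.subset_univ _)
  rw [Finset.sum_insert (by simp)] at h1
  have h2 : (G.neighborFinset x).card * 1 ≤ ∑ v ∈ G.neighborFinset x, (G.degree v - 1) := by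
    rw [← smul_eq_mul]
    refine Finset.card_nsmul_le_sum _ _ _ fun v hv => ?_
    rw [mem_neighborFinset] at hv
    have := hv.degree_pos_right
    have := hcon v hv
    omega
  rw [card_neighborFinset_eq_degree] at h2
  omega

/-- A tree which is not a star has two leaves with distinct neighbors, whose removal decreases
the degree of each vertex of degree at least half the order. -/
theorem SimpleGraph.IsTree.exists_two_leaves {V : Type*} [Fintype V] [Nontrivial V]
    {G : SimpleGraph V} [DecidableRel G.Adj] (hG : G.IsTree) {m : ℕ}
    (hcard : Fintype.card V ≤ 2 * m) (hm : m + 2 ≤ Fintype.card V)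
    (hdeg : ∀ v, G.degree v ≤ m) :
    ∃ a b a' b', G.degree a = 1 ∧ G.degree b = 1 ∧ G.Adj a a' ∧ G.Adj b b' ∧ a' ≠ b' ∧
      ∀ v, G.degree v = m → v = a' ∨ v = b' := by
  classical
  by_cases h2 : ∃ x y, x ≠ y ∧ G.degree x = m ∧ G.degree y = m
  · obtain ⟨x, y, hxy, hx, hy⟩ := h2
    obtain ⟨a, hxa, ha⟩ := hG.exists_leaf_adj (x := x) (by omega)
    obtain ⟨b, hyb, hb⟩ := hG.exists_leaf_adj (x := y) (by omega)
    refine ⟨a, b, x, y, ha, hb, hxa.symm, hyb.symm, hxy, fun v hv => ?_⟩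
    by_contra! hne
    have h1 : ∑ v ∈ {x, y, v}, (G.degree v - 1) ≤ ∑ v, (G.degree v - 1) :=
      Finset.sum_le_sum_of_subset (Finset.subset_univ _)
    rw [Finset.sum_insert (by simp [hxy, hne.1.symm]), Finset.sum_insert (by simp [hne.2.symm]),
      Finset.sum_singleton] at h1
    have := hG.sum_degree_sub_one
    omega
  · obtain ⟨x, a, hxa, ha, hx⟩ : ∃ x a, G.Adj x a ∧ G.degree a = 1 ∧
        ∀ v, G.degree v = m → v = x := by
      by_cases h1 : ∃ x, G.degree x = m
      · obtain ⟨x, hx⟩ := h1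
        obtain ⟨a, hxa, ha⟩ := hG.exists_leaf_adj (x := x) (by omega)
        refine ⟨x, a, hxa, ha, fun v hv => ?_⟩
        by_contra hne
        exact h2 ⟨v, x, hne, hv, hx⟩
      · obtain ⟨a, ha⟩ := hG.exists_vert_degree_one_of_nontrivial
        obtain ⟨x, hx, -⟩ := degree_eq_one_iff_existsUnique_adj.1 ha
        exact ⟨x, a, hx.symm, ha, fun v hv => (h1 ⟨v, hv⟩).elim⟩
    obtain ⟨y, hy⟩ : ∃ y, y ∉ insert x (G.neighborFinset x) := by
      by_contra! hall
      have h3 : Fintype.card V ≤ (insert x (G.neighborFinset x)).card :=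
        Finset.card_le_card fun v _ => hall v
      have h4 := Finset.card_insert_le x (G.neighborFinset x)
      rw [card_neighborFinset_eq_degree] at h4
      have := hdeg x
      omega
    rw [Finset.mem_insert, mem_neighborFinset, not_or] at hy
    obtain ⟨b, hbx, hxb, hb⟩ := hG.exists_degree_eq_one_not_adj hy.1 hy.2
    obtain ⟨b', hb', -⟩ := degree_eq_one_iff_existsUnique_adj.1 hb
    refine ⟨a, b, x, b', ha, hb, hxa.symm, hb', ?_, fun v hv => .inl (hx v hv)⟩
    rintro rfl
    exact hxb hb'.symm

theorem SimpleGraph.IsTree.exists_isCFCColoring {m : ℕ} : ∀ {V : Type*} [Fintype V]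
    {G : SimpleGraph V} [DecidableRel G.Adj], G.IsTree → Fintype.card V ≤ 2 * m →
    (∀ v, G.degree v ≤ m) →
    ∃ c : Sym2 V → ℕ, (∀ e ∈ G.edgeSet, c e < m) ∧ IsCFCColoring G c := by
  induction m with
  | zero =>
    intro V _ G _ hG hcard
    have := hG.connected.nonempty
    have := Fintype.card_pos (α := V)
    omega
  | succ m ih =>
    intro V _ G _ hG hcard hdeg
    classical
    by_cases hsmall : Fintype.card V ≤ m + 2
    · refine exists_isCFCColoring_of_card_edgeFinset_le hG.connected ?_
      have := hG.card_edgeFinset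
      omega
    have : Nontrivial V := Fintype.one_lt_card_iff_nontrivial.1 (by omega)
    obtain ⟨a, b, a', b', ha, hb, haa, hbb, hne, hmax⟩ :=
      hG.exists_two_leaves hcard (by omega) hdeg
    have huniq : ∀ {a u w : V}, G.degree a = 1 → G.Adj a u → G.Adj a w → u = w := by
      intro a u w ha hu hw
      exact (degree_eq_one_iff_existsUnique_adj.1 ha).unique hu hw
    have hab : a ≠ b := by
      rintro rfl
      exact hne (huniq ha haa hbb)
    have hconn : (G.induce ({a, b}ᶜ : Set V)).Preconnected := by
      refine hG.connected.preconnected.induce_of_degree_eq_one fun v hv => ?_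
      rw [Set.notMem_compl_iff] at hv
      intro u hu w hw
      rcases hv with rfl | rfl
      · exact huniq ha hu hw
      · exact huniq hb hu hw
    have hnadj : ¬ G.Adj a b := by
      intro hadj
      obtain ⟨y, hy⟩ : ∃ y, y ∉ ({a, b} : Finset V) := by
        by_contra! hall
        have h3 : Fintype.card V ≤ ({a, b} : Finset V).card :=
          Finset.card_le_card fun v _ => hall v
        have h4 := Finset.card_le_two (a := a) (b := b)
        omega
      simp only [Finset.mem_insert, Finset.mem_singleton, not_or] at hy
      have hpre : (G.induce ({b}ᶜ : Set V)).Preconnected :=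
        hG.connected.preconnected.induce_of_degree_eq_one fun v hv u hu w hw => by
          rw [Set.notMem_compl_iff, Set.mem_singleton_iff] at hv
          subst hv
          exact huniq hb hu hw
      obtain ⟨w, hw⟩ := (hpre ⟨a, by simpa using hab⟩
        ⟨y, by simpa using hy.2⟩).nonempty_neighborSet_left (by simpa using Ne.symm hy.1)
      exact w.2 (huniq ha hw hadj)
    have ha'b : a' ≠ b := by
      rintro rfl
      exact hnadj haa
    have hb'a : b' ≠ a := by
      rintro rfl
      exact hnadj hbb.symm
    have hcardS : Fintype.card ({a, b}ᶜ : Set V) + 2 = Fintype.card V := by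
      have h1 := Fintype.card_compl_set ({a, b} : Set V)
      have h2 : Fintype.card ({a, b} : Set V) = 2 := by
        rw [← Nat.card_eq_fintype_card, Nat.card_coe_set_eq, Set.ncard_pair hab]
      omega
    have hT : (G.induce ({a, b}ᶜ : Set V)).IsTree :=
      ⟨(connected_iff _).2 ⟨hconn, ⟨a', by simp [ha'b, haa.ne']⟩⟩, hG.isAcyclic.induce _⟩
    obtain ⟨c, hc, hcf⟩ := ih hT (by omega) fun v => by
      by_cases hv : G.degree v.1 = m + 1
      · rcases hmax _ hv with h | h
        · have := degree_induce_lt (v := v) (w := a) (s := ({a, b}ᶜ : Set V)) (G := G) (by simp)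
            (h ▸ haa.symm)
          omega
        · have := degree_induce_lt (v := v) (w := b) (s := ({a, b}ᶜ : Set V)) (G := G) (by simp)
            (h ▸ hbb.symm)
          omega
      · have h1 := hdeg v.1
        have h2 := degree_induce_le_degree (v := v) (G := G)
        omega
    exact hcf.extend_two hab haa hbb hne ha'b hb'a hc

/-- The edges at a vertex receive distinct colors in a conflict-free coloring of a tree. -/
theorem IsCFCColoring.degree_le {V : Type*} {G : SimpleGraph V} (hG : G.IsAcyclic)
    {c : Sym2 V → ℕ} {k : ℕ} (hc : ∀ e ∈ G.edgeSet, c e < k) (h : IsCFCColoring G c) (x : V)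
    [Fintype (G.neighborSet x)] : G.degree x ≤ k := by
  rw [← card_neighborFinset_eq_degree, ← Finset.card_range k]
  refine Finset.card_le_card_of_injOn (fun w => c s(x, w)) ?_ ?_
  · intro w hw
    simp only [Finset.mem_coe, mem_neighborFinset] at hw
    simpa using hc s(x, w) hw
  · intro u hu w hw heq
    simp only [Finset.mem_coe, mem_neighborFinset] at hu hw
    by_contra hne
    obtain ⟨p, e, he, huniq⟩ := h u w hne
    let q : G.Walk u w := .cons hu.symm (.cons hw .nil)
    have hq : q.IsPath := by simp [q, Walk.cons_isPath_iff, hu.ne', hw.ne, hne]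
    have hpq : p = ⟨q, hq⟩ := (hG.subsingleton_path u w).elim _ _
    subst hpq
    have hse : s(u, x) = s(x, u) := Sym2.eq_swap
    simp only [q, Walk.edges_cons, Walk.edges_nil, List.mem_cons, List.not_mem_nil, or_false,
      hse] at he huniq
    have hbad : s(x, u) ≠ s(x, w) := fun h => hne (Sym2.congr_right.1 h)
    rcases he with rfl | rfl
    · exact hbad (huniq _ (.inr rfl) heq.symm).symm
    · exact hbad (huniq _ (.inl rfl) heq)

/-- For a tree T on n vertices with t ≥ 1 and n ≥ 2t + 2:
if cfc(T) = n − t, then Δ(T) = n − t. -/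
theorem maxDegree_of_cfcNum_tree {V : Type*} [Fintype V] (T : SimpleGraph V)
    [DecidableRel T.Adj] (hT : T.IsTree) (n t : ℕ) (hn : Fintype.card V = n)
    (ht : 1 ≤ t) (hnt : 2 * t + 2 ≤ n)
    (hcfc : cfcNum T = n - t) :
    T.maxDegree = n - t := by
  apply le_antisymm
  · have hne : {k | ∃ c : Sym2 V → ℕ, (∀ e ∈ T.edgeSet, c e < k) ∧ IsCFCColoring T c}.Nonempty :=
      Nat.nonempty_of_pos_sInf (by rw [cfcNum] at hcfc; omega)
    obtain ⟨c, hc, hcf⟩ := Nat.sInf_mem hne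
    rw [← hcfc]
    exact T.maxDegree_le_of_forall_degree_le _ fun v => hcf.degree_le hT.isAcyclic hc v
  · by_contra! hlt
    have h1 : cfcNum T ≤ n - t - 1 := Nat.sInf_le <| hT.exists_isCFCColoring (by omega) fun v => by
      have := T.degree_le_maxDegree v
      omega
    omega
end

section
/- Let G be a connected simple graph on n ≥ 2 vertices. Then cfc(G) = n − 1 if and only if G is the star K_{1,n−1}. -/
open SimpleGraph

/-- Any finite set can be numbered injectively by the naturals below its cardinality. -/
lemma Finset.exists_injOn_lt_card {α : Type*} (s : Finset α) :
    ∃ g : α → ℕ, Set.InjOn g s ∧ ∀ x ∈ s, g x < s.card := by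
  classical
  refine ⟨fun x => if h : x ∈ s then (s.equivFin ⟨x, h⟩ : ℕ) else 0, ?_, ?_⟩
  · intro x hx y hy hxy
    have hx' : x ∈ s := hx
    have hy' : y ∈ s := hy
    simp only [hx', hy', dif_pos] at hxy
    simpa using s.equivFin.injective (Fin.ext hxy)
  · intro x hx
    simp [hx]

section

variable {V : Type*} {G : SimpleGraph V}

/-- In a connected graph, an edge-coloring with pairwise distinct colors is conflict-free. -/
lemma isCFCColoring_of_injOn (hG : G.Connected) {c : Sym2 V → ℕ}
    (hc : Set.InjOn c G.edgeSet) : IsCFCColoring G c := by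
  classical
  intro u v huv
  obtain ⟨w⟩ := hG.preconnected u v
  refine ⟨w.toPath, ?_⟩
  obtain ⟨e, he⟩ : ∃ e, e ∈ (w.toPath.1).edges := by
    refine List.exists_mem_of_ne_nil _ fun h => huv ?_
    exact (SimpleGraph.Walk.edges_eq_nil.mp h).eq
  exact ⟨e, he, fun e' he' h =>
    hc (Walk.edges_subset_edgeSet _ he') (Walk.edges_subset_edgeSet _ he) h⟩

/-- A path between non-adjacent distinct vertices all of whose edges lie in `{e, f}`
consists of `e` and `f`. -/
lemma exists_middle_of_edges_subset_pair {T : SimpleGraph V} {u v : V} {p : T.Walk u v}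
    (hp : p.IsPath) (huv : u ≠ v) (hadj : ¬ T.Adj u v) {e f : Sym2 V}
    (h : ∀ x ∈ p.edges, x = e ∨ x = f) :
    ∃ m, (e = s(u, m) ∧ f = s(m, v)) ∨ (f = s(u, m) ∧ e = s(m, v)) := by
  have hnd := hp.isTrail.edges_nodup
  match p with
  | .nil => exact absurd rfl huv
  | .cons h₁ .nil => exact absurd h₁ hadj
  | .cons (v := m) h₁ (.cons h₂ .nil) =>
    refine ⟨m, ?_⟩
    simp only [Walk.edges_cons, Walk.edges_nil, List.nodup_cons, List.mem_cons,
      forall_eq_or_imp] at hnd h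
    grind
  | .cons h₁ (.cons h₂ (.cons h₃ q)) =>
    simp only [Walk.edges_cons, List.nodup_cons, List.mem_cons,
      forall_eq_or_imp] at hnd h
    grind

/-- Two edges `e ≠ f` of a spanning tree may share a color if they do not form a path
with endpoints non-adjacent in `G`; this saves a color. -/
lemma cfcNum_le_card_sub_two [Fintype V] {T : SimpleGraph V} (hT : T.IsTree) (hTG : T ≤ G)
    {e f : Sym2 V} (he : e ∈ T.edgeSet) (hf : f ∈ T.edgeSet) (hef : e ≠ f)
    (h : ∀ u m v, e = s(u, m) → f = s(m, v) → G.Adj u v) :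
    cfcNum G ≤ Fintype.card V - 2 := by
  classical
  have hcard := hT.card_edgeFinset
  have hfT : f ∈ T.edgeFinset := by simpa using hf
  obtain ⟨g, hginj, hglt⟩ := (T.edgeFinset.erase f).exists_injOn_lt_card
  have hes : e ∈ T.edgeFinset.erase f := by simpa [hef] using he
  have hsc : (T.edgeFinset.erase f).card = Fintype.card V - 2 := by
    rw [Finset.card_erase_of_mem hfT]; omega
  rw [hsc] at hglt
  set c : Sym2 V → ℕ := fun x => if x ∈ T.edgeFinset.erase f then g x else g e with hcdef
  have hc : ∀ x ∈ T.edgeSet, ∀ y ∈ T.edgeSet, c x = c y →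
      x = y ∨ (x = e ∧ y = f) ∨ (x = f ∧ y = e) := by
    have key : ∀ x ∈ T.edgeSet, x ≠ f → x ∈ T.edgeFinset.erase f := fun x hx hxf => by
      simpa [hxf] using hx
    have hcf : c f = g e := by simp [hcdef]
    have hcs : ∀ x ∈ T.edgeFinset.erase f, c x = g x := fun x hx => if_pos hx
    intro x hx y hy hxy
    by_cases hxf : x = f <;> by_cases hyf : y = f
    · exact Or.inl (hxf.trans hyf.symm)
    · rw [hxf, hcf, hcs y (key y hy hyf)] at hxy
      exact Or.inr (Or.inr ⟨hxf, (hginj hes (key y hy hyf) hxy).symm⟩)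
    · rw [hyf, hcf, hcs x (key x hx hxf)] at hxy
      exact Or.inr (Or.inl ⟨hginj (key x hx hxf) hes hxy, hyf⟩)
    · rw [hcs x (key x hx hxf), hcs y (key y hy hyf)] at hxy
      exact Or.inl (hginj (key x hx hxf) (key y hy hyf) hxy)
  refine Nat.sInf_le ⟨c, fun x _ => ?_, fun u v huv => ?_⟩
  · simp only [hcdef]
    split_ifs with hx
    exacts [hglt x hx, hglt e hes]
  by_cases hadj : G.Adj u v
  · refine ⟨Path.singleton hadj, s(u, v), ?_, ?_⟩ <;> simp [Path.singleton]
  obtain ⟨w⟩ := hT.connected.preconnected u v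
  obtain ⟨p, hp⟩ := w.toPath
  refine ⟨⟨p.mapLe hTG, hp.mapLe hTG⟩, ?_⟩
  have hedges : (p.mapLe hTG).edges = p.edges := by simp
  simp only [hedges]
  by_cases hx : ∃ x ∈ p.edges, x ≠ e ∧ x ≠ f
  · obtain ⟨x, hxp, hxe, hxf⟩ := hx
    refine ⟨x, hxp, fun y hyp hy => ?_⟩
    have := hc y (Walk.edges_subset_edgeSet _ hyp) x (Walk.edges_subset_edgeSet _ hxp) hy
    tauto
  · push Not at hx
    obtain ⟨m, ⟨h₁, h₂⟩ | ⟨h₁, h₂⟩⟩ := exists_middle_of_edges_subset_pair hp huv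
      (fun h => hadj (hTG h)) fun x hxp => or_iff_not_imp_left.mpr (hx x hxp)
    · exact absurd (h u m v h₁ h₂) hadj
    · exact absurd (h v m u (h₂.trans Sym2.eq_swap) (h₁.trans Sym2.eq_swap)).symm hadj

/-- If any two edges of a connected spanning subgraph form a path whose endpoints are not
adjacent in `G`, then `G` is a star. -/
lemma exists_center_of_forall_edges_path [Nontrivial V] {T : SimpleGraph V}
    (hT : T.Connected) (hTG : T ≤ G)
    (h : ∀ e ∈ T.edgeSet, ∀ f ∈ T.edgeSet, e ≠ f →
      ∃ u m v, e = s(u, m) ∧ f = s(m, v) ∧ ¬ G.Adj u v) :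
    ∃ v : V, ∀ a b : V, G.Adj a b ↔ ((a = v ∨ b = v) ∧ a ≠ b) := by
  obtain ⟨m, hm⟩ : ∃ m, ∀ e ∈ T.edgeSet, m ∈ e := by
    obtain ⟨a⟩ := hT.nonempty
    obtain ⟨b, hab⟩ := hT.preconnected.exists_adj_of_nontrivial a
    by_cases hf : ∃ f ∈ T.edgeSet, s(a, b) ≠ f
    · obtain ⟨f, hfT, hne⟩ := hf
      obtain ⟨u, m, v, h₁, h₂, huv⟩ := h _ hab f hfT hne
      refine ⟨m, fun g hg => ?_⟩
      by_contra hmg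
      have hg₁ : s(u, m) ≠ g := fun h => hmg (by simp [← h])
      have hg₂ : s(m, v) ≠ g := fun h => hmg (by simp [← h])
      obtain ⟨_, x, _, e₁, e₁', -⟩ := h _ (h₁ ▸ hab) g hg hg₁
      obtain ⟨_, y, _, e₂, e₂', -⟩ := h _ (h₂ ▸ hfT) g hg hg₂
      have hxg : x ∈ g := by simp [e₁']
      have hyg : y ∈ g := by simp [e₂']
      have hx : x ∈ s(u, m) := by simp [e₁]
      have hy : y ∈ s(m, v) := by simp [e₂]
      rw [Sym2.mem_iff] at hx hy
      have hxu : x = u := hx.resolve_right fun h => hmg (h ▸ hxg)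
      have hyv : y = v := hy.resolve_left fun h => hmg (h ▸ hyg)
      subst hxu hyv
      have hxy : x ≠ y := by
        rintro rfl
        exact hne (h₁.trans (Sym2.eq_swap.trans h₂.symm))
      have hgxy : g = s(x, y) := (Sym2.mem_and_mem_iff hxy).mp ⟨hxg, hyg⟩
      exact huv (hTG (hgxy ▸ hg : s(x, y) ∈ T.edgeSet))
    · push Not at hf
      exact ⟨a, fun e he => by simp [← hf e he]⟩
  have hadj : ∀ w, w ≠ m → T.Adj m w := by
    intro w hw
    obtain ⟨x, hx⟩ := hT.preconnected.exists_adj_of_nontrivial w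
    have := Sym2.mem_iff.mp (hm s(w, x) hx)
    obtain rfl := this.resolve_left hw.symm
    exact hx.symm
  refine ⟨m, fun a b => ⟨fun hab => ⟨?_, hab.ne⟩, ?_⟩⟩
  · by_contra hcon
    push Not at hcon
    obtain ⟨u, x, v, h₁, h₂, huv⟩ := h s(m, a) (hadj a hcon.1) s(m, b) (hadj b hcon.2)
      (fun h => hab.ne (Sym2.congr_right.mp h))
    have := hab.ne
    have hab' := hab.symm
    simp only [Sym2.eq_iff] at h₁ h₂
    grind
  · rintro ⟨rfl | rfl, hne⟩
    · exact hTG (hadj b hne.symm)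
    · exact (hTG (hadj a hne)).symm

/-- In a star with center `v`, a path between two leaves runs through `v`. -/
lemma edges_eq_of_star {v : V} (hv : ∀ a b : V, G.Adj a b ↔ ((a = v ∨ b = v) ∧ a ≠ b))
    {a b : V} (ha : a ≠ v) (hb : b ≠ v) (hab : a ≠ b) {p : G.Walk a b} (hp : p.IsPath) :
    p.edges = [s(v, a), s(v, b)] := by
  match p with
  | .nil => exact absurd rfl hab
  | .cons h₁ .nil => exact absurd ((hv _ _).mp h₁).1 (by tauto)
  | .cons (v := m) h₁ (.cons h₂ .nil) =>
    obtain rfl := ((hv _ _).mp h₁).1.resolve_left ha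
    simp [Sym2.eq_swap]
  | .cons (v := m) h₁ (.cons (v := x) h₂ (.cons (v := y) h₃ q)) =>
    obtain rfl := ((hv _ _).mp h₁).1.resolve_left ha
    obtain rfl := ((hv _ _).mp h₃).1.resolve_left h₂.ne'
    simp [Walk.cons_isPath_iff] at hp

/-- The conflict-free connection number of a star. -/
lemma cfcNum_star [Fintype V] (hG : G.Connected) {v : V}
    (hv : ∀ a b : V, G.Adj a b ↔ ((a = v ∨ b = v) ∧ a ≠ b)) :
    cfcNum G = Fintype.card V - 1 := by
  classical
  have hcard : (Finset.univ.erase v).card = Fintype.card V - 1 := by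
    rw [Finset.card_erase_of_mem (Finset.mem_univ v), Finset.card_univ]
  have hmem : Fintype.card V - 1 ∈
      {k | ∃ c : Sym2 V → ℕ, (∀ e ∈ G.edgeSet, c e < k) ∧ IsCFCColoring G c} := by
    set s := (Finset.univ.erase v).image fun w => s(v, w)
    obtain ⟨g, hginj, hglt⟩ := s.exists_injOn_lt_card
    have hs : G.edgeSet ⊆ s := by
      intro e
      induction e with | _ a b =>
      intro hab
      obtain ⟨rfl | rfl, hne⟩ := (hv a b).mp hab
      · exact Finset.mem_coe.mpr (Finset.mem_image.mpr ⟨b, by simpa using hne.symm, rfl⟩)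
      · exact Finset.mem_coe.mpr
          (Finset.mem_image.mpr ⟨a, by simpa using hne, Sym2.eq_swap⟩)
    refine ⟨g, fun e he => (hglt e (hs he)).trans_le ?_, isCFCColoring_of_injOn hG (hginj.mono hs)⟩
    exact Finset.card_image_le.trans hcard.le
  refine le_antisymm (Nat.sInf_le hmem) (le_csInf ⟨_, hmem⟩ ?_)
  rintro k ⟨c, hck, hc⟩
  rw [← hcard, ← Finset.card_range k]
  refine Finset.card_le_card_of_injOn (fun w => c s(v, w)) ?_ ?_
  · intro w hw
    have hw : w ≠ v := by simpa using hw
    simpa using hck s(v, w) ((hv v w).mpr ⟨Or.inl rfl, hw.symm⟩)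
  · intro a ha b hb hab
    have ha : a ≠ v := by simpa using ha
    have hb : b ≠ v := by simpa using hb
    have hab : c s(v, a) = c s(v, b) := hab
    by_contra hne
    obtain ⟨⟨p, hp⟩, e, he, huniq⟩ := hc a b hne
    simp only [edges_eq_of_star hv ha hb hne hp, List.mem_cons, List.not_mem_nil,
      or_false, forall_eq_or_imp, forall_eq] at he huniq
    refine hne ((Sym2.congr_right (a := v)).mp ?_)
    rcases he with rfl | rfl
    · exact (huniq.2 hab.symm).symm
    · exact huniq.1 hab

end

/-- cfc(G) = n − 1 if and only if G is the star K_{1,n−1}, i.e. some vertex v is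
adjacent to exactly the other n − 1 vertices and there are no other edges. -/
theorem cfcNum_eq_card_sub_one_iff_star {V : Type*} [Fintype V] (G : SimpleGraph V)
    (hG : G.Connected) (n : ℕ) (hn : Fintype.card V = n) (h2 : 2 ≤ n) :
    cfcNum G = n - 1 ↔ ∃ v : V, ∀ a b : V, G.Adj a b ↔ ((a = v ∨ b = v) ∧ a ≠ b) := by
  subst hn
  refine ⟨fun hcfc => ?_, fun ⟨v, hv⟩ => cfcNum_star hG hv⟩
  have : Nontrivial V := Fintype.one_lt_card_iff_nontrivial.mp h2
  obtain ⟨T, hTG, hT⟩ := hG.exists_isTree_le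
  refine exists_center_of_forall_edges_path hT.connected hTG fun e he f hf hef => ?_
  by_contra hcon
  push Not at hcon
  have := cfcNum_le_card_sub_two hT hTG he hf hef hcon
  omega
end

section
/- Let G be a connected simple graph on n ≥ 3 vertices. Then cfc(G) = n − 2 if and only if either G is a tree with maximum degree Δ(G) = n − 2 (necessarily n ≥ 4), or G is isomorphic to one of the following graphs: K_3; K_{1,3}+e (the star K_{1,3} with an added edge joining two leaves, i.e., a triangle with a pendant edge); K_{2,2} (the 4-cycle C_4); K_{2,2}+e (the 4-cycle with an added chord, i.e., K_4 minus an edge); or the path P_5 on 5 vertices. -/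
open SimpleGraph

/-- K_{1,3}+e : the star K_{1,3} with an added edge joining two leaves
(a triangle with a pendant edge), on vertex set Fin 4 with center 0. -/
def starK13PlusEdge : SimpleGraph (Fin 4) :=
  SimpleGraph.fromEdgeSet {s(0, 1), s(0, 2), s(0, 3), s(1, 2)}

/-- K_{2,2}, i.e. the 4-cycle C_4. -/
def cycle4 : SimpleGraph (Fin 4) :=
  SimpleGraph.fromEdgeSet {s(0, 1), s(1, 2), s(2, 3), s(3, 0)}

/-- K_{2,2}+e : the 4-cycle with an added chord, i.e. K_4 minus an edge. -/
def cycle4PlusChord : SimpleGraph (Fin 4) :=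
  SimpleGraph.fromEdgeSet {s(0, 1), s(1, 2), s(2, 3), s(3, 0), s(0, 2)}

/-- `S` is joined by conflict-free paths inside `S`, using colors from `{0, …, k-1}`. -/
def CFCWithin {V : Type*} (G : SimpleGraph V) (S : Set V) (k : ℕ) : Prop :=
  ∃ c : Sym2 V → ℕ, (∀ e, c e < k) ∧ ∀ u ∈ S, ∀ v ∈ S, u ≠ v →
    ∃ p : G.Walk u v, p.IsPath ∧ (∀ x ∈ p.support, x ∈ S) ∧
      ∃ e ∈ p.edges, ∀ e' ∈ p.edges, c e' = c e → e' = e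

theorem CFCWithin.singleton {V : Type*} (G : SimpleGraph V) (v : V) : CFCWithin G {v} 1 :=
  ⟨fun _ => 0, fun _ => zero_lt_one, fun _ ha _ hb hab => (hab (ha.trans hb.symm)).elim⟩

theorem CFCWithin.cfcNum_le {V : Type*} {G : SimpleGraph V} {k : ℕ}
    (h : CFCWithin G Set.univ k) : cfcNum G ≤ k := by
  obtain ⟨c, hc, h⟩ := h
  refine Nat.sInf_le ⟨c, fun e _ => hc e, fun u v huv => ?_⟩
  obtain ⟨p, hp, -, he⟩ := h u trivial v trivial huv
  exact ⟨⟨p, hp⟩, he⟩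

/-- Joining a new vertex to `S` costs at most one new color. -/
theorem CFCWithin.insert {V : Type*} {G : SimpleGraph V} {S : Set V} {k : ℕ}
    (h : CFCWithin G S k) {a v : V} (ha : a ∈ S) (hv : v ∉ S) (hav : G.Adj a v) :
    CFCWithin G (insert v S) (k + 1) := by
  classical
  obtain ⟨c, hc, h⟩ := h
  set c' : Sym2 V → ℕ := fun e => if v ∈ e then k else c e
  have hin : ∀ e, v ∈ e → c' e = k := fun e he => if_pos he
  have hout : ∀ e, v ∉ e → c' e = c e := fun e he => if_neg he
  have key : ∀ u ∈ S, ∃ p : G.Walk u v, p.IsPath ∧ (∀ x ∈ p.support, x ∈ Insert.insert v S) ∧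
      ∃ e ∈ p.edges, ∀ e' ∈ p.edges, c' e' = c' e → e' = e := by
    intro u hu
    obtain ⟨q, hq, hqS⟩ : ∃ q : G.Walk u a, q.IsPath ∧ ∀ x ∈ q.support, x ∈ S := by
      by_cases hua : u = a
      · subst hua
        exact ⟨.nil, .nil, by simpa using hu⟩
      · obtain ⟨q, hq, hqS, -⟩ := h u hu a ha hua
        exact ⟨q, hq, hqS⟩
    have hvq : v ∉ q.support := fun hx => hv (hqS v hx)
    refine ⟨q.concat hav, hq.concat hvq hav, ?_, s(a, v), by simp [Walk.edges_concat], ?_⟩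
    · intro x hx
      rw [Walk.support_concat] at hx
      simp only [List.mem_append, List.mem_singleton] at hx
      exact hx.elim (fun hx => Or.inr (hqS x hx)) Or.inl
    · intro e' he' hce
      rw [Walk.edges_concat] at he'
      simp only [List.concat_eq_append, List.mem_append, List.mem_singleton] at he'
      refine he'.resolve_left fun hmem => ?_
      have hve : v ∉ e' := fun hve => hvq (Walk.mem_support_of_mem_edges hmem hve)
      rw [hout e' hve, hin _ (Sym2.mem_mk_right a v)] at hce
      exact (hc e').ne hce
  refine ⟨c', fun e => ?_, ?_⟩
  · by_cases he : v ∈ e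
    · rw [hin e he]; exact k.lt_succ_self
    · rw [hout e he]; exact (hc e).trans k.lt_succ_self
  · rintro u (rfl | hu) w (rfl | hw) huw
    · exact (huw rfl).elim
    · obtain ⟨p, hp, hpS, e, he, hu⟩ := key w hw
      exact ⟨p.reverse, hp.reverse, by simpa using hpS, e, by simpa using he, by simpa using hu⟩
    · exact key u hu
    · obtain ⟨p, hp, hpS, e, he, huniq⟩ := h u hu w hw huw
      have hve : ∀ e ∈ p.edges, v ∉ e := fun e he hve =>
        hv (hpS v (Walk.mem_support_of_mem_edges he hve))
      refine ⟨p, hp, fun x hx => Or.inr (hpS x hx), e, he, fun e' he' hce => huniq e' he' ?_⟩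
      rwa [hout _ (hve e he), hout _ (hve e' he')] at hce

theorem SimpleGraph.Connected.exists_adj_mem_notMem {V : Type*} {G : SimpleGraph V}
    (hG : G.Connected) {S : Set V} {u v : V} (hu : u ∈ S) (hv : v ∉ S) :
    ∃ a ∈ S, ∃ b ∉ S, G.Adj a b := by
  obtain ⟨p⟩ := hG.preconnected u v
  obtain ⟨d, -, h1, h2⟩ := p.exists_boundary_dart S hu hv
  exact ⟨_, h1, _, h2, d.adj⟩

theorem CFCWithin.extend {V : Type*} [Fintype V] {G : SimpleGraph V} (hG : G.Connected)
    {S : Finset V} (hS : S.Nonempty) {k : ℕ} (h : CFCWithin G S k) :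
    CFCWithin G Set.univ (k + (Fintype.card V - S.card)) := by
  classical
  induction hd : Fintype.card V - S.card generalizing S k with
  | zero =>
    have hSu : S = Finset.univ :=
      Finset.eq_univ_of_card S (le_antisymm S.card_le_univ (Nat.sub_eq_zero_iff_le.1 hd))
    subst hSu
    simpa using h
  | succ d ih =>
    obtain ⟨v, hv⟩ : ∃ v, v ∉ S := by
      by_contra! hall
      have : S = Finset.univ := Finset.eq_univ_iff_forall.2 hall
      subst this
      simp at hd
    obtain ⟨u, hu⟩ := hS
    obtain ⟨a, ha, b, hb, hab⟩ := hG.exists_adj_mem_notMem (S := (S : Set V)) hu hv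
    have h' := h.insert ha hb hab
    rw [← Finset.coe_insert] at h'
    have hcard := Finset.card_insert_of_notMem (Finset.mem_coe.not.1 hb)
    have := ih (Finset.insert_nonempty b S) h' (by omega)
    rwa [show k + (d + 1) = k + 1 + d by omega]

theorem cfcNum_spec {V : Type*} [Fintype V] {G : SimpleGraph V} (hG : G.Connected) :
    ∃ c : Sym2 V → ℕ, (∀ e ∈ G.edgeSet, c e < cfcNum G) ∧ IsCFCColoring G c := by
  obtain ⟨v⟩ := hG.nonempty
  obtain ⟨c, hc, h⟩ := CFCWithin.extend hG (Finset.singleton_nonempty v)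
    (by simpa using CFCWithin.singleton G v)
  refine Nat.sInf_mem (s := {k | ∃ c : Sym2 V → ℕ, (∀ e ∈ G.edgeSet, c e < k) ∧
    IsCFCColoring G c}) ⟨_, c, fun e _ => hc e, fun u v huv => ?_⟩
  obtain ⟨p, hp, -, he⟩ := h u trivial v trivial huv
  exact ⟨⟨p, hp⟩, he⟩

/-- The graph on `Fin m` whose edges are listed in `E`, each with a color. -/
def listGraph {m : ℕ} (E : List (Fin m × Fin m × ℕ)) : SimpleGraph (Fin m) :=
  fromEdgeSet {e | e ∈ E.map fun t => s(t.1, t.2.1)}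

instance {m : ℕ} (E : List (Fin m × Fin m × ℕ)) : DecidableRel (listGraph E).Adj :=
  fun i j => decidable_of_iff (s(i, j) ∈ E.map (fun t => s(t.1, t.2.1)) ∧ i ≠ j) (by
    simp only [listGraph, fromEdgeSet_adj, Set.mem_ofPred_eq])

/-- The edge-coloring listed in `E`. -/
def listColor {m : ℕ} (E : List (Fin m × Fin m × ℕ)) (e : Sym2 (Fin m)) : ℕ :=
  ((E.find? fun t => s(t.1, t.2.1) = e).map (·.2.2)).getD 0

/-- A decidable certificate that the coloring listed in `E` is conflict-free connected and
uses only colors from `{0, …, k-1}`. -/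
def CFCCertificate {m : ℕ} (E : List (Fin m × Fin m × ℕ)) (k : ℕ) : Prop :=
  (0 < m ∧ 0 < k ∧ ∀ t ∈ E, t.2.2 < k) ∧ ∀ u v : Fin m, u ≠ v → ∃ l ∈ List.range m,
    ∃ p ∈ (listGraph E).finsetWalkLength l u v, p.support.Nodup ∧
      ∃ e ∈ p.edges, ∀ e' ∈ p.edges, listColor E e' = listColor E e → e' = e

instance {m : ℕ} (E : List (Fin m × Fin m × ℕ)) (k : ℕ) : Decidable (CFCCertificate E k) := by
  unfold CFCCertificate
  infer_instance

theorem CFCCertificate.cfcNum_add_le {V : Type*} [Fintype V] {G : SimpleGraph V}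
    (hG : G.Connected) {m k : ℕ} {E : List (Fin m × Fin m × ℕ)} (hE : CFCCertificate E k)
    {f : Fin m → V} (hf : Function.Injective f) (hadj : ∀ t ∈ E, G.Adj (f t.1) (f t.2.1)) :
    cfcNum G + m ≤ Fintype.card V + k := by
  classical
  obtain ⟨⟨hm, hk, hcol⟩, hE⟩ := hE
  let φ : listGraph E →g G := ⟨f, fun {a b} hab => by
    simp only [listGraph, fromEdgeSet_adj, Set.mem_ofPred_eq, List.mem_map] at hab
    obtain ⟨⟨t, ht, hst⟩, -⟩ := hab
    rcases Sym2.eq_iff.1 hst with ⟨rfl, rfl⟩ | ⟨rfl, rfl⟩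
    · exact hadj t ht
    · exact (hadj t ht).symm⟩
  have hlt : ∀ e, listColor E e < k := by
    intro e
    unfold listColor
    cases hfind : E.find? (fun t => s(t.1, t.2.1) = e) with
    | none => simpa using hk
    | some t => simpa using hcol t (List.mem_of_find?_eq_some hfind)
  have hinj : Function.Injective (Sym2.map f) := Sym2.map.injective hf
  have hwithin : CFCWithin G (Finset.univ.image f : Finset V) k := by
    refine ⟨Function.extend (Sym2.map f) (listColor E) (fun _ => 0), fun e => ?_, ?_⟩
    · by_cases he : ∃ e₀, Sym2.map f e₀ = e
      · obtain ⟨e₀, rfl⟩ := he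
        rw [hinj.extend_apply]
        exact hlt e₀
      · rw [Function.extend_apply' _ _ _ he]
        exact hk
    · intro u hu v hv huv
      simp only [Finset.coe_image, Finset.coe_univ, Set.image_univ, Set.mem_range] at hu hv
      obtain ⟨i, rfl⟩ := hu
      obtain ⟨j, rfl⟩ := hv
      obtain ⟨l, -, p, -, hp, e, he, huniq⟩ := hE i j fun hij => huv (congrArg f hij)
      refine ⟨p.map φ, (Walk.IsPath.mk' hp).map hf, ?_, Sym2.map f e, ?_, ?_⟩
      · intro x hx
        rw [Walk.support_map, List.mem_map] at hx
        obtain ⟨y, -, rfl⟩ := hx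
        simp [φ]
      · rw [Walk.edges_map]
        exact List.mem_map_of_mem he
      · intro e' he' hce
        rw [Walk.edges_map, List.mem_map] at he'
        obtain ⟨e₀, he₀, rfl⟩ := he'
        change Function.extend (Sym2.map f) _ _ (Sym2.map f e₀) = _ at hce
        rw [hinj.extend_apply, hinj.extend_apply] at hce
        exact congrArg (Sym2.map f) (huniq e₀ he₀ hce)
  have hcard : (Finset.univ.image f).card = m := by
    rw [Finset.card_image_of_injective _ hf, Finset.card_fin]
  have hle := (hwithin.extend hG ⟨f ⟨0, hm⟩, by simp⟩).cfcNum_le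
  have hmV := (Finset.univ.image f).card_le_univ
  omega

theorem cfcNum_add_two_le_of_path4 {V : Type*} [Fintype V] {G : SimpleGraph V}
    (hG : G.Connected) {a b c d : V} (hn : [a, b, c, d].Nodup) (h1 : G.Adj a b)
    (h2 : G.Adj b c) (h3 : G.Adj c d) : cfcNum G + 2 ≤ Fintype.card V := by
  have hE : CFCCertificate (m := 4) [(0, 1, 0), (1, 2, 1), (2, 3, 0)] 2 := by decide +kernel
  have := hE.cfcNum_add_le hG (f := [a, b, c, d].get) hn.injective_get (by simp [*])
  omega

theorem cfcNum_add_three_le_of_cycle5 {V : Type*} [Fintype V] {G : SimpleGraph V}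
    (hG : G.Connected) {a b c d e : V} (hn : [a, b, c, d, e].Nodup) (h1 : G.Adj a b)
    (h2 : G.Adj b c) (h3 : G.Adj c d) (h4 : G.Adj d e) (h5 : G.Adj e a) :
    cfcNum G + 3 ≤ Fintype.card V := by
  have hE : CFCCertificate (m := 5) [(0, 1, 0), (1, 2, 1), (2, 3, 1), (3, 4, 1), (4, 0, 1)] 2 := by
    decide +kernel
  have := hE.cfcNum_add_le hG (f := [a, b, c, d, e].get) hn.injective_get (by simp [*])
  omega

/-- A 4-cycle with a pendant edge. -/
theorem cfcNum_add_three_le_of_banner {V : Type*} [Fintype V] {G : SimpleGraph V}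
    (hG : G.Connected) {a b c d e : V} (hn : [a, b, c, d, e].Nodup) (h1 : G.Adj a b)
    (h2 : G.Adj b c) (h3 : G.Adj c d) (h4 : G.Adj d a) (h5 : G.Adj a e) :
    cfcNum G + 3 ≤ Fintype.card V := by
  have hE : CFCCertificate (m := 5) [(0, 1, 0), (1, 2, 1), (2, 3, 1), (3, 0, 1), (0, 4, 0)] 2 := by
    decide +kernel
  have := hE.cfcNum_add_le hG (f := [a, b, c, d, e].get) hn.injective_get (by simp [*])
  omega

/-- A triangle with two pendant edges at the same vertex. -/
theorem cfcNum_add_three_le_of_cricket {V : Type*} [Fintype V] {G : SimpleGraph V}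
    (hG : G.Connected) {a b c d e : V} (hn : [a, b, c, d, e].Nodup) (h1 : G.Adj a b)
    (h2 : G.Adj a c) (h3 : G.Adj b c) (h4 : G.Adj a d) (h5 : G.Adj a e) :
    cfcNum G + 3 ≤ Fintype.card V := by
  have hE : CFCCertificate (m := 5) [(0, 1, 0), (0, 2, 1), (1, 2, 0), (0, 3, 0), (0, 4, 1)] 2 := by
    decide +kernel
  have := hE.cfcNum_add_le hG (f := [a, b, c, d, e].get) hn.injective_get (by simp [*])
  omega

/-- A triangle with pendant edges at two different vertices. -/
theorem cfcNum_add_three_le_of_bull {V : Type*} [Fintype V] {G : SimpleGraph V}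
    (hG : G.Connected) {a b c d e : V} (hn : [a, b, c, d, e].Nodup) (h1 : G.Adj a b)
    (h2 : G.Adj a c) (h3 : G.Adj b c) (h4 : G.Adj a d) (h5 : G.Adj b e) :
    cfcNum G + 3 ≤ Fintype.card V := by
  have hE : CFCCertificate (m := 5) [(0, 1, 1), (0, 2, 1), (1, 2, 1), (0, 3, 0), (1, 4, 0)] 2 := by
    decide +kernel
  have := hE.cfcNum_add_le hG (f := [a, b, c, d, e].get) hn.injective_get (by simp [*])
  omega

/-- A triangle with a pendant path of length two. -/
theorem cfcNum_add_three_le_of_lollipop {V : Type*} [Fintype V] {G : SimpleGraph V}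
    (hG : G.Connected) {a b c d e : V} (hn : [a, b, c, d, e].Nodup) (h1 : G.Adj a b)
    (h2 : G.Adj b c) (h3 : G.Adj c d) (h4 : G.Adj c e) (h5 : G.Adj d e) :
    cfcNum G + 3 ≤ Fintype.card V := by
  have hE : CFCCertificate (m := 5) [(0, 1, 0), (1, 2, 1), (2, 3, 0), (2, 4, 0), (3, 4, 0)] 2 := by
    decide +kernel
  have := hE.cfcNum_add_le hG (f := [a, b, c, d, e].get) hn.injective_get (by simp [*])
  omega

theorem cfcNum_add_three_le_of_path6 {V : Type*} [Fintype V] {G : SimpleGraph V}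
    (hG : G.Connected) {a b c d e f : V} (hn : [a, b, c, d, e, f].Nodup) (h1 : G.Adj a b)
    (h2 : G.Adj b c) (h3 : G.Adj c d) (h4 : G.Adj d e) (h5 : G.Adj e f) :
    cfcNum G + 3 ≤ Fintype.card V := by
  have hE : CFCCertificate (m := 6) [(0, 1, 0), (1, 2, 1), (2, 3, 0), (3, 4, 2), (4, 5, 0)] 3 := by
    decide +kernel
  have := hE.cfcNum_add_le hG (f := [a, b, c, d, e, f].get) hn.injective_get (by simp [*])
  omega

/-- The spider with legs of lengths 1, 1, 3. -/
theorem cfcNum_add_three_le_of_spider113 {V : Type*} [Fintype V] {G : SimpleGraph V}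
    (hG : G.Connected) {w b c a x y : V} (hn : [w, b, c, a, x, y].Nodup) (h1 : G.Adj w b)
    (h2 : G.Adj w c) (h3 : G.Adj w a) (h4 : G.Adj a x) (h5 : G.Adj x y) :
    cfcNum G + 3 ≤ Fintype.card V := by
  have hE : CFCCertificate (m := 6) [(0, 1, 0), (0, 2, 1), (0, 3, 2), (3, 4, 0), (4, 5, 1)] 3 := by
    decide +kernel
  have := hE.cfcNum_add_le hG (f := [w, b, c, a, x, y].get) hn.injective_get (by simp [*])
  omega

/-- Two adjacent vertices of degree three, each carrying two leaves. -/
theorem cfcNum_add_three_le_of_doubleStar {V : Type*} [Fintype V] {G : SimpleGraph V}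
    (hG : G.Connected) {w b c a x y : V} (hn : [w, b, c, a, x, y].Nodup) (h1 : G.Adj w b)
    (h2 : G.Adj w c) (h3 : G.Adj w a) (h4 : G.Adj a x) (h5 : G.Adj a y) :
    cfcNum G + 3 ≤ Fintype.card V := by
  have hE : CFCCertificate (m := 6) [(0, 1, 0), (0, 2, 1), (0, 3, 2), (3, 4, 0), (3, 5, 1)] 3 := by
    decide +kernel
  have := hE.cfcNum_add_le hG (f := [w, b, c, a, x, y].get) hn.injective_get (by simp [*])
  omega

/-- The spider with legs of lengths 1, 2, 2. -/
theorem cfcNum_add_three_le_of_spider122 {V : Type*} [Fintype V] {G : SimpleGraph V}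
    (hG : G.Connected) {w c a x b y : V} (hn : [w, c, a, x, b, y].Nodup) (h1 : G.Adj w c)
    (h2 : G.Adj w a) (h3 : G.Adj a x) (h4 : G.Adj w b) (h5 : G.Adj b y) :
    cfcNum G + 3 ≤ Fintype.card V := by
  have hE : CFCCertificate (m := 6) [(0, 1, 0), (0, 2, 1), (2, 3, 0), (0, 4, 2), (4, 5, 0)] 3 := by
    decide +kernel
  have := hE.cfcNum_add_le hG (f := [w, c, a, x, b, y].get) hn.injective_get (by simp [*])
  omega

theorem IsCFCColoring.exists_unique_color {V : Type*} {G : SimpleGraph V} {c : Sym2 V → ℕ}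
    (hc : IsCFCColoring G c) (hG : G.IsAcyclic) {u v : V} (huv : u ≠ v) {p : G.Walk u v}
    (hp : p.IsPath) : ∃ e ∈ p.edges, ∀ e' ∈ p.edges, c e' = c e → e' = e := by
  obtain ⟨q, hq⟩ := hc u v huv
  obtain rfl : q = ⟨p, hp⟩ := (hG.subsingleton_path u v).elim _ _
  exact hq

theorem IsCFCColoring.ne_of_adj {V : Type*} {G : SimpleGraph V} {c : Sym2 V → ℕ}
    (hc : IsCFCColoring G c) (hG : G.IsAcyclic) {x w y : V} (hxy : x ≠ y) (hx : G.Adj x w)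
    (hy : G.Adj w y) : c s(x, w) ≠ c s(w, y) := by
  intro heq
  have hp : (Walk.cons hx (Walk.cons hy Walk.nil)).IsPath := by
    simp [Walk.cons_isPath_iff, hx.ne, hy.ne, hxy]
  obtain ⟨e, he, huniq⟩ := hc.exists_unique_color hG hxy hp
  simp only [Walk.edges_cons, Walk.edges_nil, List.mem_cons, List.not_mem_nil, or_false] at he huniq
  have hne : s(x, w) ≠ s(w, y) := by
    simp [hx.ne, hxy]
  rcases he with rfl | rfl
  · exact hne (huniq _ (.inr rfl) heq.symm).symm
  · exact hne (huniq _ (.inl rfl) heq)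

theorem degree_le_cfcNum {V : Type*} [Fintype V] {G : SimpleGraph V} [DecidableRel G.Adj]
    (hG : G.IsTree) (w : V) : G.degree w ≤ cfcNum G := by
  obtain ⟨c, hlt, hc⟩ := cfcNum_spec hG.connected
  rw [← card_neighborFinset_eq_degree, ← Finset.card_range (cfcNum G)]
  refine Finset.card_le_card_of_injOn (fun x => c s(x, w)) (fun x hx => ?_) fun x hx y hy hxy => ?_
  · simp only [Finset.mem_coe, mem_neighborFinset] at hx
    simpa using hlt s(x, w) hx.symm
  · simp only [Finset.mem_coe, mem_neighborFinset] at hx hy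
    by_contra hne
    refine hc.ne_of_adj hG.isAcyclic hne hx.symm hy ?_
    rw [Sym2.eq_swap (a := w)]
    exact hxy

theorem three_le_cfcNum_of_path5 {V : Type*} [Fintype V] {G : SimpleGraph V} (hG : G.IsTree)
    {a b c d e : V} (hn : [a, b, c, d, e].Nodup) (h1 : G.Adj a b) (h2 : G.Adj b c)
    (h3 : G.Adj c d) (h4 : G.Adj d e) : 3 ≤ cfcNum G := by
  obtain ⟨f, hlt, hf⟩ := cfcNum_spec hG.connected
  have n1 := hf.ne_of_adj hG.isAcyclic (by grind) h1 h2
  have n2 := hf.ne_of_adj hG.isAcyclic (by grind) h2 h3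
  have n3 := hf.ne_of_adj hG.isAcyclic (by grind) h3 h4
  have l1 := hlt s(a, b) h1
  have l2 := hlt s(b, c) h2
  have l3 := hlt s(c, d) h3
  have l4 := hlt s(d, e) h4
  by_contra! hlt3
  have e1 : f s(a, b) = f s(c, d) := by omega
  have e2 : f s(b, c) = f s(d, e) := by omega
  have hp : (Walk.cons h1 (Walk.cons h2 (Walk.cons h3 (Walk.cons h4 Walk.nil)))).IsPath :=
    Walk.IsPath.mk' (by simpa using hn)
  obtain ⟨x, hx, huniq⟩ := hf.exists_unique_color hG.isAcyclic (by grind) hp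
  simp only [Walk.edges_cons, Walk.edges_nil, List.mem_cons, List.not_mem_nil, or_false] at hx huniq
  have m1 : s(a, b) ≠ s(c, d) := by simp only [ne_eq, Sym2.eq_iff]; grind
  have m2 : s(b, c) ≠ s(d, e) := by simp only [ne_eq, Sym2.eq_iff]; grind
  rcases hx with rfl | rfl | rfl | rfl
  · exact m1 (huniq _ (by simp) e1.symm).symm
  · exact m2 (huniq _ (by simp) e2.symm).symm
  · exact m1 (huniq _ (by simp) e1)
  · exact m2 (huniq _ (by simp) e2)

theorem adj_of_cfcNum_le_one {V : Type*} [Fintype V] {G : SimpleGraph V} (hG : G.Connected)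
    (h : cfcNum G ≤ 1) {u v : V} (huv : u ≠ v) : G.Adj u v := by
  classical
  obtain ⟨c, hlt, hc⟩ := cfcNum_spec hG
  obtain ⟨⟨p, hp⟩, e, he, huniq⟩ := hc u v huv
  have hzero : ∀ e ∈ p.edges, c e = 0 := fun e he => by
    have := hlt e (p.edges_subset_edgeSet he)
    omega
  have hall : ∀ e' ∈ p.edges, e' = e := fun e' he' =>
    huniq e' he' ((hzero e' he').trans (hzero e he).symm)
  refine p.adj_of_length_eq_one (le_antisymm ?_ ?_)
  · rw [← p.length_edges, ← List.toFinset_card_of_nodup hp.isTrail.edges_nodup]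
    exact Finset.card_le_one.2 fun x hx y hy =>
      (hall x (by simpa using hx)).trans (hall y (by simpa using hy)).symm
  · rw [← p.length_edges]
    exact List.length_pos_of_mem he

theorem cfcNum_eq_one_of_complete {V : Type*} [Fintype V] [Nontrivial V] {G : SimpleGraph V}
    (h : ∀ u v, u ≠ v → G.Adj u v) : cfcNum G = 1 := by
  have hG : G.Connected := ⟨fun u v => by
    by_cases huv : u = v
    · exact huv ▸ .rfl
    · exact (h u v huv).reachable⟩
  refine le_antisymm (Nat.sInf_le ⟨fun _ => 0, fun _ _ => zero_lt_one, fun u v huv => ?_⟩) ?_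
  · exact ⟨Path.singleton (h u v huv), s(u, v), by simp [Path.singleton], by simp [Path.singleton]⟩
  · obtain ⟨c, hlt, -⟩ := cfcNum_spec hG
    obtain ⟨u, v, huv⟩ := exists_pair_ne V
    have := hlt s(u, v) (h u v huv)
    omega

theorem SimpleGraph.Connected.exists_adj_notMem_of_not_isTree {V : Type*} [Fintype V]
    {G : SimpleGraph V} (hG : G.Connected) (hT : ¬ G.IsTree) {T : Finset (Sym2 V)}
    (h : T.card < Fintype.card V) : ∃ a b, G.Adj a b ∧ s(a, b) ∉ T := by
  classical
  by_contra! hall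
  have hsub : G.edgeFinset ⊆ T := fun e he => by
    induction e with | _ a b => exact hall a b (by simpa using he)
  have h1 := Finset.card_le_card hsub
  have h2 := hG.card_vert_le_card_edgeSet_add_one
  refine hT (isTree_iff_connected_and_card.2 ⟨hG, ?_⟩)
  rw [Nat.card_eq_fintype_card, Nat.card_eq_fintype_card, ← edgeFinset_card] at h2 ⊢
  omega

theorem exists_adj_adj_of_degree_lt {V : Type*} [Fintype V] {G : SimpleGraph V}
    [DecidableRel G.Adj] (hG : G.Connected) {w : V} (h : G.degree w + 2 ≤ Fintype.card V) :
    ∃ a x, G.Adj w a ∧ G.Adj a x ∧ x ≠ w ∧ ¬ G.Adj w x := by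
  classical
  obtain ⟨z, -, hz⟩ := Finset.exists_mem_notMem_of_card_lt_card
    (s := insert w (G.neighborFinset w)) (t := Finset.univ)
    ((Finset.card_insert_le _ _).trans_lt (by
      rw [card_neighborFinset_eq_degree, Finset.card_univ]; omega))
  obtain ⟨a, ha, x, hx, hax⟩ := hG.exists_adj_mem_notMem
    (S := {v | v = w ∨ G.Adj w v}) (Or.inl rfl) (by simpa using hz)
  simp only [Set.mem_ofPred_eq, not_or] at ha hx
  refine ⟨a, x, ha.resolve_left ?_, hax, hx⟩
  rintro rfl
  exact hx.2 hax

theorem exists_adj_notMem_of_card_lt_degree {V : Type*} [Fintype V] {G : SimpleGraph V}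
    [DecidableRel G.Adj] {w : V} {S : Finset V} (h : S.card < G.degree w) :
    ∃ b, G.Adj w b ∧ b ∉ S := by
  obtain ⟨b, hb, hbS⟩ := Finset.exists_mem_notMem_of_card_lt_card
    (h.trans_eq (G.card_neighborFinset_eq_degree w).symm)
  exact ⟨b, by simpa using hb, hbS⟩

theorem cfcNum_add_three_le_of_degree {V : Type*} [Fintype V] {G : SimpleGraph V}
    [DecidableRel G.Adj] (hG : G.Connected) {w : V} (h3 : 3 ≤ G.degree w)
    (h : G.degree w + 3 ≤ Fintype.card V) : cfcNum G + 3 ≤ Fintype.card V := by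
  classical
  obtain ⟨a, x, hwa, hax, hxw, hwx⟩ := exists_adj_adj_of_degree_lt hG (w := w) (by omega)
  obtain ⟨z, -, hz⟩ := Finset.exists_mem_notMem_of_card_lt_card
    (s := insert x (insert w (G.neighborFinset w))) (t := Finset.univ)
    (((Finset.card_insert_le _ _).trans
      (Nat.succ_le_succ (Finset.card_insert_le _ _))).trans_lt (by
      rw [card_neighborFinset_eq_degree, Finset.card_univ]; omega))
  obtain ⟨b, hb, y, hy, hby⟩ := hG.exists_adj_mem_notMem
    (S := {v | v = x ∨ v = w ∨ G.Adj w v}) (Or.inl rfl) (by simpa using hz)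
  simp only [Set.mem_ofPred_eq, not_or] at hb hy
  obtain ⟨hyx, hyw, hwy⟩ := hy
  by_cases hba : b = a ∨ b = x
  · obtain ⟨p, hwp, hp⟩ := exists_adj_notMem_of_card_lt_degree (G := G) (w := w) (S := {a})
      (by simp; omega)
    obtain ⟨q, hwq, hq⟩ := exists_adj_notMem_of_card_lt_degree (G := G) (w := w) (S := {a, p})
      (Finset.card_le_two.trans_lt h3)
    simp only [Finset.mem_singleton, Finset.mem_insert, not_or] at hp hq
    have hn : [w, p, q, a, x, y].Nodup := by
      have := hwa.ne
      have := hwp.ne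
      have := hwq.ne
      have := hax.ne
      grind
    rcases hba with rfl | rfl
    · exact cfcNum_add_three_le_of_doubleStar hG hn hwp hwq hwa hax hby
    · exact cfcNum_add_three_le_of_spider113 hG hn hwp hwq hwa hax hby
  · obtain ⟨c, hwc, hc⟩ := exists_adj_notMem_of_card_lt_degree (G := G) (w := w) (S := {a, b})
      (Finset.card_le_two.trans_lt h3)
    simp only [Finset.mem_singleton, Finset.mem_insert, not_or] at hc hba
    have hwb : G.Adj w b := by
      rcases hb with rfl | rfl | hb
      · exact (hba.2 rfl).elim
      · exact (hwy hby).elim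
      · exact hb
    have hn : [w, c, a, x, b, y].Nodup := by
      have := hwa.ne
      have := hwb.ne
      have := hwc.ne
      have := hax.ne
      have := hby.ne
      grind
    exact cfcNum_add_three_le_of_spider122 hG hn hwc hwa hax hwb hby

theorem cfcNum_add_three_le_of_degree_add_one {V : Type*} [Fintype V] {G : SimpleGraph V}
    [DecidableRel G.Adj] (hG : G.Connected) (hT : ¬ G.IsTree) (h5 : 5 ≤ Fintype.card V) {w : V}
    (h : G.degree w + 1 = Fintype.card V) : cfcNum G + 3 ≤ Fintype.card V := by
  classical
  obtain ⟨a, b, hab, hw⟩ := hG.exists_adj_notMem_of_not_isTree hT (T := G.incidenceFinset w)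
    (by rw [card_incidenceFinset_eq_degree]; omega)
  simp only [mem_incidenceFinset, mk'_mem_incidenceSet_iff, hab, true_and, not_or] at hw
  have huniv : ∀ v, v ≠ w → G.Adj w v := by
    intro v hv
    by_contra hwv
    have hle := Finset.card_le_univ (insert v (insert w (G.neighborFinset w)))
    rw [Finset.card_insert_of_notMem (by simp [hv, hwv]), Finset.card_insert_of_notMem (by simp),
      card_neighborFinset_eq_degree] at hle
    omega
  obtain ⟨p, hwp, hp⟩ := exists_adj_notMem_of_card_lt_degree (G := G) (w := w) (S := {a, b})
    (Finset.card_le_two.trans_lt (by omega))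
  obtain ⟨q, hwq, hq⟩ := exists_adj_notMem_of_card_lt_degree (G := G) (w := w) (S := {a, b, p})
    (Finset.card_le_three.trans_lt (by omega))
  simp only [Finset.mem_singleton, Finset.mem_insert, not_or] at hp hq
  have hn : [w, a, b, p, q].Nodup := by
    have := hab.ne
    have := hwp.ne
    have := hwq.ne
    grind
  exact cfcNum_add_three_le_of_cricket hG hn (huniv a (Ne.symm hw.1)) (huniv b (Ne.symm hw.2))
    hab hwp hwq

theorem cfcNum_add_three_le_of_degree_add_two {V : Type*} [Fintype V] {G : SimpleGraph V}
    [DecidableRel G.Adj] (hG : G.Connected) (hT : ¬ G.IsTree) (h5 : 5 ≤ Fintype.card V) {w : V}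
    (h : G.degree w + 2 = Fintype.card V) : cfcNum G + 3 ≤ Fintype.card V := by
  classical
  obtain ⟨a, x, hwa, hax, hxw, hwx⟩ := exists_adj_adj_of_degree_lt hG h.le
  obtain ⟨b, c, hbc, hw⟩ := hG.exists_adj_notMem_of_not_isTree hT
    (T := insert s(a, x) (G.incidenceFinset w)) ((Finset.card_insert_le _ _).trans_lt (by
      rw [card_incidenceFinset_eq_degree]; omega))
  simp only [Finset.mem_insert, mem_incidenceFinset, mk'_mem_incidenceSet_iff, hbc, true_and,
    not_or] at hw
  obtain ⟨hne, hwb, hwc⟩ := hw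
  have huniv : ∀ v, v ≠ w → v ≠ x → G.Adj w v := by
    intro v hv hvx
    by_contra hwv
    have hle := Finset.card_le_univ (insert x (insert v (insert w (G.neighborFinset w))))
    rw [Finset.card_insert_of_notMem (by simp [hxw, hwx, Ne.symm hvx]),
      Finset.card_insert_of_notMem (by simp [hv, hwv]), Finset.card_insert_of_notMem (by simp),
      card_neighborFinset_eq_degree] at hle
    omega
  have hbanner : ∀ b, G.Adj b x → b ≠ a → b ≠ w → cfcNum G + 3 ≤ Fintype.card V := by
    intro b hbx hba hbw
    obtain ⟨p, hwp, hp⟩ := exists_adj_notMem_of_card_lt_degree (G := G) (w := w) (S := {a, b})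
      (Finset.card_le_two.trans_lt (by omega))
    simp only [Finset.mem_singleton, Finset.mem_insert, not_or] at hp
    refine cfcNum_add_three_le_of_banner hG (a := w) (b := a) (c := x) (d := b) (e := p) ?_ hwa hax
      hbx.symm (huniv b hbw hbx.ne).symm hwp
    have := hwa.ne
    have := hax.ne
    have := hbx.ne
    have := hwp.ne
    grind
  have hbull : ∀ c, G.Adj a c → c ≠ x → c ≠ w → cfcNum G + 3 ≤ Fintype.card V := by
    intro c hac hcx hcw
    obtain ⟨p, hwp, hp⟩ := exists_adj_notMem_of_card_lt_degree (G := G) (w := w) (S := {a, c})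
      (Finset.card_le_two.trans_lt (by omega))
    simp only [Finset.mem_singleton, Finset.mem_insert, not_or] at hp
    refine cfcNum_add_three_le_of_bull hG (a := w) (b := a) (c := c) (d := p) (e := x) ?_ hwa
      (huniv c hcw hcx) hac hwp hax
    have := hwa.ne
    have := hax.ne
    have := hac.ne
    have := hwp.ne
    grind
  by_cases hcx : c = x
  · subst hcx
    exact hbanner b hbc (by rintro rfl; exact hne rfl) (Ne.symm hwb)
  by_cases hbx : b = x
  · subst hbx
    exact hbanner c hbc.symm (by rintro rfl; exact hne Sym2.eq_swap) (Ne.symm hwc)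
  by_cases hba : b = a
  · subst hba
    exact hbull c hbc hcx (Ne.symm hwc)
  by_cases hca : c = a
  · subst hca
    exact hbull b hbc.symm hbx (Ne.symm hwb)
  refine cfcNum_add_three_le_of_lollipop hG (a := x) (b := a) (c := w) (d := b) (e := c) ?_ hax.symm
    hwa.symm (huniv b (Ne.symm hwb) hbx) (huniv c (Ne.symm hwc) hcx) hbc
  have := hwa.ne
  have := hax.ne
  have := hbc.ne
  grind

theorem three_le_degree {V : Type*} [Fintype V] {G : SimpleGraph V} [DecidableRel G.Adj]
    {w a b c : V} (hn : [a, b, c].Nodup) (ha : G.Adj w a) (hb : G.Adj w b) (hc : G.Adj w c) :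
    3 ≤ G.degree w := by
  classical
  have hsub : [a, b, c].toFinset ⊆ G.neighborFinset w := fun x hx => by
    simp only [List.mem_toFinset, List.mem_cons, List.not_mem_nil, or_false] at hx
    rcases hx with rfl | rfl | rfl <;> simpa
  have := Finset.card_le_card hsub
  rwa [List.toFinset_card_of_nodup hn, card_neighborFinset_eq_degree] at this

/-- In a connected graph of maximum degree at most two there are paths of every possible order. -/
theorem exists_path_of_degree_le_two {V : Type*} [Fintype V] {G : SimpleGraph V}
    [DecidableRel G.Adj] (hG : G.Connected) (hdeg : ∀ v, G.degree v ≤ 2) :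
    ∀ k < Fintype.card V, ∃ l : List V, l.length = k + 1 ∧ l.Nodup ∧ l.IsChain G.Adj := by
  classical
  intro k
  induction k with
  | zero =>
    intro _
    obtain ⟨v⟩ := hG.nonempty
    exact ⟨[v], by simp⟩
  | succ k ih =>
    intro hk
    obtain ⟨l, hlen, hnd, hch⟩ := ih (by omega)
    obtain ⟨z, -, hz⟩ := Finset.exists_mem_notMem_of_card_lt_card
      (s := l.toFinset) (t := Finset.univ)
      (by rw [List.toFinset_card_of_nodup hnd, hlen, Finset.card_univ]; omega)
    obtain ⟨y, hy⟩ := List.exists_mem_of_length_pos (l := l) (by omega)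
    obtain ⟨u, hu, v, hv, huv⟩ := hG.exists_adj_mem_notMem (S := {v | v ∈ l}) hy (by simpa using hz)
    simp only [Set.mem_ofPred_eq] at hu hv
    obtain ⟨l₁, l₂, rfl⟩ := List.append_of_mem hu
    rcases List.eq_nil_or_concat l₁ with rfl | ⟨l₁, a, rfl⟩
    · exact ⟨v :: u :: l₂, by simpa using hlen, List.nodup_cons.2 ⟨hv, hnd⟩,
        List.isChain_cons_cons.2 ⟨huv.symm, hch⟩⟩
    cases l₂ with
    | nil =>
      refine ⟨(l₁.concat a ++ [u]) ++ [v], by simp at hlen ⊢; omega, ?_, ?_⟩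
      · rw [List.nodup_append]
        grind
      · rw [List.isChain_append]
        exact ⟨hch, by simp, by simpa using huv⟩
    | cons b l₂ =>
      refine absurd (hdeg u) (not_le.2 (three_le_degree (a := a) (b := b) (c := v) ?_ ?_ ?_ huv))
      · grind
      · rw [List.isChain_append] at hch
        exact (hch.2.2 a (by simp) u (by simp)).symm
      · rw [List.isChain_append, List.isChain_cons_cons] at hch
        exact hch.2.1.1

theorem pathGraph_five_isTree : (pathGraph 5).IsTree := by
  let _ : DecidableRel (pathGraph 5).Adj := fun _ _ => decidable_of_iff _ pathGraph_adj.symm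
  refine isTree_iff_connected_and_card.2 ⟨pathGraph_connected 4, ?_⟩
  rw [Nat.card_eq_fintype_card, Nat.card_eq_fintype_card, ← edgeFinset_card]
  decide +kernel

instance : DecidableRel starK13PlusEdge.Adj := fun i j =>
  decidable_of_iff (s(i, j) ∈ [s(0, 1), s(0, 2), s(0, 3), s(1, 2)] ∧ i ≠ j) (by
    simp [starK13PlusEdge])

instance : DecidableRel cycle4.Adj := fun i j =>
  decidable_of_iff (s(i, j) ∈ [s(0, 1), s(1, 2), s(2, 3), s(3, 0)] ∧ i ≠ j) (by
    simp [cycle4])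

instance : DecidableRel cycle4PlusChord.Adj := fun i j =>
  decidable_of_iff (s(i, j) ∈ [s(0, 1), s(1, 2), s(2, 3), s(3, 0), s(0, 2)] ∧ i ≠ j) (by
    simp [cycle4PlusChord])

/-- The adjacency matrix on four vertices with the given entries above the diagonal. -/
def adjFour (a b c d e f : Bool) : Fin 4 → Fin 4 → Bool :=
  ![![false, a, b, c], ![a, false, d, e], ![b, d, false, f], ![c, e, f, false]]

theorem adjFour_classification : ∀ a b c d e f : Bool,
    3 < a.toNat + b.toNat + c.toNat + d.toNat + e.toNat + f.toNat →
    a.toNat + b.toNat + c.toNat + d.toNat + e.toNat + f.toNat < 6 →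
    ∃ σ : Equiv.Perm (Fin 4),
      (∀ i j, starK13PlusEdge.Adj (σ i) (σ j) ↔ adjFour a b c d e f i j) ∨
      (∀ i j, cycle4.Adj (σ i) (σ j) ↔ adjFour a b c d e f i j) ∨
      (∀ i j, cycle4PlusChord.Adj (σ i) (σ j) ↔ adjFour a b c d e f i j) := by
  decide +kernel

theorem iso_of_card_eq_four {V : Type*} [Fintype V] {G : SimpleGraph V} [DecidableRel G.Adj]
    (hG : G.Connected) (hT : ¬ G.IsTree) (h4 : Fintype.card V = 4)
    (hc : ¬ ∀ u v, u ≠ v → G.Adj u v) :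
    Nonempty (G ≃g starK13PlusEdge) ∨ Nonempty (G ≃g cycle4) ∨
      Nonempty (G ≃g cycle4PlusChord) := by
  classical
  let φ := Fintype.equivFinOfCardEq h4
  let M : Fin 4 → Fin 4 → Bool := fun i j => decide (G.Adj (φ.symm i) (φ.symm j))
  have hsymm : ∀ i j, M i j = M j i := fun i j => by simp [M, G.adj_comm]
  have hirr : ∀ i, M i i = false := fun i => by simp [M]
  have hM : M = adjFour (M 0 1) (M 0 2) (M 0 3) (M 1 2) (M 1 3) (M 2 3) := by
    funext i j
    fin_cases i <;> fin_cases j <;> simp [adjFour, hirr] <;> exact hsymm _ _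
  have hadj : ∀ u v, G.Adj u v ↔ M (φ u) (φ v) = true := fun u v => by simp [M]
  obtain ⟨σ, hσ⟩ := adjFour_classification (M 0 1) (M 0 2) (M 0 3) (M 1 2) (M 1 3) (M 2 3)
    (by
      have hsum : ∑ i, ∑ j, (M i j).toNat = 2 * G.edgeFinset.card := by
        rw [← sum_degrees_eq_twice_card_edges, ← φ.sum_comp]
        refine Finset.sum_congr rfl fun u _ => ?_
        rw [← φ.sum_comp, ← card_neighborFinset_eq_degree, neighborFinset_eq_filter,
          Finset.card_filter]
        refine Finset.sum_congr rfl fun v _ => ?_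
        by_cases huv : G.Adj u v <;> simp [M, huv]
      have hcard : 3 < G.edgeFinset.card := by
        by_contra! hle
        obtain ⟨a, b, hab, hmem⟩ := hG.exists_adj_notMem_of_not_isTree hT
          (T := G.edgeFinset) (by omega)
        exact hmem (by simpa using hab)
      simp only [Fin.sum_univ_four, hirr, hsymm 1 0, hsymm 2 0, hsymm 2 1, hsymm 3 0, hsymm 3 1,
        hsymm 3 2, Bool.toNat_false] at hsum
      omega)
    (by
      by_contra! hle
      have htrue : ∀ b : Bool, b = true ∨ b.toNat = 0 := by decide
      have hle1 := fun b : Bool => b.toNat_le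
      have hall : M 0 1 = true ∧ M 0 2 = true ∧ M 0 3 = true ∧ M 1 2 = true ∧ M 1 3 = true ∧
          M 2 3 = true := by
        have := hle1 (M 0 1)
        have := hle1 (M 0 2)
        have := hle1 (M 0 3)
        have := hle1 (M 1 2)
        have := hle1 (M 1 3)
        have := hle1 (M 2 3)
        refine ⟨?_, ?_, ?_, ?_, ?_, ?_⟩ <;> refine (htrue _).resolve_right fun _ => ?_ <;> omega
      obtain ⟨m1, m2, m3, m4, m5, m6⟩ := hall
      rw [m1, m2, m3, m4, m5, m6] at hM
      refine hc fun u v huv => (hadj u v).2 ?_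
      rw [hM]
      have : ∀ i j : Fin 4, i ≠ j → adjFour true true true true true true i j = true := by decide
      exact this _ _ fun h => huv (φ.injective h))
  rw [← hM] at hσ
  refine hσ.imp (fun h => ?_) (Or.imp (fun h => ?_) fun h => ?_) <;>
  exact ⟨⟨φ.trans σ, fun {u v} => (h (φ u) (φ v)).trans (hadj u v).symm⟩⟩

theorem cfcNum_eq_two_of_iso {V : Type*} [Fintype V] {G : SimpleGraph V} (hG : G.Connected)
    {H : SimpleGraph (Fin 4)} (φ : G ≃g H)
    {a b c d : Fin 4} (hn : [a, b, c, d].Nodup) (h1 : H.Adj a b) (h2 : H.Adj b c)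
    (h3 : H.Adj c d) {x y : Fin 4} (hxy : x ≠ y) (hH : ¬ H.Adj x y) : cfcNum G = 2 := by
  have hcard : Fintype.card V = 4 := by simpa using Fintype.card_congr φ.toEquiv
  have hle := cfcNum_add_two_le_of_path4 hG (hn.map φ.symm.injective)
    (φ.symm.map_adj_iff.2 h1) (φ.symm.map_adj_iff.2 h2) (φ.symm.map_adj_iff.2 h3)
  refine le_antisymm (by omega) (not_lt.1 fun hlt => hH ?_)
  exact φ.symm.map_adj_iff.1 (adj_of_cfcNum_le_one hG (by omega) (φ.symm.injective.ne hxy))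

theorem pathGraph_iso_of_degree_le_two {V : Type*} [Fintype V] {G : SimpleGraph V}
    [DecidableRel G.Adj] (hG : G.Connected) (h5 : 5 ≤ Fintype.card V)
    (hdeg : ∀ v, G.degree v ≤ 2) (hcfc : ¬ cfcNum G + 3 ≤ Fintype.card V) :
    Nonempty (G ≃g pathGraph 5) := by
  classical
  rcases h5.eq_or_lt with h5 | h6
  · obtain ⟨l, hlen, hn, hch⟩ := exists_path_of_degree_le_two hG hdeg 4 (by omega)
    obtain ⟨a, b, c, d, e, rfl⟩ : ∃ a b c d e, l = [a, b, c, d, e] := by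
      match l, hlen with
      | [a, b, c, d, e], _ => exact ⟨a, b, c, d, e, rfl⟩
    simp only [List.isChain_cons_cons, List.isChain_singleton, and_true] at hch
    obtain ⟨h1, h2, h3, h4⟩ := hch
    have key : ∀ w x y z, [x, y, z].Nodup → G.Adj w x → G.Adj w y → ¬ G.Adj w z :=
      fun w x y z hxyz hx hy hz =>
        (three_le_degree hxyz hx hy hz).not_gt (Nat.lt_succ_of_le (hdeg w))
    have n1 : ¬ G.Adj b d := key b a c d (by clear key; grind) h1.symm h2
    have n2 : ¬ G.Adj b e := key b a c e (by clear key; grind) h1.symm h2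
    have n3 : ¬ G.Adj a c := fun h => key c b d a (by clear key; grind) h2.symm h3 h.symm
    have n4 : ¬ G.Adj c e := key c b d e (by clear key; grind) h2.symm h3
    have n5 : ¬ G.Adj a d := fun h => key d c e a (by clear key; grind) h3.symm h4 h.symm
    have n6 : ¬ G.Adj a e := fun h =>
      hcfc (cfcNum_add_three_le_of_cycle5 hG hn h1 h2 h3 h4 h.symm)
    have hbij : Function.Bijective (![a, b, c, d, e] : Fin 5 → V) := by
      refine (Fintype.bijective_iff_injective_and_card _).2 ⟨?_, by simpa using h5⟩
      have : (![a, b, c, d, e] : Fin 5 → V) = [a, b, c, d, e].get := by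
        funext i
        fin_cases i <;> rfl
      rw [this]
      exact hn.injective_get
    refine ⟨Iso.symm ⟨Equiv.ofBijective _ hbij, fun {i j} => ?_⟩⟩
    rw [pathGraph_adj]
    fin_cases i <;> fin_cases j <;> simp [*, G.adj_comm]
  · obtain ⟨l, hlen, hn, hch⟩ := exists_path_of_degree_le_two hG hdeg 5 (by omega)
    obtain ⟨a, b, c, d, e, f, rfl⟩ : ∃ a b c d e f, l = [a, b, c, d, e, f] := by
      match l, hlen with
      | [a, b, c, d, e, f], _ => exact ⟨a, b, c, d, e, f, rfl⟩
    simp only [List.isChain_cons_cons, List.isChain_singleton, and_true] at hch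
    obtain ⟨h1, h2, h3, h4, h5⟩ := hch
    exact (hcfc (cfcNum_add_three_le_of_path6 hG hn h1 h2 h3 h4 h5)).elim

theorem maxDegree_le_cfcNum {V : Type*} [Fintype V] {G : SimpleGraph V} [DecidableRel G.Adj]
    (hG : G.IsTree) : G.maxDegree ≤ cfcNum G := by
  have := hG.connected.nonempty
  obtain ⟨w, hw⟩ := G.exists_maximal_degree_vertex
  exact hw ▸ degree_le_cfcNum hG w

theorem cfcNum_eq_of_maxDegree {V : Type*} [Fintype V] {G : SimpleGraph V} [DecidableRel G.Adj]
    (hG : G.IsTree) (h3 : 3 ≤ Fintype.card V) (h : G.maxDegree = Fintype.card V - 2) :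
    cfcNum G = Fintype.card V - 2 := by
  classical
  have := hG.connected.nonempty
  refine le_antisymm ?_ (h ▸ maxDegree_le_cfcNum hG)
  obtain ⟨w, hw⟩ := G.exists_maximal_degree_vertex
  obtain ⟨a, x, hwa, hax, hxw, hwx⟩ := exists_adj_adj_of_degree_lt hG.connected (w := w) (by omega)
  have hdeg : 2 ≤ G.degree w := by
    rw [← hw, ← Finset.card_pair hxw]
    refine (Finset.card_le_card fun y hy => ?_).trans
      ((G.card_neighborFinset_eq_degree a).trans_le (G.degree_le_maxDegree a))
    rcases Finset.mem_insert.1 hy with rfl | hy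
    · simpa using hax
    · simpa [Finset.mem_singleton.1 hy] using hwa.symm
  obtain ⟨b, hwb, hb⟩ := exists_adj_notMem_of_card_lt_degree (G := G) (w := w) (S := {a})
    (by rw [Finset.card_singleton]; omega)
  have hn : [b, w, a, x].Nodup := by
    have := hwa.ne
    have := hwb.ne
    have := hax.ne
    grind
  have := cfcNum_add_two_le_of_path4 hG.connected hn hwb.symm hwa hax
  omega

/-- For a connected graph G on n ≥ 3 vertices, cfc(G) = n − 2 iff G is a tree with
Δ(G) = n − 2, or G is one of K_3, K_{1,3}+e, K_{2,2}, K_{2,2}+e, P_5. -/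
theorem cfcNum_eq_card_sub_two_iff {V : Type*} [Fintype V] (G : SimpleGraph V)
    [DecidableRel G.Adj] (hG : G.Connected) (n : ℕ) (hn : Fintype.card V = n)
    (h3 : 3 ≤ n) :
    cfcNum G = n - 2 ↔
      (G.IsTree ∧ G.maxDegree = n - 2) ∨
      Nonempty (G ≃g completeGraph (Fin 3)) ∨
      Nonempty (G ≃g starK13PlusEdge) ∨
      Nonempty (G ≃g cycle4) ∨
      Nonempty (G ≃g cycle4PlusChord) ∨
      Nonempty (G ≃g SimpleGraph.pathGraph 5) := by
  classical
  subst hn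
  constructor
  · intro h
    rcases h3.eq_or_lt with h3 | h4
    · refine Or.inr (Or.inl ⟨Fintype.equivFinOfCardEq h3.symm, fun {u v} => ?_⟩)
      simp only [completeGraph_eq_top, top_adj, ne_eq, EmbeddingLike.apply_eq_iff_eq]
      exact ⟨fun huv => adj_of_cfcNum_le_one hG (by omega) huv, fun huv => huv.ne⟩
    rcases (Nat.succ_le_of_lt h4).eq_or_lt with h4 | h5
    · by_cases hT : G.IsTree
      · refine Or.inl ⟨hT, le_antisymm (h ▸ maxDegree_le_cfcNum hT) (not_lt.1 fun hlt => ?_)⟩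
        have hsum := G.sum_degrees_eq_twice_card_edges
        have hle := Finset.sum_le_card_nsmul Finset.univ (fun v => G.degree v) 1 fun v _ =>
          (G.degree_le_maxDegree v).trans (by omega)
        have hE := hT.card_edgeFinset
        simp only [Finset.card_univ, smul_eq_mul] at hle
        omega
      · have hc : ¬ ∀ u v, u ≠ v → G.Adj u v := fun hc => by
          have : Nontrivial V := Fintype.one_lt_card_iff_nontrivial.1 (by omega)
          have := cfcNum_eq_one_of_complete hc
          omega
        rcases iso_of_card_eq_four hG hT h4.symm hc with h | h | h
        · exact Or.inr (Or.inr (Or.inl h))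
        · exact Or.inr (Or.inr (Or.inr (Or.inl h)))
        · exact Or.inr (Or.inr (Or.inr (Or.inr (Or.inl h))))
    · have hno : ¬ cfcNum G + 3 ≤ Fintype.card V := by omega
      by_cases hw : ∃ w, 3 ≤ G.degree w
      · obtain ⟨w, hw⟩ := hw
        have h1 : Fintype.card V < G.degree w + 3 :=
          not_le.1 fun hle => hno (cfcNum_add_three_le_of_degree hG hw hle)
        have h2 := G.degree_lt_card_verts w
        have hT : G.IsTree := by
          by_contra hT
          rcases (show G.degree w + 1 = Fintype.card V ∨ G.degree w + 2 = Fintype.card V by omega)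
            with hd | hd
          · exact hno (cfcNum_add_three_le_of_degree_add_one hG hT h5 hd)
          · exact hno (cfcNum_add_three_le_of_degree_add_two hG hT h5 hd)
        refine Or.inl ⟨hT, le_antisymm (h ▸ maxDegree_le_cfcNum hT) ?_⟩
        exact le_trans (by omega) (G.degree_le_maxDegree w)
      · push Not at hw
        exact Or.inr (Or.inr (Or.inr (Or.inr (Or.inr
          (pathGraph_iso_of_degree_le_two hG h5 (fun v => Nat.le_of_lt_succ (hw v)) hno)))))
  · rintro (⟨hT, hd⟩ | ⟨⟨φ⟩⟩ | ⟨⟨φ⟩⟩ | ⟨⟨φ⟩⟩ | ⟨⟨φ⟩⟩ | ⟨⟨φ⟩⟩)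
    · exact cfcNum_eq_of_maxDegree hT h3 hd
    · have hcard : Fintype.card V = 3 := by simpa using Fintype.card_congr φ.toEquiv
      have : Nontrivial V := Fintype.one_lt_card_iff_nontrivial.1 (by omega)
      rw [hcard]
      exact cfcNum_eq_one_of_complete fun u v huv => φ.map_adj_iff.1 (by simpa using huv)
    · have hcard : Fintype.card V = 4 := by simpa using Fintype.card_congr φ.toEquiv
      rw [hcard]
      exact cfcNum_eq_two_of_iso hG φ (a := 3) (b := 0) (c := 1) (d := 2) (x := 1) (y := 3)
        (by decide) (by decide) (by decide) (by decide) (by decide) (by decide)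
    · have hcard : Fintype.card V = 4 := by simpa using Fintype.card_congr φ.toEquiv
      rw [hcard]
      exact cfcNum_eq_two_of_iso hG φ (a := 0) (b := 1) (c := 2) (d := 3) (x := 0) (y := 2)
        (by decide) (by decide) (by decide) (by decide) (by decide) (by decide)
    · have hcard : Fintype.card V = 4 := by simpa using Fintype.card_congr φ.toEquiv
      rw [hcard]
      exact cfcNum_eq_two_of_iso hG φ (a := 0) (b := 1) (c := 2) (d := 3) (x := 1) (y := 3)
        (by decide) (by decide) (by decide) (by decide) (by decide) (by decide)
    · have hcard : Fintype.card V = 5 := by simpa using Fintype.card_congr φ.toEquiv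
      have hn : ([0, 1, 2, 3, 4] : List (Fin 5)).Nodup := by decide
      have hn' := hn.map φ.symm.injective
      have hadj : ∀ i j : Fin 5, i.val + 1 = j.val → G.Adj (φ.symm i) (φ.symm j) := fun i j hij =>
        φ.symm.map_adj_iff.2 (pathGraph_adj.2 (Or.inl hij))
      have h01 := hadj 0 1 rfl
      have h12 := hadj 1 2 rfl
      have h23 := hadj 2 3 rfl
      have h34 := hadj 3 4 rfl
      have hge := three_le_cfcNum_of_path5 (φ.isTree_iff.2 pathGraph_five_isTree) hn' h01 h12 h23 h34
      have hle := cfcNum_add_two_le_of_path4 hG (hn'.sublist (List.sublist_append_left _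
        [φ.symm 4])) h01 h12 h23
      omega
end

section
/- Let n ≥ 5. If G is isomorphic to K_{1,n−1}+e or to U_n, then cfc(G) = n − 3. -/
open SimpleGraph

/-- G is (a copy of) K_{1,n−1}+e : a star whose center v is adjacent to all other
vertices, together with one extra edge joining two leaves x and y. -/
def IsStarPlusEdge {V : Type*} (G : SimpleGraph V) : Prop :=
  ∃ v x y : V, v ≠ x ∧ v ≠ y ∧ x ≠ y ∧
    ∀ a b : V, G.Adj a b ↔ (((a = v ∨ b = v) ∧ a ≠ b) ∨ s(a, b) = s(x, y))

/-- G is (a copy of) U_n : obtained from the double star S_{3,n−3} — with adjacent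
centers u (degree 3, with leaf neighbors x, y) and w (adjacent to u and to all the
remaining vertices) — by adding the edge xy. -/
def IsUnGraph {V : Type*} (G : SimpleGraph V) : Prop :=
  ∃ u w x y : V, u ≠ w ∧ u ≠ x ∧ u ≠ y ∧ w ≠ x ∧ w ≠ y ∧ x ≠ y ∧
    ∀ a b : V, G.Adj a b ↔
      (s(a, b) = s(u, w) ∨ s(a, b) = s(u, x) ∨ s(a, b) = s(u, y) ∨ s(a, b) = s(x, y) ∨
        ∃ z : V, z ≠ u ∧ z ≠ w ∧ z ≠ x ∧ z ≠ y ∧ s(a, b) = s(w, z))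


/-- Two vertices are joined by a path on which some color appears on exactly one edge. -/
def ConflictFreeJoined {V : Type*} (G : SimpleGraph V) (c : Sym2 V → ℕ) (u v : V) : Prop :=
  ∃ p : G.Path u v, ∃ e ∈ (p.1).edges, ∀ e' ∈ (p.1).edges, c e' = c e → e' = e

namespace ConflictFreeJoined

variable {V : Type*} {G : SimpleGraph V} {c : Sym2 V → ℕ}

theorem symm {a b : V} (h : ConflictFreeJoined G c a b) : ConflictFreeJoined G c b a := by
  obtain ⟨p, e, he, hu⟩ := h
  refine ⟨p.reverse, e, ?_, ?_⟩ <;> simpa [Path.reverse] using by assumption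

theorem of_adj {a b : V} (h : G.Adj a b) : ConflictFreeJoined G c a b :=
  ⟨Path.singleton h, s(a, b), by simp [Path.singleton], by simp [Path.singleton]⟩

theorem of_adj_adj {a m b : V} (h₁ : G.Adj a m) (h₂ : G.Adj m b) (hab : a ≠ b)
    (hc : c s(a, m) ≠ c s(m, b)) : ConflictFreeJoined G c a b := by
  refine ⟨⟨.cons h₁ (.cons h₂ .nil), ?_⟩, s(a, m), by simp, ?_⟩
  · simp [Walk.cons_isPath_iff, h₁.ne, h₂.ne, hab]
  · simp [hc.symm]

theorem of_adj_adj_adj {a m l b : V} (h₁ : G.Adj a m) (h₂ : G.Adj m l) (h₃ : G.Adj l b)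
    (hal : a ≠ l) (hab : a ≠ b) (hmb : m ≠ b)
    (hc : (c s(m, l) ≠ c s(a, m) ∧ c s(l, b) ≠ c s(a, m)) ∨
      (c s(a, m) ≠ c s(m, l) ∧ c s(l, b) ≠ c s(m, l)) ∨
      (c s(a, m) ≠ c s(l, b) ∧ c s(m, l) ≠ c s(l, b))) : ConflictFreeJoined G c a b := by
  have hp : (Walk.cons h₁ (.cons h₂ (.cons h₃ .nil))).IsPath := by
    simp [Walk.cons_isPath_iff, h₁.ne, h₂.ne, h₃.ne, hal, hab, hmb]
  rcases hc with hc | hc | hc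
  · exact ⟨⟨_, hp⟩, s(a, m), by simp, by simp [hc.1, hc.2]⟩
  · exact ⟨⟨_, hp⟩, s(m, l), by simp, by simp [hc.1, hc.2]⟩
  · exact ⟨⟨_, hp⟩, s(l, b), by simp, by simp [hc.1, hc.2]⟩

end ConflictFreeJoined

/-- The edge-coloring in which every edge gets the sum of the labels of its ends. -/
def sumColoring {V : Type*} (g : V → ℕ) : Sym2 V → ℕ :=
  Sym2.lift ⟨fun a b => g a + g b, fun a b => Nat.add_comm (g a) (g b)⟩

@[simp] theorem sumColoring_mk {V : Type*} (g : V → ℕ) (a b : V) :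
    sumColoring g s(a, b) = g a + g b := rfl

section Lower

variable {V : Type*} {G : SimpleGraph V}

theorem edges_eq_cons_of_leaf {w z b : V} (hz : ∀ y, G.Adj z y → y = w) (hzb : z ≠ b)
    (p : G.Walk z b) (hp : p.IsPath) :
    ∃ q : G.Walk w b, q.IsPath ∧ p.edges = s(z, w) :: q.edges := by
  cases p with
  | nil => exact absurd rfl hzb
  | cons h q =>
    obtain rfl := hz _ h
    exact ⟨q, hp.of_cons, rfl⟩

theorem edges_eq_singleton_of_leaf {w z : V} (hz : ∀ y, G.Adj z y → y = w) (hzw : z ≠ w)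
    (p : G.Walk w z) (hp : p.IsPath) : p.edges = [s(w, z)] := by
  obtain ⟨q, hq, he⟩ := edges_eq_cons_of_leaf hz hzw p.reverse hp.reverse
  obtain rfl := (Walk.isPath_iff_nil.mp hq).eq_nil
  simpa [Sym2.eq_swap, List.reverse_eq_iff] using he

theorem edges_eq_singleton_of_forall_leaf {w t : V} (hwt : w ≠ t)
    (h : ∀ z, G.Adj w z → z ≠ t → ∀ y, G.Adj z y → y = w)
    (p : G.Walk w t) (hp : p.IsPath) : p.edges = [s(w, t)] := by
  cases p with
  | nil => exact absurd rfl hwt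
  | @cons _ z _ hz q =>
    obtain ⟨hq, hw⟩ := (Walk.cons_isPath_iff _ _).mp hp
    by_cases hzt : z = t
    · subst hzt
      obtain rfl := (Walk.isPath_iff_nil.mp hq).eq_nil
      rfl
    · cases q with
      | nil => exact absurd rfl hzt
      | cons h' r =>
        obtain rfl := h _ hz hzt _ h'
        simp at hw

/-- If all vertices of `S`, except possibly `t`, are leaves hanging at `w`, and `t` (if in `S`)
is a neighbor of `w` reached from `w` only through the edge `wt`, then the edges from `w` to `S`
have pairwise distinct colors in a conflict-free connected coloring. -/
theorem card_le_of_isCFCColoring {c : Sym2 V → ℕ} {k : ℕ} (hk : ∀ e ∈ G.edgeSet, c e < k)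
    (hc : IsCFCColoring G c) (S : Finset V) (w t : V) (hadj : ∀ a ∈ S, G.Adj w a)
    (hleaf : ∀ z ∈ S, z ≠ t → ∀ y, G.Adj z y → y = w)
    (ht : t ∈ S → ∀ p : G.Walk w t, p.IsPath → p.edges = [s(w, t)]) : S.card ≤ k := by
  have hend : ∀ b ∈ S, ∀ p : G.Walk w b, p.IsPath → p.edges = [s(w, b)] := by
    intro b hb p hp
    by_cases hbt : b = t
    · subst hbt
      exact ht hb p hp
    · exact edges_eq_singleton_of_leaf (hleaf b hb hbt) (hadj b hb).ne' p hp
  have hne : ∀ a ∈ S, ∀ b ∈ S, a ≠ b → a ≠ t → c s(w, a) ≠ c s(w, b) := by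
    intro a ha b hb hab hat heq
    obtain ⟨p, e, he, hu⟩ := hc a b hab
    obtain ⟨q, hq, hpe⟩ := edges_eq_cons_of_leaf (hleaf a ha hat) hab p.1 p.2
    rw [hend b hb q hq, Sym2.eq_swap] at hpe
    rw [hpe] at he hu
    have hdiff : s(w, a) ≠ s(w, b) := by
      rw [Ne, Sym2.congr_right]
      exact hab
    simp only [List.mem_cons, List.not_mem_nil, or_false] at he hu
    rcases he with rfl | rfl
    · exact hdiff (hu _ (.inr rfl) heq.symm).symm
    · exact hdiff (hu _ (.inl rfl) heq)
  have hinj : Set.InjOn (fun a => c s(w, a)) S := by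
    intro a ha b hb heq
    by_contra hab
    by_cases hat : a = t
    · exact hne b hb a ha (Ne.symm hab) (fun h => hab (hat.trans h.symm)) heq.symm
    · exact hne a ha b hb hab hat heq
  simpa using Finset.card_le_card_of_injOn (t := Finset.range k) _
    (fun a ha => by simpa using hk _ (hadj a ha)) hinj

end Lower

theorem Finset.exists_lt_card_injOn {V : Type*} (S : Finset V) :
    ∃ f : V → ℕ, (∀ a ∈ S, f a < S.card) ∧ ∀ a ∈ S, ∀ b ∈ S, f a = f b → a = b := by
  classical
  refine ⟨fun a => if h : a ∈ S then S.equivFin ⟨a, h⟩ else 0, fun a ha => by simp [ha], ?_⟩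
  intro a ha b hb h
  simpa [ha, hb, Fin.val_inj] using h

theorem cfcNum_eq {V : Type*} {G : SimpleGraph V} {k : ℕ}
    (hle : ∃ c : Sym2 V → ℕ, (∀ e ∈ G.edgeSet, c e < k) ∧ IsCFCColoring G c)
    (hge : ∀ (c : Sym2 V → ℕ) (m : ℕ), (∀ e ∈ G.edgeSet, c e < m) → IsCFCColoring G c → k ≤ m) :
    cfcNum G = k :=
  le_antisymm (Nat.sInf_le hle) (le_csInf ⟨k, hle⟩ fun m ⟨c, hm, hc⟩ => hge c m hm hc)

theorem cfcNum_of_isStarPlusEdge {V : Type*} [Fintype V] (G : SimpleGraph V)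
    (h5 : 5 ≤ Fintype.card V) (hG : IsStarPlusEdge G) : cfcNum G = Fintype.card V - 3 := by
  classical
  obtain ⟨v, x, y, hvx, hvy, hxy, hadj⟩ := hG
  set S : Finset V := Finset.univ \ {v, x, y} with hS
  have hcard : S.card = Fintype.card V - 3 := by
    rw [hS, ← Finset.compl_eq_univ_sdiff, Finset.card_compl, Finset.card_eq_three.mpr
      ⟨v, x, y, hvx, hvy, hxy, rfl⟩]
  have hmem : ∀ a, a ∈ S ↔ a ≠ v ∧ a ≠ x ∧ a ≠ y := by simp [hS]
  have hav : ∀ a, a ≠ v → G.Adj a v := fun a ha => (hadj a v).mpr (.inl ⟨.inr rfl, ha⟩)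
  have hva : ∀ a, a ≠ v → G.Adj v a := fun a ha => (hav a ha).symm
  have haxy : G.Adj x y := (hadj x y).mpr (.inr rfl)
  rw [← hcard]
  refine cfcNum_eq ?_ fun c m hm hc => card_le_of_isCFCColoring hm hc S v v
    (fun a ha => hva a ((hmem a).mp ha).1) ?_ fun hv => absurd rfl ((hmem v).mp hv).1
  · obtain ⟨f, hf, hinj⟩ := S.exists_lt_card_injOn
    let g : V → ℕ := fun a => if a ∈ S then f a else if a = y then 1 else 0
    have gv : g v = 0 := by simp [g, hmem, hvy]
    have gx : g x = 0 := by simp [g, hmem, hxy]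
    have gy : g y = 1 := by simp [g, hmem]
    have gS : ∀ a ∈ S, g a = f a := fun a ha => by simp [g, ha]
    have glt : ∀ a, g a < S.card := by
      intro a
      by_cases ha : a ∈ S
      · rw [gS a ha]
        exact hf a ha
      · simp only [g, ha, if_false]
        split_ifs <;> omega
    refine ⟨sumColoring g, ?_, ?_⟩
    · intro e
      induction e with | _ a b
      intro h
      rcases (hadj a b).mp h with ⟨rfl | rfl, -⟩ | h
      · simpa [gv] using glt b
      · simpa [gv] using glt a
      · rw [h, sumColoring_mk, gx]
        simpa using glt y
    · have hx : ∀ b ∈ S, ConflictFreeJoined G (sumColoring g) x b := by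
        intro b hb
        obtain ⟨hbv, hbx, hby⟩ := (hmem b).mp hb
        by_cases h0 : g b = 0
        · refine .of_adj_adj_adj haxy (hav y hvy.symm) (hva b hbv) hvx.symm hbx.symm hby.symm ?_
          simp [gx, gy, gv, h0]
        · refine .of_adj_adj (hav x hvx.symm) (hva b hbv) hbx.symm ?_
          simp only [sumColoring_mk]
          omega
      have hy : ∀ b ∈ S, ConflictFreeJoined G (sumColoring g) y b := by
        intro b hb
        obtain ⟨hbv, hbx, hby⟩ := (hmem b).mp hb
        by_cases h1 : g b = 1
        · refine .of_adj_adj_adj haxy.symm (hav x hvx.symm) (hva b hbv) hvy.symm hby.symm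
            hbx.symm ?_
          simp [gx, gy, gv, h1]
        · refine .of_adj_adj (hav y hvy.symm) (hva b hbv) hby.symm ?_
          simp only [sumColoring_mk]
          omega
      intro a b hab
      change ConflictFreeJoined G (sumColoring g) a b
      by_cases hav' : a = v
      · subst hav'
        exact .of_adj (hva b hab.symm)
      by_cases hbv : b = v
      · subst hbv
        exact .of_adj (hav a hab)
      by_cases ha : a ∈ S <;> by_cases hb : b ∈ S
      · refine .of_adj_adj (hav a hav') (hva b hbv) hab fun h => hab (hinj a ha b hb ?_)
        simpa [gv, gS a ha, gS b hb] using h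
      · rcases (show b = x ∨ b = y by grind) with rfl | rfl
        · exact (hx a ha).symm
        · exact (hy a ha).symm
      · rcases (show a = x ∨ a = y by grind) with rfl | rfl
        · exact hx b hb
        · exact hy b hb
      · rcases (show (a = x ∧ b = y) ∨ (a = y ∧ b = x) by grind) with ⟨rfl, rfl⟩ | ⟨rfl, rfl⟩
        · exact .of_adj haxy
        · exact .of_adj haxy.symm
  · intro z hz _ b hb
    have hz' := (hmem z).mp hz
    have hb' := (hadj z b).mp hb
    simp only [Sym2.eq_iff] at hb'
    clear_value S
    grind only

theorem cfcNum_of_isUnGraph {V : Type*} [Fintype V] (G : SimpleGraph V)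
    (h5 : 5 ≤ Fintype.card V) (hG : IsUnGraph G) : cfcNum G = Fintype.card V - 3 := by
  classical
  obtain ⟨u, w, x, y, huw, hux, huy, hwx, hwy, hxy, hadj⟩ := hG
  set S : Finset V := Finset.univ \ {u, w, x, y} with hS
  have hcard : S.card = Fintype.card V - 4 := by
    rw [hS, ← Finset.compl_eq_univ_sdiff, Finset.card_compl]
    congr 1
    simp [huw, hux, huy, hwx, hwy, hxy]
  have hmem : ∀ a, a ∈ S ↔ a ≠ u ∧ a ≠ w ∧ a ≠ x ∧ a ≠ y := by simp [hS]
  have auw : G.Adj u w := (hadj u w).mpr (.inl rfl)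
  have aux : G.Adj u x := (hadj u x).mpr (.inr (.inl rfl))
  have auy : G.Adj u y := (hadj u y).mpr (.inr (.inr (.inl rfl)))
  have axy : G.Adj x y := (hadj x y).mpr (.inr (.inr (.inr (.inl rfl))))
  have awS : ∀ z ∈ S, G.Adj w z := fun z hz => by
    obtain ⟨h1, h2, h3, h4⟩ := (hmem z).mp hz
    exact (hadj w z).mpr (.inr (.inr (.inr (.inr ⟨z, h1, h2, h3, h4, rfl⟩))))
  have hleaf : ∀ z ∈ S, ∀ b, G.Adj z b → b = w := by
    intro z hz b hb
    have hz' := (hmem z).mp hz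
    have hb' := (hadj z b).mp hb
    simp only [Sym2.eq_iff] at hb'
    clear_value S
    grind only
  have huS : u ∉ S := by simp [hmem]
  have hk : Fintype.card V - 3 = S.card + 1 := by omega
  rw [hk]
  refine cfcNum_eq ?_ fun c m hm hc => ?_
  · obtain ⟨f, hf, hinj⟩ := S.exists_lt_card_injOn
    let g : V → ℕ := fun a => if a ∈ S then f a + 1 else if a = y then 1 else 0
    have gu : g u = 0 := by simp [g, hmem, huy]
    have gw : g w = 0 := by simp [g, hmem, hwy]
    have gx : g x = 0 := by simp [g, hmem, hxy]
    have gy : g y = 1 := by simp [g, hmem]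
    have gS : ∀ a ∈ S, g a = f a + 1 := fun a ha => by simp [g, ha]
    refine ⟨sumColoring g, ?_, ?_⟩
    · intro e he
      have he' : e = s(u, w) ∨ e = s(u, x) ∨ e = s(u, y) ∨ e = s(x, y) ∨
          ∃ z ∈ S, e = s(w, z) := by
        induction e with | _ a b
        simpa only [hmem, and_assoc] using (hadj a b).mp he
      rcases he' with rfl | rfl | rfl | rfl | ⟨z, hz, rfl⟩
      · simp [gu, gw]
      · simp [gu, gx]
      · simp only [sumColoring_mk, gu, gy]
        omega
      · simp only [sumColoring_mk, gx, gy]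
        omega
      · simpa [gw, gS z hz] using hf z hz
    · have joinedS : ∀ a, a ∉ S → ∀ z ∈ S, ConflictFreeJoined G (sumColoring g) a z := by
        intro a ha z hz
        obtain ⟨hzu, hzw, hzx, hzy⟩ := (hmem z).mp hz
        have gz := gS z hz
        rcases (show a = u ∨ a = w ∨ a = x ∨ a = y by grind) with rfl | rfl | rfl | rfl
        · refine .of_adj_adj auw (awS z hz) hzu.symm ?_
          simp only [sumColoring_mk]
          omega
        · exact .of_adj (awS z hz)
        · refine .of_adj_adj_adj aux.symm auw (awS z hz) hwx.symm hzx.symm hzu.symm ?_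
          simp only [sumColoring_mk]
          omega
        · refine .of_adj_adj_adj auy.symm auw (awS z hz) hwy.symm hzy.symm hzu.symm ?_
          simp only [sumColoring_mk]
          omega
      have joined_xw : ConflictFreeJoined G (sumColoring g) x w := by
        refine .of_adj_adj_adj axy auy.symm auw hux.symm hwx.symm hwy.symm ?_
        simp [gx, gy, gu, gw]
      have joined_yw : ConflictFreeJoined G (sumColoring g) y w := by
        refine .of_adj_adj auy.symm auw hwy.symm ?_
        simp [gy, gu, gw]
      intro a b hab
      change ConflictFreeJoined G (sumColoring g) a b
      by_cases ha : a ∈ S <;> by_cases hb : b ∈ S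
      · refine .of_adj_adj (awS a ha).symm (awS b hb) hab fun h => hab (hinj a ha b hb ?_)
        simpa [gw, gS a ha, gS b hb] using h
      · exact (joinedS b hb a ha).symm
      · exact joinedS a ha b hb
      · have ha' : a = u ∨ a = w ∨ a = x ∨ a = y := by grind
        have hb' : b = u ∨ b = w ∨ b = x ∨ b = y := by grind
        clear_value g S
        rcases ha' with rfl | rfl | rfl | rfl <;> rcases hb' with rfl | rfl | rfl | rfl <;>
          first
          | exact absurd rfl hab
          | exact .of_adj (by assumption)
          | exact .of_adj (.symm (by assumption))
          | assumption
          | exact .symm (by assumption)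
  · rw [← Finset.card_insert_of_notMem huS]
    refine card_le_of_isCFCColoring hm hc _ w u ?_ ?_ fun _ =>
      edges_eq_singleton_of_forall_leaf huw.symm ?_
    · intro a ha
      rcases Finset.mem_insert.mp ha with rfl | ha
      · exact auw.symm
      · exact awS a ha
    · intro z hz hzu
      exact hleaf z (Finset.mem_of_mem_insert_of_ne hz hzu)
    · intro z hz hzu
      refine hleaf z ?_
      have hz' := (hadj w z).mp hz
      simp only [Sym2.eq_iff] at hz'
      rw [hmem]
      clear_value S
      grind only

/-- For n ≥ 5, if G is K_{1,n−1}+e or U_n, then cfc(G) = n − 3. -/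
theorem cfcNum_starPlusEdge_or_Un {V : Type*} [Fintype V] (G : SimpleGraph V)
    (n : ℕ) (hn : Fintype.card V = n) (h5 : 5 ≤ n)
    (hG : IsStarPlusEdge G ∨ IsUnGraph G) :
    cfcNum G = n - 3 := by
  subst hn
  rcases hG with hG | hG
  · exact cfcNum_of_isStarPlusEdge G h5 hG
  · exact cfcNum_of_isUnGraph G h5 hG
end
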